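/- arXiv:2411.12684 — 4 statements merged into one kernel-verified Lean document; each statement's English description precedes it below -/
import Mathlib

section
/- The set 𝒮₁(4) ∩ (1/4, 1/2] has finite symmetric difference with the set { 1/4 + 1/(8s + 12) : s ∈ ℤ, s ≥ 0 }. -/
noncomputable section

abbrev Torus (n : ℕ) : Type := Fin n → AddCircle (1 : ℝ)

def torusProj {n : ℕ} (x : Fin n → ℝ) : Torus n := fun i => (x i : AddCircle (1 : ℝ))

def spanTorus {n k : ℕ} (v : Fin k → Fin n → ℤ) : Set (Torus n) :=
  {p | ∃ t : Fin k → ℝ, p = torusProj fun i => ∑ j, t j * (v j i : ℝ)}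

def IsSubtorus {n : ℕ} (k : ℕ) (S : Set (Torus n)) : Prop :=
  ∃ v : Fin k → Fin n → ℤ,
    LinearIndependent ℝ (fun j : Fin k => fun i : Fin n => (v j i : ℝ)) ∧ S = spanTorus v

def IsProperSub {n : ℕ} (S : Set (Torus n)) : Prop :=
  ¬ S ⊆ ⋃ i : Fin n, {x : Torus n | x i = 0}

def DVal {n : ℕ} (S : Set (Torus n)) : ℝ :=
  sInf ((fun x : Torus n => ⨆ i, dist (x i) ((1 / 2 : ℝ) : AddCircle (1 : ℝ))) '' S)

def relSpec1 {n : ℕ} (U : Set (Torus n)) : Set ℝ :=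
  {d | ∃ T : Set (Torus n), IsSubtorus 1 T ∧ IsProperSub T ∧ T ⊆ U ∧ d = DVal T}

def Spec (k n : ℕ) : Set ℝ :=
  {d | ∃ T : Set (Torus n), IsSubtorus k T ∧ IsProperSub T ∧ d = DVal T}

def progSet (d : ℝ) (α β : ℚ) : Set ℝ :=
  {x | ∃ s : ℕ, x = d + 1 / ((α : ℝ) * s + (β : ℝ))}

/-!
The distance from the line with direction `v` to the centre of the torus is `1 / 2 - m`, where `m`
is the largest distance from a point of the line to the coordinate hyperplanes, so the question is
which values `m < 1 / 4` occur. By Dirichlet's theorem, a primitive `v` with an entry above `42 ^ 3`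
lies so close to a rational plane that the line passes within `1 / 84` of every point of the plane;
hence `m ≥ 1 / 4` as soon as the plane has a point at distance `11 / 42 = 1 / 4 + 1 / 84` from the
hyperplanes. The plane contains two lines with two speeds equal up to sign. On such a line only
three speeds matter, and the distance `11 / 42` is attained unless the speeds are proportional to
`1, 2, 3`: this is the same approximation argument, with `11 / 42 = 1 / 3 - 1 / 14`, plus a finite
check. If both lines are exceptional, the plane is one of finitely many up to scaling its two
exceptional directions, and a second finite check leaves, up to order and signs, the directions
`(q, 2q, 3q, m)` and `(a, b, a + b, a - b)`. For these, either `m ≥ 1 / 4` or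
`m = 1 / 4 - 1 / (4 * N)` with `N` odd, and all odd `N ≥ 15` occur.
-/

lemma norm_zsmul_of_abs_eq {G : Type*} [SeminormedAddCommGroup G] {a b : ℤ} (h : |a| = |b|)
    (τ : G) : ‖a • τ‖ = ‖b • τ‖ := by
  rcases abs_eq_abs.1 h with rfl | rfl
  · rfl
  · rw [neg_smul, norm_neg]

lemma exists_zsmul_eq_and_zsmul_eq {G : Type*} [AddCommGroup G] {a b : ℤ} (hab : IsCoprime a b)
    {σ ρ : G} (h : b • σ = a • ρ) : ∃ τ : G, a • τ = σ ∧ b • τ = ρ := by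
  obtain ⟨x, y, hxy⟩ := hab
  refine ⟨x • σ + y • ρ, ?_, ?_⟩
  · calc a • (x • σ + y • ρ) = (x * a) • σ + y • (a • ρ) := by module
      _ = (x * a + y * b) • σ := by rw [← h]; module
      _ = σ := by rw [hxy, one_smul]
  · calc b • (x • σ + y • ρ) = x • (b • σ) + (y * b) • ρ := by module
      _ = (x * a + y * b) • ρ := by rw [h]; module
      _ = ρ := by rw [hxy, one_smul]

namespace LonelyRunner

open Finset MeasureTheory

variable {ι κ : Type*}

/-! ### The circle group -/

lemma coe_intCast (n : ℤ) : ((n : ℝ) : UnitAddCircle) = 0 :=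
  (AddCircle.coe_eq_zero_iff 1).2 ⟨n, by simp⟩

lemma zsmul_coe (n : ℤ) (x : ℝ) : n • (x : UnitAddCircle) = ((n * x : ℝ) : UnitAddCircle) :=
  (QuotientAddGroup.mk_int_mul _ n x).symm

lemma exists_zsmul_eq {n : ℤ} (hn : n ≠ 0) (τ : UnitAddCircle) : ∃ σ, n • σ = τ :=
  ⟨DivisibleBy.div τ n, DivisibleBy.div_cancel τ hn⟩

lemma exists_coe_eq_abs_le_half (τ : UnitAddCircle) :
    ∃ y : ℝ, (y : UnitAddCircle) = τ ∧ |y| ≤ 1 / 2 := by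
  obtain ⟨x, rfl⟩ := QuotientAddGroup.mk_surjective τ
  refine ⟨x - round x, ?_, abs_sub_round x⟩
  rw [AddCircle.coe_sub, coe_intCast, sub_zero]

lemma norm_coe_of_abs_le_half {y : ℝ} (hy : |y| ≤ 1 / 2) : ‖(y : UnitAddCircle)‖ = |y| :=
  (AddCircle.norm_coe_eq_abs_iff 1 one_ne_zero).2 (by rwa [abs_one])

lemma norm_coe_le_abs (x : ℝ) : ‖(x : UnitAddCircle)‖ ≤ |x| := by
  rw [UnitAddCircle.norm_eq]
  simpa using round_le x 0

lemma dist_coe_half (τ : UnitAddCircle) :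
    dist τ ((1 / 2 : ℝ) : UnitAddCircle) = 1 / 2 - ‖τ‖ := by
  obtain ⟨y, rfl, hy⟩ := exists_coe_eq_abs_le_half τ
  obtain ⟨hy₀, hy₁⟩ := abs_le.1 hy
  rw [dist_eq_norm, ← AddCircle.coe_sub, norm_coe_of_abs_le_half hy]
  rcases le_total 0 y with h | h
  · rw [norm_coe_of_abs_le_half (abs_le.2 ⟨by linarith, by linarith⟩), abs_of_nonneg h,
      abs_of_nonpos (by linarith)]
    ring
  · have hshift : ((y - 1 / 2 : ℝ) : UnitAddCircle) = ((y + 1 / 2 : ℝ) : UnitAddCircle) := by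
      rw [← sub_eq_zero, ← AddCircle.coe_sub]
      convert coe_intCast (-1) using 2
      push_cast
      ring
    rw [hshift, norm_coe_of_abs_le_half (abs_le.2 ⟨by linarith, by linarith⟩), abs_of_nonpos h,
      abs_of_nonneg (by linarith)]
    ring

lemma le_norm_coe_iff {r x : ℝ} :
    r ≤ ‖(x : UnitAddCircle)‖ ↔ ∃ n : ℤ, n + r ≤ x ∧ x ≤ n + 1 - r := by
  rw [UnitAddCircle.norm_eq, abs_sub_round_eq_min, le_min_iff]
  constructor
  · rintro ⟨h₀, h₁⟩
    exact ⟨⌊x⌋, by linarith [Int.floor_add_fract x], by linarith [Int.floor_add_fract x]⟩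
  · rintro ⟨n, h₀, h₁⟩
    rcases le_or_gt r 0 with hr | hr
    · exact ⟨hr.trans (Int.fract_nonneg x), by linarith [Int.fract_lt_one x]⟩
    · have hn : ⌊x⌋ = n := Int.floor_eq_iff.2 ⟨by linarith, by linarith⟩
      rw [Int.fract, hn]
      exact ⟨by linarith, by linarith⟩

lemma le_norm_coe_div {r : ℝ} {q n : ℤ} (hq : 0 < q) (h₀ : r * q ≤ (n % q : ℤ))
    (h₁ : (n % q : ℤ) ≤ (1 - r) * q) : r ≤ ‖((n / q : ℝ) : UnitAddCircle)‖ := by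
  have hq' : (0 : ℝ) < q := mod_cast hq
  have hn : (q : ℝ) * (n / q : ℤ) + (n % q : ℤ) = n := mod_cast Int.mul_ediv_add_emod n q
  refine le_norm_coe_iff.2 ⟨n / q, ?_, ?_⟩
  · rw [le_div_iff₀ hq']; linarith
  · rw [div_le_iff₀ hq']; linarith

/-- The line in the torus `ι → ℝ/ℤ` with integer direction `v` contains a point all of whose
coordinates are at distance at least `r` from `0`. -/
def Lonely (r : ℝ) (v : ι → ℤ) : Prop :=
  ∃ τ : UnitAddCircle, ∀ i, r ≤ ‖v i • τ‖

/-- The two-parameter analogue of `Lonely`: the image in the torus `ι → ℝ/ℤ` of the integer span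
of `v` and `w` contains a point all of whose coordinates are at distance at least `r` from `0`. -/
def PlaneLonely (r : ℝ) (v w : ι → ℤ) : Prop :=
  ∃ σ τ : UnitAddCircle, ∀ i, r ≤ ‖v i • σ + w i • τ‖

lemma Lonely.mono {r r' : ℝ} {v : ι → ℤ} (h : Lonely r v) (hr : r' ≤ r) : Lonely r' v :=
  h.imp fun _ hτ i => hr.trans (hτ i)

lemma Lonely.of_abs_eq {r : ℝ} {v : ι → ℤ} {w : κ → ℤ} (h : Lonely r v)
    (hw : ∀ j, ∃ i, |w j| = |v i|) : Lonely r w := by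
  obtain ⟨τ, hτ⟩ := h
  refine ⟨τ, fun j => ?_⟩
  obtain ⟨i, hi⟩ := hw j
  exact (hτ i).trans_eq (norm_zsmul_of_abs_eq hi.symm τ)

lemma lonely_smul_iff {r : ℝ} {v : ι → ℤ} {g : ℤ} (hg : g ≠ 0) :
    Lonely r (g • v) ↔ Lonely r v := by
  constructor
  · rintro ⟨τ, hτ⟩
    refine ⟨g • τ, fun i => (hτ i).trans_eq ?_⟩
    rw [smul_smul, Pi.smul_apply, smul_eq_mul, mul_comm]
  · rintro ⟨τ, hτ⟩
    obtain ⟨σ, rfl⟩ := exists_zsmul_eq hg τ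
    refine ⟨σ, fun i => (hτ i).trans_eq ?_⟩
    rw [smul_smul, Pi.smul_apply, smul_eq_mul, mul_comm]

lemma PlaneLonely.of_comb {r : ℝ} {v w z z' : ι → ℤ} {p q p' q' : ℤ}
    (hz : ∀ i, z i = p * v i + q * w i) (hz' : ∀ i, z' i = p' * v i + q' * w i)
    (h : PlaneLonely r z z') : PlaneLonely r v w := by
  obtain ⟨σ, τ, h⟩ := h
  refine ⟨p • σ + p' • τ, q • σ + q' • τ, fun i => (h i).trans_eq ?_⟩
  rw [hz, hz']
  congr 1
  module

lemma Lonely.planeLonely {r : ℝ} {v w z : ι → ℤ} {p q : ℤ}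
    (hz : ∀ i, z i = p * v i + q * w i) (h : Lonely r z) : PlaneLonely r v w := by
  obtain ⟨τ, hτ⟩ := h
  refine ⟨p • τ, q • τ, fun i => (hτ i).trans_eq ?_⟩
  rw [hz]
  congr 1
  module

lemma PlaneLonely.scale {r : ℝ} {c d z z' ε : ι → ℤ} {g g' : ℤ} (hg : g ≠ 0) (hg' : g' ≠ 0)
    (hε : ∀ i, |ε i| = 1) (hz : ∀ i, z i = ε i * (g * c i)) (hz' : ∀ i, z' i = ε i * (g' * d i))
    (h : PlaneLonely r c d) : PlaneLonely r z z' := by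
  obtain ⟨σ, τ, h⟩ := h
  obtain ⟨σ, rfl⟩ := exists_zsmul_eq hg σ
  obtain ⟨τ, rfl⟩ := exists_zsmul_eq hg' τ
  refine ⟨σ, τ, fun i => (h i).trans_eq ?_⟩
  calc ‖c i • g • σ + d i • g' • τ‖
      = ‖ε i • (c i • g • σ + d i • g' • τ)‖ := by
        rw [norm_zsmul_of_abs_eq (b := 1) (by rw [hε, abs_one]), one_smul]
    _ = ‖z i • σ + z' i • τ‖ := by
        rw [hz, hz']
        congr 1
        module

/-! ### Simultaneous approximation -/

lemma exists_forall_norm_nsmul_le [Fintype ι] {K V : ℕ} (hK : 0 < K) (hV : K ^ Fintype.card ι < V)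
    (θ : ι → UnitAddCircle) : ∃ q : ℕ, 0 < q ∧ q < V ∧ ∀ i, ‖q • θ i‖ ≤ 1 / K := by
  have hK' : (1 : ℝ) ≤ K := mod_cast hK
  have hV' : (K : ℝ) ^ Fintype.card ι ≤ V := mod_cast hV.le
  have hball : volume (Metric.closedBall (0 : ι → UnitAddCircle) (1 / K / 2))
      = ENNReal.ofReal ((1 / K) ^ Fintype.card ι) := by
    have hmin : min 1 (2 * (1 / (K : ℝ) / 2)) = 1 / K := by
      rw [mul_div_cancel₀ _ two_ne_zero]
      exact min_eq_right ((div_le_one (by linarith)).2 hK')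
    simp only [volume_pi_closedBall _ (by positivity : (0 : ℝ) ≤ 1 / K / 2),
      AddCircle.volume_closedBall, hmin, prod_const, card_univ,
      ENNReal.ofReal_pow (by positivity : (0 : ℝ) ≤ 1 / K)]
  have huniv : volume (Set.univ : Set (ι → UnitAddCircle)) = ENNReal.ofReal 1 := by
    rw [volume_pi, Measure.pi_univ]
    simp
  obtain ⟨q, hq, hθ⟩ := NormedAddCommGroup.exists_norm_nsmul_le (μ := volume) θ
    (n := V - 1) (by have := Nat.one_le_pow (Fintype.card ι) K hK; omega) (1 / K) (by
      rw [hball, huniv, ← ENNReal.ofReal_nsmul]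
      refine ENNReal.ofReal_le_ofReal ?_
      rw [Nat.sub_add_cancel (by omega), nsmul_eq_mul, one_div, inv_pow, ← div_eq_mul_inv]
      rwa [le_div_iff₀ (by positivity), one_mul])
  refine ⟨q, hq.1, ?_, fun i => (norm_le_pi_norm (q • θ) i).trans hθ⟩
  have := hq.2
  omega

/-- The `2 × 2` minor of the matrix with rows `v`, `w` on the columns `i`, `j`; up to sign it is
the value at `j` of the combination of `v` and `w` that vanishes at `i`. -/
def minor (v w : ι → ℤ) (i j : ι) : ℤ := v i * w j - v j * w i

lemma lonely_of_planeLonely_of_abs_sub_le {v w : ι → ℤ} {x δ r : ℝ}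
    (hx : ∀ i, |v i * x - w i| ≤ 2 * δ) (h : PlaneLonely r v w) : Lonely (r - δ) v := by
  obtain ⟨σ, τ, h⟩ := h
  obtain ⟨y, rfl, hy⟩ := exists_coe_eq_abs_le_half τ
  refine ⟨σ + ((x * y : ℝ) : UnitAddCircle), fun i => ?_⟩
  have hdiff : v i • σ + w i • (y : UnitAddCircle) =
      v i • (σ + ((x * y : ℝ) : UnitAddCircle)) - ((y * (v i * x - w i) : ℝ) : UnitAddCircle) := by
    rw [smul_add, zsmul_coe, zsmul_coe, add_sub_assoc, ← AddCircle.coe_sub]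
    congr 3
    ring
  have herr : ‖((y * (v i * x - w i) : ℝ) : UnitAddCircle)‖ ≤ δ :=
    calc _ ≤ |y * (v i * x - w i)| := norm_coe_le_abs _
      _ = |y| * |v i * x - w i| := abs_mul _ _
      _ ≤ 1 / 2 * (2 * δ) := by gcongr; exact hx i
      _ = δ := by ring
  have := h i
  rw [hdiff] at this
  linarith [norm_sub_le (v i • (σ + ((x * y : ℝ) : UnitAddCircle)))
    ((y * (v i * x - w i) : ℝ) : UnitAddCircle)]

lemma exists_minor_ne_zero [Fintype ι] {v w : ι → ℤ} (hv : univ.gcd v = 1) {i₀ : ι}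
    (h₀ : w i₀ ≠ 0) (h : (w i₀).natAbs < (v i₀).natAbs) : ∃ i, minor v w i i₀ ≠ 0 := by
  by_contra! hcon
  have hdvd : v i₀ ∣ univ.gcd fun i => v i * w i₀ :=
    dvd_gcd fun i _ => ⟨w i, sub_eq_zero.1 (hcon i)⟩
  rw [Finset.gcd_mul_right, hv, one_mul, dvd_normalize_iff] at hdvd
  exact h.not_ge (Nat.le_of_dvd (Int.natAbs_pos.2 h₀) (Int.natAbs_dvd_natAbs.2 hdvd))

lemma exists_plane_near_line [Fintype ι] {K : ℕ} (hK : 0 < K) {v : ι → ℤ} {i₀ : ι}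
    (hlarge : K ^ (Fintype.card ι - 1) < (v i₀).natAbs) (hv : univ.gcd v = 1) :
    ∃ w : ι → ℤ, (∃ i j, minor v w i j ≠ 0) ∧
      ∀ r, PlaneLonely r v w → Lonely (r - 1 / (2 * K)) v := by
  classical
  have hV : (v i₀ : ℝ) ≠ 0 := by
    rw [Int.cast_ne_zero, ← Int.natAbs_pos]
    exact Nat.zero_lt_of_lt hlarge
  have hcard : Fintype.card {i : ι // i ≠ i₀} = Fintype.card ι - 1 := by
    simp only [Fintype.card_subtype_compl, Fintype.card_subtype_eq, ne_eq]
  obtain ⟨q, hq₀, hqV, hq⟩ := exists_forall_norm_nsmul_le hK (hcard ▸ hlarge)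
    fun i : {i : ι // i ≠ i₀} => ((v i / v i₀ : ℝ) : UnitAddCircle)
  let w : ι → ℤ := fun i => round (v i * (q / v i₀ : ℝ))
  have hw₀ : w i₀ = q := by
    simp only [w, mul_div_cancel₀ _ hV, round_natCast]
  have herr : ∀ i, |v i * (q / v i₀ : ℝ) - w i| ≤ 2 * (1 / (2 * K)) := by
    intro i
    by_cases hi : i = i₀
    · rw [hi, hw₀, mul_div_cancel₀ _ hV, Int.cast_natCast, sub_self, abs_zero]
      positivity
    · have := hq ⟨i, hi⟩
      rw [← natCast_zsmul, zsmul_coe, UnitAddCircle.norm_eq] at this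
      convert this using 2
      · simp only [w]
        push_cast
        ring_nf
      · field_simp
  obtain ⟨i, hi⟩ := exists_minor_ne_zero (i₀ := i₀) (w := w) hv (by omega) (by omega)
  exact ⟨w, ⟨i, i₀, hi⟩, fun r h => lonely_of_planeLonely_of_abs_sub_le herr h⟩

/-! ### Three speeds -/

lemma lonely_third_of_isCoprime {a b : ℤ} (ha : 0 < a) (hb : 0 < b) (hab : IsCoprime a b) :
    Lonely (1 / 3) ![a, b] := by
  set θ := ((((a + b) / 2 : ℤ) / (a + b : ℤ) : ℝ) : UnitAddCircle) with hθ_def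
  have hm : (0 : ℝ) < (a + b : ℤ) := by exact_mod_cast add_pos ha hb
  have hθ : 1 / 3 ≤ ‖θ‖ := by
    have hlo : ((a + b : ℤ) : ℝ) ≤ 3 * ((a + b) / 2 : ℤ) := by norm_cast; omega
    have hhi : 3 * (((a + b) / 2 : ℤ) : ℝ) ≤ 2 * (a + b : ℤ) := by norm_cast; omega
    refine le_norm_coe_iff.2 ⟨0, ?_, ?_⟩
    · rw [le_div_iff₀ hm]; push_cast at *; linarith
    · rw [div_le_iff₀ hm]; push_cast at *; linarith
  have hzero : (a + b) • θ = 0 := by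
    rw [hθ_def, zsmul_coe, mul_div_cancel₀ _ hm.ne', coe_intCast]
  obtain ⟨τ, hσ, hρ⟩ := exists_zsmul_eq_and_zsmul_eq hab (σ := θ) (ρ := -θ) (by
    rw [smul_neg, eq_neg_iff_add_eq_zero, ← add_smul, add_comm, hzero])
  refine ⟨τ, Fin.forall_fin_two.2 ⟨?_, ?_⟩⟩
  · simpa only [Matrix.cons_val_zero, hσ] using hθ
  · simpa only [Matrix.cons_val_one, Matrix.cons_val_zero, hρ, norm_neg] using hθ

lemma lonely_third_of_ne_zero {a b : ℤ} (ha : a ≠ 0) (hb : b ≠ 0) : Lonely (1 / 3) ![a, b] := by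
  have hg : 0 < Int.gcd |a| |b| := Int.gcd_pos_of_ne_zero_left _ (abs_ne_zero.2 ha)
  obtain ⟨a', b', hab, ha', hb'⟩ := Int.exists_gcd_one hg
  have hg' : (0 : ℤ) < Int.gcd |a| |b| := mod_cast hg
  have hprim := lonely_third_of_isCoprime (pos_of_mul_pos_left (ha' ▸ abs_pos.2 ha) hg'.le)
    (pos_of_mul_pos_left (hb' ▸ abs_pos.2 hb) hg'.le) (Int.isCoprime_iff_gcd_eq_one.2 hab)
  refine ((lonely_smul_iff hg'.ne').2 hprim).of_abs_eq fun j => ⟨j, ?_⟩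
  fin_cases j
  · simp only [Fin.zero_eta, Matrix.cons_val_zero, Pi.smul_apply, smul_eq_mul, mul_comm _ a',
      ← ha', abs_abs]
  · simp only [Fin.mk_one, Matrix.cons_val_one, Matrix.cons_val_zero, Pi.smul_apply, smul_eq_mul,
      mul_comm _ b', ← hb', abs_abs]

lemma minor_swap (v w : ι → ℤ) (i j : ι) : minor v w j i = -minor v w i j := by
  simp only [minor]
  ring

lemma minor_self (v w : ι → ℤ) (i : ι) : minor v w i i = 0 := sub_self _

lemma minor_eq_zero_trans {v w : ι → ℤ} {i j k : ι} (hj : v j ≠ 0) (hij : minor v w i j = 0)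
    (hjk : minor v w j k = 0) : minor v w i k = 0 := by
  refine (mul_eq_zero.1 ?_).resolve_left hj
  simp only [minor] at *
  linear_combination v i * hjk + v k * hij

/-- The direction `z = p • v + q • w` of the line in which the span of `v` and `w` meets the
hyperplane `x i = s * x j`. -/
def diag (v w : ι → ℤ) (i j : ι) (s : ℤ) : ι → ℤ := fun m => minor v w m i - s * minor v w m j

lemma diag_left (v w : ι → ℤ) (i j : ι) (s : ℤ) : diag v w i j s i = -(s * minor v w i j) := by
  rw [diag, minor_self, zero_sub]

lemma diag_right (v w : ι → ℤ) (i j : ι) (s : ℤ) : diag v w i j s j = -minor v w i j := by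
  rw [diag, minor_self, mul_zero, sub_zero, minor_swap]

lemma diag_eq_comb (v w : ι → ℤ) (i j : ι) (s : ℤ) (m : ι) :
    diag v w i j s m = (w i - s * w j) * v m + (s * v j - v i) * w m := by
  simp only [diag, minor]
  ring

lemma exists_sign_diag_ne_zero {v w : ι → ℤ} {i j k : ι} (hk : v k ≠ 0)
    (hij : minor v w i j ≠ 0) : ∃ s : ℤ, |s| = 1 ∧ diag v w i j s k ≠ 0 := by
  by_contra! h
  have hplus := h 1 abs_one
  have hminus := h (-1) (by rw [abs_neg, abs_one])
  simp only [diag] at hplus hminus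
  have hik : minor v w i k = 0 := by rw [minor_swap]; omega
  have hkj : minor v w k j = 0 := by omega
  exact hij (minor_eq_zero_trans hk hik hkj)

lemma planeLonely_third {v w : Fin 3 → ℤ} (hv : ∀ i, v i ≠ 0) (h : ∃ i j, minor v w i j ≠ 0) :
    PlaneLonely (1 / 3) v w := by
  obtain ⟨i, j, hij⟩ := h
  have hne : i ≠ j := fun h => hij (h ▸ minor_self v w i)
  obtain ⟨k, hk⟩ : ∃ k, ∀ m, m = i ∨ m = j ∨ m = k := by
    clear hij; revert i j; decide
  obtain ⟨s, hs, hdiag⟩ := exists_sign_diag_ne_zero (hv k) hij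
  refine Lonely.planeLonely (diag_eq_comb v w i j s) ?_
  refine (lonely_third_of_ne_zero hij hdiag).of_abs_eq fun m => ?_
  rcases hk m with rfl | rfl | rfl
  · exact ⟨0, by simp [diag_left, abs_mul, hs]⟩
  · exact ⟨0, by simp [diag_right]⟩
  · exact ⟨1, by simp⟩

lemma lonely_of_large_speed {v : Fin 3 → ℤ} (hv : ∀ i, v i ≠ 0) (hprim : univ.gcd v = 1)
    {i : Fin 3} (hi : 49 < (v i).natAbs) : Lonely (11 / 42) v := by
  obtain ⟨w, hminor, hw⟩ := exists_plane_near_line (K := 7) (i₀ := i) (by norm_num)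
    (by simpa using hi) hprim
  exact (hw _ (planeLonely_third hv hminor)).mono (by norm_num)

/-- `n / q` lies at distance at least `11 / 42` from the integers. -/
def Middle (q n : ℤ) : Prop := 11 * q ≤ 42 * (n % q) ∧ 42 * (n % q) ≤ 31 * q

instance (q n : ℤ) : Decidable (Middle q n) := inferInstanceAs (Decidable (_ ∧ _))

lemma Middle.le_norm {q n : ℤ} (hq : 0 < q) (h : Middle q n) :
    11 / 42 ≤ ‖((n / q : ℝ) : UnitAddCircle)‖ := by
  have h₀ : (11 : ℝ) * q ≤ 42 * (n % q : ℤ) := mod_cast h.1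
  have h₁ : (42 : ℝ) * (n % q : ℤ) ≤ 31 * q := mod_cast h.2
  exact le_norm_coe_div hq (by linarith) (by linarith)

/-- Rational times `p / q`, encoded as `(p, q)`, found by a computer search. -/
def times : List (ℕ × ℕ) :=
  [(1, 3), (3, 7), (1, 7), (2, 7), (3, 11), (3, 19), (9, 19), (1, 67), (1, 11), (1, 26), (1, 19),
   (22, 45), (6, 19), (4, 19), (16, 91), (4, 11), (7, 18), (4, 37), (23, 66), (15, 34), (11, 34),
   (9, 76), (17, 45), (11, 86), (5, 52), (3, 10), (6, 13), (6, 25), (1, 15), (9, 40)]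

set_option synthInstance.maxSize 10000 in
lemma exists_time_of_le : ∀ c < 50, ∀ b < c + 1, ∀ a < b + 1, 0 < a → Nat.gcd (Nat.gcd a b) c = 1 →
    (a = 1 ∧ b = 2 ∧ c = 3) ∨
      ∃ t ∈ times, Middle t.2 (t.1 * a) ∧ Middle t.2 (t.1 * b) ∧ Middle t.2 (t.1 * c) := by
  decide +kernel

/-- The absolute values of the entries of `v` are `g`, `2 * g` and `3 * g` for some `g`: the only
obstruction to `Lonely (11 / 42) v` for three nonzero entries. -/
def Tight (v : ι → ℤ) : Prop :=
  ∃ g : ℤ, 0 < g ∧ Set.range (fun i => |v i|) = {g, 2 * g, 3 * g}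

lemma Tight.smul {v : ι → ℤ} {g : ℤ} (hg : 0 < g) (h : Tight v) : Tight (g • v) := by
  obtain ⟨g', hg', hv⟩ := h
  refine ⟨g * g', mul_pos hg hg', ?_⟩
  have habs : (fun i => |(g • v) i|) = (g * ·) ∘ fun i => |v i| := funext fun i => by
    rw [Pi.smul_apply, smul_eq_mul, abs_mul, abs_of_pos hg, Function.comp_apply]
  rw [habs, Set.range_comp, hv]
  simp only [Set.image_insert_eq, Set.image_singleton, mul_left_comm]

lemma lonely_or_tight_of_small {v : Fin 3 → ℤ} (hv : ∀ i, v i ≠ 0) (hprim : univ.gcd v = 1)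
    (hsmall : ∀ i, (v i).natAbs ≤ 49) : Lonely (11 / 42) v ∨ Tight v := by
  set σ := Tuple.sort fun i => (v i).natAbs
  have hmono : Monotone fun i => (v (σ i)).natAbs := Tuple.monotone_sort fun i => (v i).natAbs
  have hgcd : Nat.gcd (Nat.gcd (v (σ 0)).natAbs (v (σ 1)).natAbs) (v (σ 2)).natAbs = 1 := by
    refine Nat.dvd_one.1 (Int.natCast_dvd_natCast.1 ?_)
    rw [Nat.cast_one, ← hprim]
    refine dvd_gcd fun i _ => ?_
    obtain ⟨i, rfl⟩ := σ.surjective i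
    rw [Int.natCast_dvd]
    fin_cases i
    · exact (Nat.gcd_dvd_left _ _).trans (Nat.gcd_dvd_left _ _)
    · exact (Nat.gcd_dvd_left _ _).trans (Nat.gcd_dvd_right _ _)
    · exact Nat.gcd_dvd_right _ _
  rcases exists_time_of_le (v (σ 2)).natAbs (Nat.lt_succ_of_le (hsmall _)) (v (σ 1)).natAbs
    (Nat.lt_succ_of_le (hmono (by decide))) (v (σ 0)).natAbs
    (Nat.lt_succ_of_le (hmono (by decide))) (Int.natAbs_pos.2 (hv _)) hgcd with
    ⟨h₀, h₁, h₂⟩ | ⟨⟨p, q⟩, ht, h₀, h₁, h₂⟩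
  · refine .inr ⟨1, one_pos, ?_⟩
    have habs : ∀ i, |v (σ i)| = (i : ℕ) + 1 := fun i => by
      rw [Int.abs_eq_natAbs]
      fin_cases i <;> simp only [Fin.zero_eta, Fin.mk_one, Fin.reduceFinMk, h₀, h₁, h₂] <;> rfl
    rw [← σ.surjective.range_comp]
    ext x
    simp only [Set.mem_range, Function.comp_apply, habs, Fin.exists_fin_succ]
    simp [eq_comm (b := x)]
  · have hq : 0 < (q : ℤ) := mod_cast (by decide : ∀ t ∈ times, 0 < t.2) _ ht
    refine .inl ⟨((p / q : ℝ) : UnitAddCircle), σ.surjective.forall.2 fun i => ?_⟩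
    have hmiddle : Middle q (p * (v (σ i)).natAbs) := by fin_cases i <;> assumption
    convert hmiddle.le_norm hq using 1
    rw [norm_zsmul_of_abs_eq (b := (v (σ i)).natAbs) (by simp), zsmul_coe]
    congr 2
    push_cast
    ring

theorem lonely_or_tight {v : Fin 3 → ℤ} (hv : ∀ i, v i ≠ 0) : Lonely (11 / 42) v ∨ Tight v := by
  obtain ⟨u, hu, hprim⟩ := extract_gcd v univ_nonempty
  have hvu : v = univ.gcd v • u := funext fun i => hu i (mem_univ i)
  have hg : univ.gcd v ≠ 0 := fun h => hv 0 (gcd_eq_zero_iff.1 h 0 (mem_univ 0))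
  have hg' : 0 < univ.gcd v := (Int.nonneg_of_normalize_eq_self normalize_gcd).lt_of_ne' hg
  have hu₀ : ∀ i, u i ≠ 0 := fun i h => hv i (by rw [hu i (mem_univ i), h, mul_zero])
  rw [hvu]
  refine Or.imp (lonely_smul_iff hg).2 (Tight.smul hg') ?_
  by_cases hsmall : ∀ i, (u i).natAbs ≤ 49
  · exact lonely_or_tight_of_small hu₀ hprim hsmall
  · push Not at hsmall
    obtain ⟨i, hi⟩ := hsmall
    exact .inl (lonely_of_large_speed hu₀ hprim hi)

/-! ### Planes of four speeds -/

lemma Tight.exists_surjective {v : ι → ℤ} (h : Tight v) : ∃ g : ℤ, 0 < g ∧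
    ∃ c : ι → Fin 3, c.Surjective ∧ ∀ i, |v i| = g * ((c i : ℕ) + 1) := by
  obtain ⟨g, hg, hv⟩ := h
  have hc : ∀ i, ∃ k : Fin 3, |v i| = g * ((k : ℕ) + 1) := by
    intro i
    rcases hv.subset ⟨i, rfl⟩ with hi | hi | hi
    · exact ⟨0, by simpa using hi⟩
    · exact ⟨1, hi.trans (by norm_num [mul_comm])⟩
    · exact ⟨2, hi.trans (by norm_num [mul_comm])⟩
  choose c hc using hc
  refine ⟨g, hg, c, fun k => ?_, hc⟩
  obtain ⟨i, hi⟩ := hv.superset (show g * ((k : ℕ) + 1) ∈ _ by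
    fin_cases k
    · simp
    · exact .inr (.inl (by norm_num [mul_comm]))
    · exact .inr (.inr (by norm_num [mul_comm])))
  have hk : g * ((c i : ℕ) + 1) = g * ((k : ℕ) + 1) := (hc i).symm.trans hi
  exact ⟨i, Fin.ext (by have := mul_left_cancel₀ hg.ne' hk; omega)⟩

lemma sym2_eq_of_surjective : ∀ c : Fin 4 → Fin 3, c.Surjective → ∀ i j k l, i ≠ j → k ≠ l →
    c i = c j → c k = c l → s(i, j) = s(k, l) := by
  decide +kernel

lemma Tight.sym2_eq {v : Fin 4 → ℤ} (h : Tight v) {i j k l : Fin 4} (hij : i ≠ j) (hkl : k ≠ l)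
    (hvij : |v i| = |v j|) (hvkl : |v k| = |v l|) : s(i, j) = s(k, l) := by
  obtain ⟨g, hg, c, hc, hv⟩ := h.exists_surjective
  have hcv : ∀ {m n}, |v m| = |v n| → c m = c n := fun {m n} h => by
    rw [hv, hv] at h
    have := mul_left_cancel₀ hg.ne' h
    omega
  exact sym2_eq_of_surjective c hc i j k l hij hkl (hcv hvij) (hcv hvkl)

lemma lonely_or_tight_of_abs_eq {v : Fin 4 → ℤ} (hv : ∀ m, v m ≠ 0) {i j : Fin 4} (hij : i ≠ j)
    (habs : |v i| = |v j|) : Lonely (11 / 42) v ∨ Tight v := by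
  obtain ⟨i', rfl⟩ := Fin.exists_succAbove_eq hij
  have hcover : ∀ m, ∃ n, |v m| = |v (j.succAbove n)| := fun m => by
    rcases eq_or_ne m j with rfl | hm
    · exact ⟨i', habs.symm⟩
    · obtain ⟨n, rfl⟩ := Fin.exists_succAbove_eq hm
      exact ⟨n, rfl⟩
  refine (lonely_or_tight (v := fun n => v (j.succAbove n)) fun n => hv _).imp
    (fun h => h.of_abs_eq hcover) ?_
  rintro ⟨g, hg, hrange⟩
  refine ⟨g, hg, hrange ▸ Set.Subset.antisymm ?_ ?_⟩
  · rintro _ ⟨m, rfl⟩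
    exact (hcover m).imp fun n => Eq.symm
  · rintro _ ⟨n, rfl⟩
    exact ⟨_, rfl⟩

/-- The pair `{i, j}` collides: some line of the plane spanned by `v` and `w` has equal speeds `i`
and `j` up to sign, and no zero speed. -/
def Collides (v w : ι → ℤ) (i j : ι) : Prop := ∃ s : ℤ, |s| = 1 ∧ ∀ m, diag v w i j s m ≠ 0

lemma Collides.ne {v w : ι → ℤ} {i j : ι} (h : Collides v w i j) : i ≠ j := by
  rintro rfl
  obtain ⟨s, -, hdiag⟩ := h
  exact hdiag i (by rw [diag_right, minor_self, neg_zero])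

lemma abs_minor_eq_of_not_collides {v w : Fin 4 → ℤ} (hv : ∀ i, v i ≠ 0) {i j m : Fin 4}
    (hij : minor v w i j ≠ 0) (h : ¬Collides v w i j) (hmi : m ≠ i) (hmj : m ≠ j) :
    |minor v w m i| = |minor v w m j| := by
  have hzero : ∀ s : ℤ, |s| = 1 → ∃ n, n ≠ i ∧ n ≠ j ∧ diag v w i j s n = 0 := by
    intro s hs
    simp only [Collides, not_exists, not_and, not_forall, not_not] at h
    obtain ⟨n, hn⟩ := h s hs
    have hs₀ : s ≠ 0 := by rintro rfl; simp at hs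
    refine ⟨n, ?_, ?_, hn⟩ <;> rintro rfl
    · rw [diag_left, neg_eq_zero] at hn
      exact mul_ne_zero hs₀ hij hn
    · rw [diag_right, neg_eq_zero] at hn
      exact hij hn
  obtain ⟨m₁, h₁i, h₁j, h₁⟩ := hzero 1 abs_one
  obtain ⟨m₂, h₂i, h₂j, h₂⟩ := hzero (-1) (by rw [abs_neg, abs_one])
  have hne : m₁ ≠ m₂ := by
    rintro rfl
    obtain ⟨s, hs, hdiag⟩ := exists_sign_diag_ne_zero (hv m₁) hij
    rcases (abs_eq zero_le_one).1 hs with rfl | rfl <;> contradiction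
  have hijne : i ≠ j := fun h => hij (h ▸ minor_self v w i)
  simp only [diag] at h₁ h₂
  obtain rfl | rfl : m = m₁ ∨ m = m₂ := by omega
  · rw [show minor v w m i = minor v w m j by linarith]
  · rw [show minor v w m i = -minor v w m j by linarith, abs_neg]

lemma plucker (v w : Fin 4 → ℤ) : minor v w 0 1 * minor v w 2 3 - minor v w 0 2 * minor v w 1 3 +
    minor v w 0 3 * minor v w 1 2 = 0 := by
  simp only [minor]
  ring

lemma exists_collides_of_minor_eq_zero {v w : Fin 4 → ℤ} (hv : ∀ i, v i ≠ 0)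
    (h : ∃ i j, minor v w i j ≠ 0) {i j : Fin 4} (hne : i ≠ j) (hij : minor v w i j = 0) :
    ∃ k, Collides v w i k ∧ Collides v w j k := by
  obtain ⟨a, b, hab⟩ := h
  have hji : minor v w j i = 0 := by rw [minor_swap, hij, neg_zero]
  obtain ⟨k, hik⟩ : ∃ k, minor v w i k ≠ 0 := by
    by_contra! hi
    exact hab (minor_eq_zero_trans (hv i) (by rw [minor_swap, hi, neg_zero]) (hi b))
  have hjk : minor v w j k ≠ 0 := fun h => hik (minor_eq_zero_trans (hv j) hij h)
  have hkj : k ≠ j := fun h => hik (h ▸ hij)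
  have hki : k ≠ i := fun h => hjk (h ▸ hji)
  refine ⟨k, ?_, ?_⟩ <;> by_contra hcon
  · have := abs_minor_eq_of_not_collides hv hik hcon hne.symm hkj.symm
    rw [hji, abs_zero, eq_comm, abs_eq_zero] at this
    exact hjk this
  · have := abs_minor_eq_of_not_collides hv hjk hcon hne hki.symm
    rw [hij, abs_zero, eq_comm, abs_eq_zero] at this
    exact hik this

lemma exists_two_collides_of_minor_ne_zero {v w : Fin 4 → ℤ} (hv : ∀ i, v i ≠ 0)
    (h : ∀ i j, i ≠ j → minor v w i j ≠ 0) :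
    ∃ i j k l, s(i, j) ≠ s(k, l) ∧ Collides v w i j ∧ Collides v w k l := by
  by_contra! hcon
  have habs : ∀ a b c, a ≠ b → a ≠ c → b ≠ c → |minor v w a b| = |minor v w a c| := by
    intro a b c hab hac hbc
    by_cases hcol : Collides v w b c
    · have hnab := abs_minor_eq_of_not_collides hv (h _ _ hab)
        (hcon _ _ _ _ (by simp; tauto) hcol) hac.symm hbc.symm
      have hnac := abs_minor_eq_of_not_collides hv (h _ _ hac)
        (hcon _ _ _ _ (by simp; tauto) hcol) hab.symm hbc
      rw [minor_swap, abs_neg] at hnab hnac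
      rw [hnac, hnab, minor_swap v w b c, abs_neg]
    · exact abs_minor_eq_of_not_collides hv (h _ _ hbc) hcol hab hac
  have h₀₁ := h 0 1 (by decide)
  have h₀₂ := habs 0 1 2 (by decide) (by decide) (by decide)
  have h₀₃ := habs 0 1 3 (by decide) (by decide) (by decide)
  have h₁₂ := habs 1 0 2 (by decide) (by decide) (by decide)
  have h₁₃ := habs 1 0 3 (by decide) (by decide) (by decide)
  have h₂₃ := habs 2 0 3 (by decide) (by decide) (by decide)
  rw [minor_swap, abs_neg] at h₁₂ h₁₃ h₂₃
  have hx : |minor v w 0 1 * minor v w 2 3| = minor v w 0 1 ^ 2 := by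
    rw [abs_mul, ← h₂₃, ← h₀₂, ← sq, sq_abs]
  have hy : |minor v w 0 2 * minor v w 1 3| = minor v w 0 1 ^ 2 := by
    rw [abs_mul, ← h₁₃, ← h₀₂, ← sq, sq_abs]
  have hz : |minor v w 0 3 * minor v w 1 2| = minor v w 0 1 ^ 2 := by
    rw [abs_mul, ← h₁₂, ← h₀₃, ← sq, sq_abs]
  -- The three terms of the Plücker relation are plus or minus the same square, so an odd multiple
  -- of that square would vanish.
  have hpos : 0 < minor v w 0 1 ^ 2 := by positivity
  have hplucker := plucker v w
  grind

lemma exists_two_collides {v w : Fin 4 → ℤ} (hv : ∀ i, v i ≠ 0) (h : ∃ i j, minor v w i j ≠ 0) :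
    ∃ i j k l, s(i, j) ≠ s(k, l) ∧ Collides v w i j ∧ Collides v w k l := by
  by_cases hne : ∀ i j, i ≠ j → minor v w i j ≠ 0
  · exact exists_two_collides_of_minor_ne_zero hv hne
  · push Not at hne
    obtain ⟨i, j, hne, hij⟩ := hne
    obtain ⟨k, hik, hjk⟩ := exists_collides_of_minor_eq_zero hv h hne hij
    exact ⟨i, k, j, k, by simp [hne, hik.ne], hik, hjk⟩

/-- Two of the entries of `v` are, up to sign, twice and three times a third one. -/
def TypeOne (v : Fin 4 → ℤ) : Prop := ∃ i j k, |v j| = 2 * |v i| ∧ |v k| = 3 * |v i|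

/-- Up to sign and order, the entries of `v` are `a`, `b`, `a + b` and `a - b`. -/
def TypeTwo (v : Fin 4 → ℤ) : Prop :=
  ∃ σ : Equiv.Perm (Fin 4), |v (σ 2)| = |v (σ 0)| + |v (σ 1)| ∧
    |v (σ 3)| = |(|v (σ 0)| - |v (σ 1)|)|

lemma abs_add_abs_sub_cases (a b : ℤ) :
    |a + b| = |a| + |b| ∧ |a - b| = |(|a| - |b|)| ∨
      |a - b| = |a| + |b| ∧ |a + b| = |(|a| - |b|)| := by
  rcases abs_cases a with ⟨ha, _⟩ | ⟨ha, _⟩ <;> rcases abs_cases b with ⟨hb, _⟩ | ⟨hb, _⟩ <;>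
    rw [ha, hb] <;> grind

lemma typeOne_of_abs_mul_eq {v u : Fin 4 → ℤ} {D : ℤ} (hD : D ≠ 0) (hu : ∀ m, |D * v m| = |u m|)
    {i j k : Fin 4} (hj : u j = 2 * u i) (hk : u k = 3 * u i) : TypeOne v := by
  have hD' : |D| ≠ 0 := abs_ne_zero.2 hD
  refine ⟨i, j, k, mul_left_cancel₀ hD' ?_, mul_left_cancel₀ hD' ?_⟩
  · rw [mul_left_comm, ← abs_mul, ← abs_mul, hu, hu, hj, abs_mul, abs_two]
  · rw [mul_left_comm, ← abs_mul, ← abs_mul, hu, hu, hk, abs_mul, abs_of_pos (by norm_num)]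

lemma typeTwo_of_abs_mul_eq {v u : Fin 4 → ℤ} {D : ℤ} (hD : D ≠ 0) (hu : ∀ m, |D * v m| = |u m|)
    {σ : Equiv.Perm (Fin 4)} (h₂ : u (σ 2) = u (σ 0) + u (σ 1))
    (h₃ : u (σ 3) = u (σ 0) - u (σ 1)) : TypeTwo v := by
  have hD' : |D| ≠ 0 := abs_ne_zero.2 hD
  have key : ∀ m n, |u m| = |u (σ 0)| + |u (σ 1)| → |u n| = |(|u (σ 0)| - |u (σ 1)|)| →
      |v m| = |v (σ 0)| + |v (σ 1)| ∧ |v n| = |(|v (σ 0)| - |v (σ 1)|)| := by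
    intro m n hm hn
    refine ⟨mul_left_cancel₀ hD' ?_, mul_left_cancel₀ hD' ?_⟩
    · rw [mul_add, ← abs_mul, ← abs_mul, ← abs_mul, hu, hu, hu, hm]
    · rw [← abs_mul, hu, hn, ← hu, ← hu, abs_mul, abs_mul, ← mul_sub, abs_mul, abs_abs]
  rcases abs_add_abs_sub_cases (u (σ 0)) (u (σ 1)) with ⟨hadd, hsub⟩ | ⟨hsub, hadd⟩
  · exact ⟨σ, key _ _ (h₂ ▸ hadd) (h₃ ▸ hsub)⟩
  · exact ⟨Equiv.swap 2 3 |>.trans σ, key _ _ (h₃ ▸ hsub) (h₂ ▸ hadd)⟩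

/-- Rational points `(x / q, y / q)` of the two-dimensional torus, encoded as `(q, x, y)`, found by
a computer search. -/
def points : List (ℕ × ℕ × ℕ) :=
  [(15, 1, 3), (15, 1, 12), (15, 3, 1), (15, 3, 14), (15, 1, 6), (15, 1, 9), (7, 3, 1), (7, 3, 6),
   (3, 1, 1), (10, 5, 4), (3, 1, 2), (10, 4, 5), (15, 3, 5), (15, 3, 10), (11, 1, 3), (11, 1, 8),
   (7, 1, 2), (7, 1, 5), (7, 3, 3), (7, 3, 4), (7, 2, 2), (7, 2, 5)]

/-- Coordinate `m` of two tight directions of a plane, up to a positive factor for each direction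
and a common sign: `c` and `d` encode the absolute values `1`, `2`, `3` and `ε` is the relative
sign. -/
def tightPair (c d : Fin 4 → Fin 3) (ε : Fin 4 → ℤˣ) (m : Fin 4) : ℤ × ℤ :=
  ((c m : ℕ) + 1, ε m * ((d m : ℕ) + 1))

set_option synthInstance.maxSize 10000 in
lemma tightPair_cases_of_le : ∀ c d : Fin 4 → Fin 3, (∀ i j, i ≤ j → c i ≤ c j) →
    c.Surjective → d.Surjective → (∃ i j, c i = c j ∧ d i ≠ d j) → ∀ ε : Fin 4 → ℤˣ,
      (∃ p ∈ points, ∀ m, Middle p.1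
        (p.2.1 * (tightPair c d ε m).1 + p.2.2 * (tightPair c d ε m).2)) ∨
      (∃ i j k, tightPair c d ε j = 2 • tightPair c d ε i ∧
        tightPair c d ε k = 3 • tightPair c d ε i) ∨
      ∃ σ : Equiv.Perm (Fin 4),
        tightPair c d ε (σ 2) = tightPair c d ε (σ 0) + tightPair c d ε (σ 1) ∧
        tightPair c d ε (σ 3) = tightPair c d ε (σ 0) - tightPair c d ε (σ 1) := by
  decide +kernel

lemma tightPair_cases {c d : Fin 4 → Fin 3} (hc : c.Surjective) (hd : d.Surjective)
    {i j : Fin 4} (hij : c i = c j) (hij' : d i ≠ d j) (ε : Fin 4 → ℤˣ) :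
    (∃ p ∈ points, ∀ m, Middle p.1
      (p.2.1 * (tightPair c d ε m).1 + p.2.2 * (tightPair c d ε m).2)) ∨
    (∃ i j k, tightPair c d ε j = 2 • tightPair c d ε i ∧
      tightPair c d ε k = 3 • tightPair c d ε i) ∨
    ∃ σ : Equiv.Perm (Fin 4),
      tightPair c d ε (σ 2) = tightPair c d ε (σ 0) + tightPair c d ε (σ 1) ∧
      tightPair c d ε (σ 3) = tightPair c d ε (σ 0) - tightPair c d ε (σ 1) := by
  let π := Tuple.sort c
  rcases tightPair_cases_of_le (c ∘ π) (d ∘ π) (fun _ _ h => Tuple.monotone_sort c h)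
    (hc.comp π.surjective) (hd.comp π.surjective)
    ⟨π.symm i, π.symm j, by simpa using hij, by simpa using hij'⟩ (ε ∘ π) with
    ⟨p, hp, hmiddle⟩ | ⟨i, j, k, h⟩ | ⟨σ, h⟩
  · exact .inl ⟨p, hp, π.surjective.forall.2 hmiddle⟩
  · exact .inr (.inl ⟨π i, π j, π k, h⟩)
  · exact .inr (.inr ⟨σ.trans π, h⟩)

lemma planeLonely_of_middle {c d : ι → ℤ} {q x y : ℤ} (hq : 0 < q)
    (h : ∀ i, Middle q (x * c i + y * d i)) : PlaneLonely (11 / 42) c d := by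
  refine ⟨((x / q : ℝ) : UnitAddCircle), ((y / q : ℝ) : UnitAddCircle), fun i => ?_⟩
  convert (h i).le_norm hq using 2
  rw [zsmul_coe, zsmul_coe, ← AddCircle.coe_add]
  congr 1
  push_cast
  ring

lemma exists_tightPair {z z' : Fin 4 → ℤ} (h : Tight z) (h' : Tight z') {i j : Fin 4}
    (hij : |z i| = |z j|) (hij' : |z' i| ≠ |z' j|) :
    ∃ (c d : Fin 4 → Fin 3) (ε δ : Fin 4 → ℤˣ) (g g' : ℤ), 0 < g ∧ 0 < g' ∧
      c.Surjective ∧ d.Surjective ∧ c i = c j ∧ d i ≠ d j ∧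
      (∀ m, z m = δ m * (g * (tightPair c d ε m).1)) ∧
      ∀ m, z' m = δ m * (g' * (tightPair c d ε m).2) := by
  have hsign : ∀ {x y : ℤ}, |x| = y → ∃ u : ℤˣ, x = u * y := by
    rintro x y rfl
    rcases abs_choice x with hx | hx
    · exact ⟨1, by simp [hx]⟩
    · exact ⟨-1, by simp [hx]⟩
  obtain ⟨g, hg, c, hc, hz⟩ := h.exists_surjective
  obtain ⟨g', hg', d, hd, hz'⟩ := h'.exists_surjective
  choose δ hδ using fun m => hsign (hz m)
  choose δ' hδ' using fun m => hsign (hz' m)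
  refine ⟨c, d, fun m => δ m * δ' m, δ, g, g', hg, hg', hc, hd, ?_, ?_, hδ, fun m => ?_⟩
  · rw [hz, hz] at hij
    have := mul_left_cancel₀ hg.ne' hij
    omega
  · exact fun h => hij' (by rw [hz', hz', h])
  · have hsq : (δ m : ℤ) * δ m = 1 := by rw [← Units.val_mul, Int.units_mul_self, Units.val_one]
    rw [hδ' m]
    simp only [tightPair, Units.val_mul]
    linear_combination (-(δ' m : ℤ) * (g' * ((d m : ℕ) + 1))) * hsq

lemma planeLonely_or_type_of_tight {v w z z' : Fin 4 → ℤ} {p q p' q' : ℤ}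
    (hz : ∀ m, z m = p * v m + q * w m) (hz' : ∀ m, z' m = p' * v m + q' * w m)
    (h : Tight z) (h' : Tight z') (hdet : p * q' - q * p' ≠ 0) {i j : Fin 4}
    (hij : |z i| = |z j|) (hij' : |z' i| ≠ |z' j|) :
    PlaneLonely (11 / 42) v w ∨ TypeOne v ∨ TypeTwo v := by
  obtain ⟨c, d, ε, δ, g, g', hg, hg', hc, hd, hcij, hdij, hcz, hdz⟩ :=
    exists_tightPair h h' hij hij'
  set f := tightPair c d ε
  let φ : ℤ × ℤ →+ ℤ := (AddMonoidHom.mulLeft (q' * g)).coprod (-AddMonoidHom.mulLeft (q * g'))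
  have hφ : ∀ m, |(p * q' - q * p') * v m| = |φ (f m)| := fun m => by
    have hcramer : (p * q' - q * p') * v m = δ m * φ (f m) := by
      simp only [φ, AddMonoidHom.coprod_apply, AddMonoidHom.neg_apply, AddMonoidHom.coe_mulLeft]
      linear_combination q' * (hcz m - hz m) - q * (hdz m - hz' m)
    rw [hcramer, abs_mul, Int.abs_eq_natAbs (δ m), Int.units_natAbs, Nat.cast_one, one_mul]
  rcases tightPair_cases hc hd hcij hdij ε with ⟨⟨Q, x, y⟩, hp, hmiddle⟩ | ⟨i, j, k, hj, hk⟩ |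
    ⟨σ, h₂, h₃⟩
  · have hQ : 0 < (Q : ℤ) := mod_cast (by decide : ∀ p ∈ points, 0 < p.1) _ hp
    exact .inl (.of_comb hz hz' (.scale hg.ne' hg'.ne'
      (fun m => by rw [Int.abs_eq_natAbs, Int.units_natAbs, Nat.cast_one]) hcz hdz
      (planeLonely_of_middle hQ hmiddle)))
  · have hmul : ∀ (n : ℕ) x, φ (n • x) = n * φ x := fun n x => by rw [map_nsmul, nsmul_eq_mul]
    exact .inr (.inl (typeOne_of_abs_mul_eq hdet hφ ((congrArg φ hj).trans (hmul 2 _))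
      ((congrArg φ hk).trans (hmul 3 _))))
  · exact .inr (.inr (typeTwo_of_abs_mul_eq hdet hφ ((congrArg φ h₂).trans (map_add φ _ _))
      ((congrArg φ h₃).trans (map_sub φ _ _))))

lemma det_ne_zero_of_abs_eq_of_abs_ne {v w z z' : ι → ℤ} {p q p' q' : ℤ}
    (hz : ∀ m, z m = p * v m + q * w m) (hz' : ∀ m, z' m = p' * v m + q' * w m) {i j : ι}
    (hi : z i ≠ 0) (hij : |z i| = |z j|) (hij' : |z' i| ≠ |z' j|) : p * q' - q * p' ≠ 0 := by
  intro hdet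
  have hcancel : ∀ x y : ℤ, (∀ m, x * z m = y * z' m) → y = 0 := fun x y h => by
    have habs : |y| * |z' i| = |y| * |z' j| := by
      rw [← abs_mul, ← abs_mul, ← h, ← h, abs_mul, abs_mul, hij]
    by_contra hy
    exact hij' (mul_left_cancel₀ (abs_ne_zero.2 hy) habs)
  have hq := hcancel q' q fun m => by rw [hz, hz']; linear_combination v m * hdet
  have hp := hcancel p' p fun m => by rw [hz, hz']; linear_combination -w m * hdet
  exact hi (by rw [hz, hp, hq]; ring)

lemma planeLonely_or_type {v w : Fin 4 → ℤ} (hv : ∀ i, v i ≠ 0) (h : ∃ i j, minor v w i j ≠ 0) :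
    PlaneLonely (11 / 42) v w ∨ TypeOne v ∨ TypeTwo v := by
  obtain ⟨i, j, k, l, hpair, hij, hkl⟩ := exists_two_collides hv h
  have habs : ∀ {i j : Fin 4} {s : ℤ}, |s| = 1 → |diag v w i j s i| = |diag v w i j s j| :=
    fun hs => by rw [diag_left, diag_right, abs_neg, abs_neg, abs_mul, hs, one_mul]
  obtain ⟨s, hs, hz⟩ := id hij
  obtain ⟨s', hs', hz'⟩ := id hkl
  rcases lonely_or_tight_of_abs_eq hz hij.ne (habs hs) with hlonely | htight
  · exact .inl (hlonely.planeLonely (diag_eq_comb v w i j s))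
  rcases lonely_or_tight_of_abs_eq hz' hkl.ne (habs hs') with hlonely | htight'
  · exact .inl (hlonely.planeLonely (diag_eq_comb v w k l s'))
  have hne : |diag v w k l s' i| ≠ |diag v w k l s' j| := fun heq =>
    hpair (htight'.sym2_eq hij.ne hkl.ne heq (habs hs'))
  exact planeLonely_or_type_of_tight (diag_eq_comb v w i j s) (diag_eq_comb v w k l s') htight
    htight' (det_ne_zero_of_abs_eq_of_abs_ne (diag_eq_comb v w i j s) (diag_eq_comb v w k l s')
      (hz i) (habs hs) hne) (habs hs) hne

theorem lonely_or_type_of_large {v : Fin 4 → ℤ} (hv : ∀ i, v i ≠ 0) (hprim : univ.gcd v = 1)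
    {i : Fin 4} (hi : 42 ^ 3 < (v i).natAbs) : Lonely (1 / 4) v ∨ TypeOne v ∨ TypeTwo v := by
  obtain ⟨w, hminor, hw⟩ := exists_plane_near_line (K := 42) (i₀ := i) (by norm_num)
    (by simpa using hi) hprim
  exact (planeLonely_or_type hv hminor).imp_left fun h => (hw _ h).mono (by norm_num)

/-! ### Directions `(q, 2q, 3q, m)` -/

/-- Either the line with direction `v` contains a point at distance `1 / 4` from the coordinate
hyperplanes, or the maximal such distance is `1 / 4 - 1 / (4 * N)` for an odd positive `N`. -/
def Structured (v : ι → ℤ) : Prop :=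
  Lonely (1 / 4) v ∨
    ∃ N : ℤ, 0 < N ∧ Odd N ∧ IsGreatest {r | Lonely r v} (1 / 4 - 1 / (4 * N))

lemma lonely_quarter_of_one_lt {q m : ℤ} (hq : 1 < q) (hqm : IsCoprime q m) :
    Lonely (1 / 4) ![q, 2 * q, 3 * q, m] := by
  have : (0 : ℝ) < q := mod_cast zero_lt_one.trans hq
  obtain ⟨c, hc₀, hc₁⟩ : ∃ c : ℤ, q ≤ m + 4 * c ∧ m + 4 * c ≤ 3 * q :=
    ⟨(q - m + 3) / 4, by omega, by omega⟩
  obtain ⟨τ, hσ, hρ⟩ := exists_zsmul_eq_and_zsmul_eq hqm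
    (σ := ((1 / 4 : ℝ) : UnitAddCircle)) (ρ := (((m + 4 * c) / (4 * q) : ℝ) : UnitAddCircle)) (by
      rw [zsmul_coe, zsmul_coe, ← sub_eq_zero, ← AddCircle.coe_sub, ← coe_intCast (-c)]
      congr 1
      push_cast
      field_simp
      ring)
  have hc₀' : (q : ℝ) ≤ m + 4 * c := mod_cast hc₀
  have hc₁' : (m + 4 * c : ℝ) ≤ 3 * q := mod_cast hc₁
  refine ⟨τ, fun i => ?_⟩
  fin_cases i <;>
    simp only [Fin.zero_eta, Fin.mk_one, Fin.reduceFinMk, Matrix.cons_val, mul_smul, hσ, hρ,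
      zsmul_coe] <;>
    refine le_norm_coe_iff.2 ⟨0, ?_, ?_⟩
  any_goals norm_num
  · rw [le_div_iff₀ (by positivity)]; linarith
  · rw [div_le_iff₀ (by positivity)]; linarith

lemma lonely_quarter_of_not_dvd {v : ι → ℤ} (h : ∀ i, ¬4 ∣ v i) :
    Lonely (1 / 4) v := by
  refine ⟨((1 / 4 : ℝ) : UnitAddCircle), fun i => ?_⟩
  have hlo : (1 : ℝ) ≤ (v i % 4 : ℤ) := by have := h i; norm_cast; omega
  have hhi : ((v i % 4 : ℤ) : ℝ) ≤ 3 := by norm_cast; omega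
  convert le_norm_coe_div (r := 1 / 4) (n := v i) (q := 4) (by norm_num) (by linarith)
    (by push_cast; linarith) using 2
  rw [zsmul_coe]
  push_cast
  congr 1
  ring

lemma lonely_one_two_three {k : ℤ} (hk : 0 < k) :
    Lonely (k / (4 * k + 1)) ![1, 2, 3, 4 * k] := by
  have hk' : (1 : ℝ) ≤ k := mod_cast hk
  set r : ℝ := k / (4 * k + 1) with hr
  have hmul : r * (4 * k + 1) = k := by rw [hr]; field_simp
  have hr₀ : 0 < r := by positivity
  refine ⟨(r : UnitAddCircle), fun i => ?_⟩
  fin_cases i <;>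
    simp only [Fin.zero_eta, Fin.mk_one, Fin.reduceFinMk, Matrix.cons_val, zsmul_coe,
      le_norm_coe_iff]
  · exact ⟨0, by push_cast; nlinarith, by push_cast; nlinarith⟩
  · exact ⟨0, by push_cast; nlinarith, by push_cast; nlinarith⟩
  · exact ⟨0, by push_cast; nlinarith, by push_cast; nlinarith⟩
  · exact ⟨k - 1, by push_cast; nlinarith, by push_cast; nlinarith⟩

lemma le_of_lonely_one_two_three {k : ℤ} {r : ℝ} (hk : 0 < k)
    (h : Lonely r ![1, 2, 3, 4 * k]) : r * (4 * k + 1) ≤ k := by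
  have hk' : (1 : ℝ) ≤ k := mod_cast hk
  obtain ⟨τ, hτ⟩ := h
  obtain ⟨y, rfl, hy⟩ := exists_coe_eq_abs_le_half τ
  have hx : ∀ n : ℤ, ‖n • (y : UnitAddCircle)‖ = ‖((n * |y| : ℝ) : UnitAddCircle)‖ := fun n => by
    rw [zsmul_coe]
    rcases abs_choice y with hy | hy <;> rw [hy]
    rw [mul_neg, AddCircle.coe_neg, norm_neg]
  set x := |y|
  have h₁ : r ≤ x := by
    have := hτ 0
    rw [hx] at this
    simpa [x] using this.trans (norm_coe_le_abs _)
  obtain ⟨a, ha₀, ha₁⟩ := le_norm_coe_iff.1 ((hτ 1).trans_eq (hx _))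
  obtain ⟨b, hb₀, hb₁⟩ := le_norm_coe_iff.1 ((hτ 2).trans_eq (hx _))
  obtain ⟨c, hc₀, hc₁⟩ := le_norm_coe_iff.1 ((hτ 3).trans_eq (hx _))
  simp only [Matrix.cons_val] at ha₀ ha₁ hb₀ hb₁ hc₀ hc₁
  push_cast at ha₀ ha₁ hb₀ hb₁ hc₀ hc₁
  by_contra! hr
  have hr₅ : 1 / 5 < r := by nlinarith
  have ha : a ≤ 0 := by
    have : (a : ℝ) < 1 := by linarith
    exact Int.lt_add_one_iff.1 (mod_cast this)
  have ha' : (a : ℝ) ≤ 0 := mod_cast ha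
  have hb : b ≤ 0 := by
    have : (b : ℝ) < 1 := by linarith
    exact Int.lt_add_one_iff.1 (mod_cast this)
  have hb' : (b : ℝ) ≤ 0 := mod_cast hb
  have hck : (c : ℝ) < k := by nlinarith
  have hkc : (k : ℝ) < c + 1 := by nlinarith
  norm_cast at hck hkc
  omega

lemma isGreatest_one_two_three {k : ℤ} (hk : 0 < k) :
    IsGreatest {r | Lonely r ![1, 2, 3, 4 * k]} (1 / 4 - 1 / (4 * (4 * k + 1 : ℤ))) := by
  have : (0 : ℝ) < k := mod_cast hk
  have hvalue : 1 / 4 - 1 / (4 * (4 * k + 1 : ℤ)) = (k / (4 * k + 1) : ℝ) := by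
    push_cast; field_simp; ring
  rw [hvalue]
  exact ⟨lonely_one_two_three hk, fun r hr =>
    (le_div_iff₀ (by positivity)).2 (le_of_lonely_one_two_three hk hr)⟩

lemma structured_one_two_three {q m : ℤ} (hq : 0 < q) (hm : 0 < m) (hqm : IsCoprime q m) :
    Structured ![q, 2 * q, 3 * q, m] := by
  obtain hq₁ | rfl : 1 < q ∨ q = 1 := by omega
  · exact .inl (lonely_quarter_of_one_lt hq₁ hqm)
  by_cases hm₄ : 4 ∣ m
  · obtain ⟨k, rfl⟩ := hm₄
    exact .inr ⟨4 * k + 1, by omega, ⟨2 * k, by ring⟩, isGreatest_one_two_three (by omega)⟩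
  · refine .inl (lonely_quarter_of_not_dvd fun i => ?_)
    fin_cases i
    exacts [(by decide : ¬(4 : ℤ) ∣ 1), (by decide : ¬(4 : ℤ) ∣ 2 * 1),
      (by decide : ¬(4 : ℤ) ∣ 3 * 1), hm₄]

/-! ### Directions `(a, b, a + b, a - b)` -/

/-- For some `τ`, the point `(a • τ, b • τ)` lies within `ε` of the corner `(1/2, 1/4)`, measured by
the gauge of the triangle with vertices `(2, -1)`, `(-2, -1)` and `(0, 1)`. -/
def Corner (ε : ℝ) (a b : ℤ) : Prop :=
  ∃ (τ : UnitAddCircle) (u w : ℝ), a • τ = ((1 / 2 + u : ℝ) : UnitAddCircle) ∧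
    b • τ = ((1 / 4 + w : ℝ) : UnitAddCircle) ∧ -ε ≤ w ∧ w + u ≤ ε ∧ w - u ≤ ε

lemma lonely_swap {r : ℝ} {a b : ℤ} (h : Lonely r ![b, a, b + a, b - a]) :
    Lonely r ![a, b, a + b, a - b] :=
  h.of_abs_eq fun j => by
    fin_cases j
    exacts [⟨1, rfl⟩, ⟨0, rfl⟩, ⟨2, congrArg abs (add_comm a b)⟩, ⟨3, abs_sub_comm a b⟩]

lemma Corner.lonely {ε : ℝ} {a b : ℤ} (hε : ε ≤ 1 / 4) (h : Corner ε a b) :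
    Lonely (1 / 4 - ε) ![a, b, a + b, a - b] := by
  obtain ⟨τ, u, w, ha, hb, h₀, h₁, h₂⟩ := h
  refine ⟨τ, fun i => ?_⟩
  fin_cases i <;>
    simp only [Fin.zero_eta, Fin.mk_one, Fin.reduceFinMk, Matrix.cons_val, add_smul, sub_smul, ha,
      hb, ← AddCircle.coe_add, ← AddCircle.coe_sub] <;>
    exact le_norm_coe_iff.2 ⟨0, by push_cast; linarith, by push_cast; linarith⟩

lemma exists_coe_eq_of_le_norm {r : ℝ} {τ : UnitAddCircle} (h : r ≤ ‖τ‖) :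
    ∃ x : ℝ, (x : UnitAddCircle) = τ ∧ r ≤ x ∧ x ≤ 1 - r := by
  obtain ⟨x, rfl⟩ := QuotientAddGroup.mk_surjective τ
  obtain ⟨n, h₀, h₁⟩ := le_norm_coe_iff.1 h
  refine ⟨x - n, ?_, by linarith, by linarith⟩
  rw [AddCircle.coe_sub, coe_intCast, sub_zero]

lemma corner_of_coe_eq {ε x y : ℝ} {a b : ℤ} {τ : UnitAddCircle} (hx : (x : UnitAddCircle) = a • τ)
    (hy : (y : UnitAddCircle) = b • τ) (h₀ : 1 / 4 - ε ≤ y) (h₁ : x + y ≤ 3 / 4 + ε)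
    (h₂ : 1 / 4 - ε ≤ x - y) : Corner ε a b := by
  refine ⟨τ, x - 1 / 2, y - 1 / 4, ?_, ?_, by linarith, by linarith, by linarith⟩
  · rw [add_sub_cancel, hx]
  · rw [add_sub_cancel, hy]

lemma coe_one_sub (x : ℝ) : ((1 - x : ℝ) : UnitAddCircle) = -(x : UnitAddCircle) := by
  rw [AddCircle.coe_sub, AddCircle.coe_period, zero_sub]

lemma corner_or_of_lonely {ε : ℝ} {a b : ℤ} (hε : ε < 1 / 4)
    (h : Lonely (1 / 4 - ε) ![a, b, a + b, a - b]) : Corner ε a b ∨ Corner ε b a := by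
  obtain ⟨τ, hτ⟩ := h
  obtain ⟨x, hx, hx₀, hx₁⟩ := exists_coe_eq_of_le_norm (hτ 0)
  obtain ⟨y, hy, hy₀, hy₁⟩ := exists_coe_eq_of_le_norm (hτ 1)
  have hsum := hτ 2
  have hdiff := hτ 3
  simp only [Matrix.cons_val] at hx hy hsum hdiff
  rw [add_smul, ← hx, ← hy, ← AddCircle.coe_add] at hsum
  rw [sub_smul, ← hx, ← hy, ← AddCircle.coe_sub] at hdiff
  obtain ⟨p, hp₀, hp₁⟩ := le_norm_coe_iff.1 hsum
  obtain ⟨q, hq₀, hq₁⟩ := le_norm_coe_iff.1 hdiff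
  have hx' : ((1 - x : ℝ) : UnitAddCircle) = a • -τ := by rw [coe_one_sub, hx, smul_neg]
  have hy' : ((1 - y : ℝ) : UnitAddCircle) = b • -τ := by rw [coe_one_sub, hy, smul_neg]
  have hp : p = 0 ∨ p = 1 := by
    have h₀ : (-1 : ℝ) < p := by linarith
    have h₁ : (p : ℝ) < 2 := by linarith
    norm_cast at h₀ h₁
    omega
  have hq : q = -1 ∨ q = 0 := by
    have h₀ : (-2 : ℝ) < q := by linarith
    have h₁ : (q : ℝ) < 1 := by linarith
    norm_cast at h₀ h₁
    omega
  rcases hp with rfl | rfl <;> rcases hq with rfl | rfl <;> push_cast at hp₀ hp₁ hq₀ hq₁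
  · exact .inr (corner_of_coe_eq hy hx (by linarith) (by linarith) (by linarith))
  · exact .inl (corner_of_coe_eq hx hy (by linarith) (by linarith) (by linarith))
  · exact .inl (corner_of_coe_eq hx' hy' (by linarith) (by linarith) (by linarith))
  · exact .inr (corner_of_coe_eq hy' hx' (by linarith) (by linarith) (by linarith))

lemma corner_iff_exists_triangle {ε : ℝ} {a b : ℤ} (hab : IsCoprime a b) :
    Corner ε a b ↔ ∃ K : ℤ, K ≡ a + 2 * b [ZMOD 4] ∧
      ∃ u w : ℝ, 4 * (b * u - a * w) = K ∧ -ε ≤ w ∧ w + u ≤ ε ∧ w - u ≤ ε := by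
  constructor
  · rintro ⟨τ, u, w, ha, hb, hbounds⟩
    have hcomm : b • a • τ = a • b • τ := smul_comm b a τ
    rw [ha, hb, zsmul_coe, zsmul_coe, ← sub_eq_zero, ← AddCircle.coe_sub,
      AddCircle.coe_eq_zero_iff] at hcomm
    obtain ⟨n, hn⟩ := hcomm
    rw [zsmul_eq_mul, mul_one] at hn
    refine ⟨4 * n + a - 2 * b, ?_, u, w, ?_, hbounds⟩
    · rw [Int.modEq_iff_dvd]
      exact ⟨b - n, by ring⟩
    · push_cast
      linarith
  · rintro ⟨K, hK, u, w, huw, hbounds⟩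
    obtain ⟨n, hn⟩ := hK.dvd
    have hn' : (a + 2 * b - K : ℝ) = 4 * n := mod_cast hn
    obtain ⟨τ, ha, hb⟩ := exists_zsmul_eq_and_zsmul_eq hab
      (σ := ((1 / 2 + u : ℝ) : UnitAddCircle)) (ρ := ((1 / 4 + w : ℝ) : UnitAddCircle)) (by
        rw [zsmul_coe, zsmul_coe, ← sub_eq_zero, ← AddCircle.coe_sub, ← coe_intCast (b - n)]
        congr 1
        push_cast
        linarith)
    exact ⟨τ, u, w, ha, hb, hbounds⟩

-- The extreme values of the linear form on the triangle are attained at its vertices.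
lemma exists_triangle_iff {ε a b K : ℝ} (ha : 0 < a) (hb : 0 < b) :
    (∃ u w : ℝ, 4 * (b * u - a * w) = K ∧ -ε ≤ w ∧ w + u ≤ ε ∧ w - u ≤ ε) ↔
      K ≤ 4 * ε * (a + 2 * b) ∧ -K ≤ 4 * ε * max a (2 * b - a) := by
  constructor
  · rintro ⟨u, w, rfl, h₀, h₁, h₂⟩
    refine ⟨by nlinarith, ?_⟩
    rcases max_cases a (2 * b - a) with ⟨hmax, hle⟩ | ⟨hmax, hlt⟩ <;> rw [hmax] <;> nlinarith
  · rintro ⟨hplus, hminus⟩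
    rcases le_total 0 K with hK | hK
    · obtain ⟨θ, rfl⟩ : ∃ θ, 4 * θ * (a + 2 * b) = K := ⟨K / (4 * (a + 2 * b)), by field_simp⟩
      have hθ₀ : 0 ≤ θ := by by_contra! h; nlinarith
      have hθ : θ ≤ ε := by by_contra! h; nlinarith
      exact ⟨2 * θ, -θ, by ring, by linarith, by linarith, by linarith⟩
    · have hM : 0 < max a (2 * b - a) := lt_max_of_lt_left ha
      obtain ⟨θ, rfl⟩ : ∃ θ, -(4 * θ * max a (2 * b - a)) = K :=
        ⟨-K / (4 * max a (2 * b - a)), by field_simp⟩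
      have hθ₀ : 0 ≤ θ := by by_contra! h; nlinarith
      have hθ : θ ≤ ε := by by_contra! h; nlinarith
      rcases max_choice a (2 * b - a) with hmax | hmax <;> rw [hmax]
      · exact ⟨0, θ, by ring, by linarith, by linarith, by linarith⟩
      · exact ⟨-2 * θ, -θ, by ring, by linarith, by linarith, by linarith⟩

lemma corner_iff_exists {ε : ℝ} {a b : ℤ} (ha : 0 < a) (hb : 0 < b) (hab : IsCoprime a b) :
    Corner ε a b ↔ ∃ K : ℤ, K ≡ a + 2 * b [ZMOD 4] ∧
      K ≤ 4 * ε * (a + 2 * b : ℤ) ∧ -K ≤ 4 * ε * (max a (2 * b - a) : ℤ) := by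
  rw [corner_iff_exists_triangle hab]
  refine exists_congr fun K => and_congr_right fun _ => ?_
  rw [exists_triangle_iff (Int.cast_pos.2 ha) (Int.cast_pos.2 hb)]
  push_cast
  rfl

lemma corner_zero {a b : ℤ} (ha : 0 < a) (hb : 0 < b) (hab : IsCoprime a b)
    (h : 4 ∣ a + 2 * b) : Corner 0 a b :=
  (corner_iff_exists ha hb hab).2
    ⟨0, (Int.modEq_zero_iff_dvd.2 h).symm, by simp, by simp⟩

/-- The reciprocal of four times the least `ε` with `Corner ε a b`, for `a` and `b` positive and
coprime and `a + 2 * b` not divisible by `4`. -/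
def cornerDenom (a b : ℤ) : ℤ :=
  if (a + 2 * b) % 4 = 1 then a + 2 * b
  else if (a + 2 * b) % 4 = 2 then (a + 2 * b) / 2
  else max a (2 * b - a)

lemma cornerDenom_pos {a b : ℤ} (ha : 0 < a) (hb : 0 < b) : 0 < cornerDenom a b := by
  unfold cornerDenom
  split_ifs <;> omega

lemma odd_cornerDenom {a b : ℤ} (h : ¬4 ∣ a + 2 * b) : Odd (cornerDenom a b) := by
  rw [Int.odd_iff]
  unfold cornerDenom
  split_ifs <;> omega

lemma Corner.one_le {ε : ℝ} {a b : ℤ} (ha : 0 < a) (hb : 0 < b) (hab : IsCoprime a b)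
    (h : ¬4 ∣ a + 2 * b) (hε : Corner ε a b) : 1 ≤ 4 * ε * cornerDenom a b := by
  obtain ⟨K, hK, hKS, hKM⟩ := (corner_iff_exists ha hb hab).1 hε
  have hM : (0 : ℝ) < (max a (2 * b - a) : ℤ) := mod_cast lt_max_of_lt_left ha
  have hMS : ((max a (2 * b - a) : ℤ) : ℝ) ≤ (a + 2 * b : ℤ) := by norm_cast; omega
  have hSM : ((a + 2 * b : ℤ) : ℝ) ≤ 3 * (max a (2 * b - a) : ℤ) := by norm_cast; omega
  unfold cornerDenom
  rw [Int.ModEq] at hK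
  generalize max a (2 * b - a) = M at *
  generalize a + 2 * b = S at *
  have hε : 0 < ε := by
    by_contra! hε
    have h₀ : (K : ℝ) ≤ 0 := by nlinarith
    have h₁ : (0 : ℝ) ≤ K := by nlinarith
    norm_cast at h₀ h₁
    omega
  split_ifs with h₁ h₂
  · obtain hK | hK : 1 ≤ K ∨ K ≤ -3 := by omega
    all_goals rify at hK; nlinarith
  · obtain ⟨T, rfl⟩ : ∃ T, S = 2 * T := ⟨S / 2, by omega⟩
    rw [Int.mul_ediv_cancel_left _ two_ne_zero]
    push_cast at hMS hSM hKS
    obtain hK | hK : 2 ≤ K ∨ K ≤ -2 := by omega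
    all_goals rify at hK; nlinarith
  · obtain hK | hK : 3 ≤ K ∨ K ≤ -1 := by omega
    all_goals rify at hK; nlinarith

lemma corner_of_one_le {ε : ℝ} {a b : ℤ} (ha : 0 < a) (hb : 0 < b) (hab : IsCoprime a b)
    (h : ¬4 ∣ a + 2 * b) (hε : 1 ≤ 4 * ε * cornerDenom a b) : Corner ε a b := by
  rw [corner_iff_exists ha hb hab]
  have hM : (0 : ℝ) < (max a (2 * b - a) : ℤ) := mod_cast lt_max_of_lt_left ha
  have hMS : ((max a (2 * b - a) : ℤ) : ℝ) ≤ (a + 2 * b : ℤ) := by norm_cast; omega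
  have hSM : ((a + 2 * b : ℤ) : ℝ) ≤ 3 * (max a (2 * b - a) : ℤ) := by norm_cast; omega
  unfold cornerDenom at hε
  simp only [Int.ModEq]
  generalize max a (2 * b - a) = M at *
  generalize a + 2 * b = S at *
  split_ifs at hε with h₁ h₂
  · exact ⟨1, by omega, by push_cast; linarith, by push_cast; nlinarith⟩
  · obtain ⟨T, rfl⟩ : ∃ T, S = 2 * T := ⟨S / 2, by omega⟩
    rw [Int.mul_ediv_cancel_left _ two_ne_zero] at hε
    push_cast at hMS hSM
    exact ⟨2, by omega, by push_cast; linarith, by push_cast; nlinarith⟩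
  · exact ⟨-1, by omega, by push_cast; nlinarith, by push_cast; linarith⟩

lemma isGreatest_sum_difference {a b : ℤ} (ha : 0 < a) (hb : 0 < b) (hab : IsCoprime a b)
    (h₁ : ¬4 ∣ a + 2 * b) (h₂ : ¬4 ∣ b + 2 * a) :
    IsGreatest {r | Lonely r ![a, b, a + b, a - b]}
      (1 / 4 - 1 / (4 * (max (cornerDenom a b) (cornerDenom b a) : ℤ))) := by
  have hda : (1 : ℝ) ≤ cornerDenom a b := mod_cast cornerDenom_pos ha hb
  have hdb : (1 : ℝ) ≤ cornerDenom b a := mod_cast cornerDenom_pos hb ha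
  push_cast
  set N : ℝ := max (cornerDenom a b) (cornerDenom b a) with hN
  have hN₁ : 1 ≤ N := le_max_of_le_left hda
  have hcancel : 4 * (1 / (4 * N)) * N = 1 := by field_simp
  constructor
  · have hε : 1 / (4 * N) ≤ 1 / 4 := by gcongr; linarith
    rcases max_choice (cornerDenom a b : ℝ) (cornerDenom b a) with h | h
    · exact (corner_of_one_le ha hb hab h₁ (by rw [← h, ← hN, hcancel])).lonely hε
    · exact lonely_swap <|
        (corner_of_one_le hb ha hab.symm h₂ (by rw [← h, ← hN, hcancel])).lonely hε
  · intro r (hr : Lonely r _)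
    have key : 1 ≤ 4 * (1 / 4 - r) * N := by
      rcases le_or_gt r 0 with hr₀ | hr₀
      · nlinarith
      rw [← sub_sub_cancel (1 / 4) r] at hr
      rcases corner_or_of_lonely (by linarith) hr with hc | hc
      · have := hc.one_le ha hb hab h₁
        nlinarith [le_max_left (cornerDenom a b : ℝ) (cornerDenom b a)]
      · have := hc.one_le hb ha hab.symm h₂
        nlinarith [le_max_right (cornerDenom a b : ℝ) (cornerDenom b a)]
    have : 1 / (4 * N) ≤ 1 / 4 - r := by
      rw [div_le_iff₀ (by positivity)]; linarith
    linarith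

lemma structured_sum_difference {a b : ℤ} (ha : 0 < a) (hb : 0 < b) (hab : IsCoprime a b) :
    Structured ![a, b, a + b, a - b] := by
  by_cases h₁ : 4 ∣ a + 2 * b
  · exact .inl (by simpa using (corner_zero ha hb hab h₁).lonely (by norm_num))
  by_cases h₂ : 4 ∣ b + 2 * a
  · exact .inl (lonely_swap (by simpa using (corner_zero hb ha hab.symm h₂).lonely (by norm_num)))
  refine .inr ⟨_, lt_max_of_lt_left (cornerDenom_pos ha hb), ?_,
    isGreatest_sum_difference ha hb hab h₁ h₂⟩
  rcases max_choice (cornerDenom a b) (cornerDenom b a) with h | h <;> rw [h]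
  exacts [odd_cornerDenom h₁, odd_cornerDenom h₂]

lemma Structured.of_abs_comp {v w : ι → ℤ} (h : Structured w) (σ : Equiv.Perm ι)
    (hσ : ∀ i, |w i| = |v (σ i)|) : Structured v := by
  have hiff : ∀ r, Lonely r w ↔ Lonely r v := fun r =>
    ⟨fun hw => hw.of_abs_eq fun j => ⟨σ.symm j, by rw [hσ, σ.apply_symm_apply]⟩,
      fun hv => hv.of_abs_eq fun i => ⟨σ i, hσ i⟩⟩
  simpa only [Structured, hiff] using h

lemma isCoprime_of_dvd_imp_dvd [Fintype ι] {v : ι → ℤ} (hprim : univ.gcd v = 1) {a b : ℤ}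
    (h : ∀ d, d ∣ a → d ∣ b → ∀ i, d ∣ v i) : IsCoprime a b :=
  (gcd_isUnit_iff a b).1 <| isUnit_of_dvd_one <| hprim ▸
    Finset.dvd_gcd fun i _ => h _ (gcd_dvd_left a b) (gcd_dvd_right a b) i

lemma exists_perm_eq {i j k : Fin 4} (hij : i ≠ j) (hik : i ≠ k) (hjk : j ≠ k) :
    ∃ σ : Equiv.Perm (Fin 4), σ 0 = i ∧ σ 1 = j ∧ σ 2 = k := by
  decide +revert +kernel

lemma TypeOne.structured {v : Fin 4 → ℤ} (h : TypeOne v) (hv : ∀ i, v i ≠ 0)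
    (hprim : univ.gcd v = 1) : Structured v := by
  obtain ⟨i, j, k, hj, hk⟩ := h
  have hi := abs_pos.2 (hv i)
  obtain ⟨σ, rfl, rfl, rfl⟩ : ∃ σ : Equiv.Perm (Fin 4), σ 0 = i ∧ σ 1 = j ∧ σ 2 = k := by
    refine exists_perm_eq ?_ ?_ ?_ <;> rintro rfl <;> omega
  refine (structured_one_two_three hi (abs_pos.2 (hv (σ 3))) ?_).of_abs_comp σ fun n => ?_
  · refine isCoprime_of_dvd_imp_dvd hprim fun d hd₀ hd₃ n => ?_
    obtain ⟨n, rfl⟩ := σ.surjective n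
    rw [← dvd_abs]
    fin_cases n
    exacts [hd₀, hj ▸ hd₀.mul_left 2, hk ▸ hd₀.mul_left 3, hd₃]
  · fin_cases n <;> simp [hj, hk]

lemma TypeTwo.structured {v : Fin 4 → ℤ} (h : TypeTwo v) (hv : ∀ i, v i ≠ 0)
    (hprim : univ.gcd v = 1) : Structured v := by
  obtain ⟨σ, h₂, h₃⟩ := h
  refine (structured_sum_difference (abs_pos.2 (hv (σ 0))) (abs_pos.2 (hv (σ 1))) ?_).of_abs_comp
    σ fun n => ?_
  · refine isCoprime_of_dvd_imp_dvd hprim fun d hd₀ hd₁ n => ?_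
    obtain ⟨n, rfl⟩ := σ.surjective n
    rw [← dvd_abs]
    fin_cases n
    exacts [hd₀, hd₁, h₂ ▸ hd₀.add hd₁, h₃ ▸ (dvd_abs _ _).2 (hd₀.sub hd₁)]
  · fin_cases n <;> simp [h₂, h₃, add_nonneg]

lemma structured_of_large {v : Fin 4 → ℤ} (hv : ∀ i, v i ≠ 0) (hprim : univ.gcd v = 1) {i : Fin 4}
    (hi : 42 ^ 3 < (v i).natAbs) : Structured v := by
  rcases lonely_or_type_of_large hv hprim hi with h | h | h
  exacts [.inl h, h.structured hv hprim, h.structured hv hprim]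

lemma exists_isGreatest_of_odd {N : ℤ} (hN : 15 ≤ N) (hodd : Odd N) :
    ∃ v : Fin 4 → ℤ, IsGreatest {r | Lonely r v} (1 / 4 - 1 / (4 * N)) := by
  obtain ⟨k, rfl | rfl⟩ : ∃ k, N = 4 * k + 1 ∨ N = 4 * k + 3 := by
    obtain ⟨m, rfl⟩ := hodd
    exact ⟨m / 2, by omega⟩
  · exact ⟨_, isGreatest_one_two_three (by omega)⟩
  · have hcop : IsCoprime (4 * k - 1) 8 := ⟨4 * k - 1, -(2 * k ^ 2 - k), by ring⟩
    refine ⟨![4 * k - 1, 8, 4 * k - 1 + 8, 4 * k - 1 - 8], ?_⟩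
    convert isGreatest_sum_difference (by omega) (by norm_num) hcop (by omega) (by omega) using 5
    simp only [cornerDenom]
    split_ifs <;> omega

/-! ### The one-dimensional spectrum -/

section Line

variable {n : ℕ} {v : Fin n → ℤ}

/-- The one-dimensional subtorus with direction `v`, for `v ≠ 0`. -/
def line (v : Fin n → ℤ) : Set (Torus n) := spanTorus fun _ : Fin 1 => v

lemma mem_line {p : Torus n} :
    p ∈ line v ↔ ∃ τ : UnitAddCircle, p = fun i => v i • τ := by
  have hproj (t : Fin 1 → ℝ) : (torusProj fun i => ∑ j, t j * (v i : ℝ)) =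
      fun i => v i • (t 0 : UnitAddCircle) := by
    ext i
    rw [torusProj, Fin.sum_univ_one, zsmul_coe, mul_comm]
  constructor
  · rintro ⟨t, rfl⟩
    exact ⟨t 0, hproj t⟩
  · rintro ⟨τ, rfl⟩
    obtain ⟨x, rfl⟩ := QuotientAddGroup.mk_surjective τ
    exact ⟨fun _ => x, (hproj fun _ => x).symm⟩

lemma line_smul {g : ℤ} (hg : g ≠ 0) : line (g • v) = line v := by
  ext p
  simp only [mem_line, Pi.smul_apply, smul_eq_mul]
  constructor
  · rintro ⟨τ, rfl⟩
    exact ⟨g • τ, by simp only [smul_smul, mul_comm g]⟩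
  · rintro ⟨τ, rfl⟩
    obtain ⟨ρ, rfl⟩ := exists_zsmul_eq hg τ
    exact ⟨ρ, by simp only [smul_smul, mul_comm g]⟩

lemma isSubtorus_line (hv : v ≠ 0) : IsSubtorus 1 (line v) := by
  refine ⟨fun _ => v, ?_, rfl⟩
  rw [linearIndependent_unique_iff]
  contrapose! hv
  ext i
  exact Int.cast_eq_zero.1 (congrFun hv i)

lemma isProperSub_line {r : ℝ} (hr : 0 < r) (h : Lonely r v) : IsProperSub (line v) := by
  obtain ⟨τ, hτ⟩ := h
  intro hsub
  obtain ⟨i, hi : v i • τ = 0⟩ := Set.mem_iUnion.1 (hsub (mem_line.2 ⟨τ, rfl⟩))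
  exact (hr.trans_le (hτ i)).ne' (norm_eq_zero.2 hi)

lemma ne_zero_of_isProperSub_line (h : IsProperSub (line v)) (i : Fin n) : v i ≠ 0 := by
  contrapose! h
  refine not_not.2 fun p hp => Set.mem_iUnion.2 ⟨i, ?_⟩
  obtain ⟨τ, rfl⟩ := mem_line.1 hp
  change v i • τ = 0
  rw [h, zero_smul]

lemma exists_primitive_of_mem_spec [NeZero n] {x : ℝ} (hx : x ∈ Spec 1 n) :
    ∃ v : Fin n → ℤ, (∀ i, v i ≠ 0) ∧ univ.gcd v = 1 ∧ DVal (line v) = x := by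
  obtain ⟨_, ⟨w, -, rfl⟩, hproper, rfl⟩ := hx
  obtain ⟨u, rfl⟩ : ∃ u, w = fun _ => u := ⟨w 0, funext fun j => by rw [Subsingleton.elim j 0]⟩
  have hu : ∀ i, u i ≠ 0 := ne_zero_of_isProperSub_line hproper
  obtain ⟨v, huv, hv⟩ := extract_gcd u univ_nonempty
  have huv' : u = univ.gcd u • v := funext fun i => huv i (mem_univ i)
  have hg : univ.gcd u ≠ 0 := fun h => hu 0 (by rw [huv 0 (mem_univ 0), h, zero_mul])
  refine ⟨v, fun i hi => hu i ?_, hv, ?_⟩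
  · rw [huv i (mem_univ i), hi, mul_zero]
  · rw [← line_smul hg, ← huv']
    rfl

lemma dVal_line_le [NeZero n] {r : ℝ} (h : Lonely r v) : DVal (line v) ≤ 1 / 2 - r := by
  obtain ⟨τ, hτ⟩ := h
  refine (csInf_le ⟨0, ?_⟩ (Set.mem_image_of_mem _ (mem_line.2 ⟨τ, rfl⟩))).trans
    (ciSup_le fun i => ?_)
  · rintro _ ⟨p, -, rfl⟩
    exact Real.iSup_nonneg fun i => dist_nonneg
  · rw [dist_coe_half]
    exact sub_le_sub_left (hτ i) _

lemma dVal_line_eq [NeZero n] {m : ℝ} (h : IsGreatest {r | Lonely r v} m) :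
    DVal (line v) = 1 / 2 - m := by
  refine (dVal_line_le h.1).antisymm (le_csInf ⟨_, _, mem_line.2 ⟨0, rfl⟩, rfl⟩ ?_)
  rintro _ ⟨p, hp, rfl⟩
  obtain ⟨τ, rfl⟩ := mem_line.1 hp
  rw [sub_le_comm]
  refine h.2 ⟨τ, fun i => ?_⟩
  rw [sub_le_comm, ← dist_coe_half]
  exact le_ciSup (f := fun i => dist (v i • τ) ((1 / 2 : ℝ) : UnitAddCircle))
    (Set.finite_range _).bddAbove i

lemma sub_mem_spec [NeZero n] {m : ℝ} (hm : 0 < m) (h : IsGreatest {r | Lonely r v} m) :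
    1 / 2 - m ∈ Spec 1 n := by
  have hproper : IsProperSub (line v) := isProperSub_line hm h.1
  have hv : v ≠ 0 := fun hv => ne_zero_of_isProperSub_line hproper 0 (congrFun hv 0)
  exact ⟨line v, isSubtorus_line hv, hproper, (dVal_line_eq h).symm⟩

end Line

lemma finite_dVal_line_of_natAbs_le (n B : ℕ) :
    ((fun v : Fin n → ℤ => DVal (line v)) '' {v | ∀ i, (v i).natAbs ≤ B}).Finite := by
  refine Set.Finite.image _ ((Set.finite_Icc (fun _ => (-B : ℤ)) fun _ => (B : ℤ)).subset ?_)
  intro v (hv : ∀ i, (v i).natAbs ≤ B)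
  exact ⟨fun i => by have := hv i; dsimp only; omega, fun i => by have := hv i; dsimp only; omega⟩

lemma Structured.dVal_eq {n : ℕ} [NeZero n] {v : Fin n → ℤ} (h : Structured v)
    (hv : 1 / 4 < DVal (line v)) : DVal (line v) = 1 / 2 ∨
      ∃ s : ℕ, DVal (line v) = 1 / 4 + 1 / (8 * (s : ℝ) + 12) := by
  obtain h | ⟨N, hN, hodd, h⟩ := h
  · linarith [dVal_line_le h]
  rw [dVal_line_eq h]
  obtain rfl | hN₃ : N = 1 ∨ 3 ≤ N := by obtain ⟨k, rfl⟩ := hodd; omega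
  · norm_num
  right
  obtain ⟨s, rfl⟩ : ∃ s : ℕ, N = 2 * s + 3 := by
    obtain ⟨k, rfl⟩ := hodd
    exact ⟨(k - 1).toNat, by omega⟩
  refine ⟨s, ?_⟩
  push_cast
  ring

lemma mem_spec_of_seven_le {s : ℕ} (hs : 7 ≤ s) :
    1 / 4 + 1 / (8 * (s : ℝ) + 12) ∈ Spec 1 4 := by
  obtain ⟨v, h⟩ := exists_isGreatest_of_odd (N := 2 * s + 3) (by omega) ⟨s + 1, by ring⟩
  convert sub_mem_spec ?_ h using 1
  · push_cast
    ring
  · have : (7 : ℝ) ≤ s := mod_cast hs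
    rw [sub_pos]
    gcongr
    push_cast
    linarith

lemma finite_spec_diff :
    ((Spec 1 4 ∩ Set.Ioc (1 / 4 : ℝ) (1 / 2)) \
      {x : ℝ | ∃ s : ℕ, x = 1 / 4 + 1 / (8 * (s : ℝ) + 12)}).Finite := by
  refine ((finite_dVal_line_of_natAbs_le 4 (42 ^ 3)).union (Set.finite_singleton (1 / 2))).subset ?_
  rintro x ⟨⟨hx, hx₀, -⟩, hprog⟩
  obtain ⟨v, hv, hprim, rfl⟩ := exists_primitive_of_mem_spec hx
  by_cases hsmall : ∀ i, (v i).natAbs ≤ 42 ^ 3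
  · exact .inl ⟨v, hsmall, rfl⟩
  push Not at hsmall
  obtain ⟨i, hi⟩ := hsmall
  exact .inr (((structured_of_large hv hprim hi).dVal_eq hx₀).resolve_right hprog)

lemma finite_diff_spec :
    ({x : ℝ | ∃ s : ℕ, x = 1 / 4 + 1 / (8 * (s : ℝ) + 12)} \
      (Spec 1 4 ∩ Set.Ioc (1 / 4 : ℝ) (1 / 2))).Finite := by
  refine ((Set.finite_Iio 7).image fun s : ℕ => 1 / 4 + 1 / (8 * (s : ℝ) + 12)).subset ?_
  rintro _ ⟨⟨s, rfl⟩, hs⟩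
  refine ⟨s, ?_, rfl⟩
  contrapose! hs
  refine ⟨mem_spec_of_seven_le (not_lt.1 hs), ?_, ?_⟩
  · have : 0 < 1 / (8 * (s : ℝ) + 12) := by positivity
    linarith
  · have : 1 / (8 * (s : ℝ) + 12) ≤ 1 / 4 := by gcongr; linarith [s.cast_nonneg (α := ℝ)]
    linarith

end LonelyRunner

/-- `𝒮₁(4) ∩ (1/4, 1/2]` has finite symmetric difference with `1/4 + 1/Prog(8,12)`. -/
theorem stmt3 :
    (symmDiff (Spec 1 4 ∩ Set.Ioc (1/4 : ℝ) (1/2))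
      {x : ℝ | ∃ s : ℕ, x = 1/4 + 1/(8 * (s : ℝ) + 12)}).Finite :=
  LonelyRunner.finite_spec_diff.union LonelyRunner.finite_diff_spec
end
end

section
/- The set 𝒮₁(3) ∩ (1/10, 1/6] has finite symmetric difference with the set { 1/10 + 4/(5(5s + 7)) : s ∈ ℤ, s ≥ 0 } ∪ { 1/10 + 3/(5(5s + 9)) : s ∈ ℤ, s ≥ 0 }. -/
noncomputable section

/-!
A one-dimensional subtorus with primitive velocity `v` is governed by the integer relations
`a ⬝ᵥ v = 0`. If `v` has two independent small relations, it divides their cross product, so it is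
bounded and contributes finitely many values. Otherwise all small relations are multiples of one
primitive `a`, and the line comes close to every point of the subtorus `a ⬝ᵥ x ∈ ℤ`: the Fourier
expansion of the nonnegative kernel `∏ cos (π xᵢ) ^ (2k)` bounds its mean over the line from below.
The distance from that subtorus to `(1/2, 1/2, 1/2)` is `0` if `S = ∑ |aᵢ|` is even and `1 / (2S)`
if it is odd, so that a value in `(1/10, 1/6)` forces `S = 5`.

When `S = 5` and the value is `1/10 + l`, a nearest point lies at coordinatewise distances
`|1/10 + uᵢ|` with `∑ |aᵢ| uᵢ = 0`, and by minimality `uᵢ = l` for all `i` except some `k`. There is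
an integer `κ` such that replacing `u` by `r u` gives another point of the line whenever
`(r - 1) κ ∈ 5ℤ`. Taking `r = 1 - 5 / |κ|`, minimality forces `|κ| + |aₖ| < 5`, whence
`l = P / (5A)` for integers `1 ≤ P ≤ 4` and `A` with `P ≡ 2A` modulo `5`: these are the two
progressions. Conversely, the velocities `(5 - α, -α, r)` with `(α, κ) = (2, 2)` and `(1, 3)`
realize them.
-/

section Kronecker

lemma cos_pi_mul_sq_le (x : ℝ) :
    Real.cos (Real.pi * x) ^ 2 ≤ 1 - 4 * ‖(x : UnitAddCircle)‖ ^ 2 := by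
  have hround : |x - round x| ≤ 1 / 2 := abs_sub_round x
  have hcos : Real.cos (2 * (Real.pi * x)) = Real.cos (2 * Real.pi * (x - round x)) := by
    rw [← Real.cos_sub_int_mul_two_pi _ (round x)]
    ring_nf
  have hbound : Real.cos (2 * Real.pi * (x - round x)) ≤ 1 - 8 * |x - round x| ^ 2 := by
    refine (Real.cos_le_one_sub_mul_cos_sq ?_).trans_eq ?_
    · rw [abs_mul, abs_of_pos Real.two_pi_pos]
      nlinarith [Real.pi_pos]
    · rw [sq_abs]
      field_simp
      ring
  rw [Real.cos_sq, hcos, UnitAddCircle.norm_eq]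
  linarith

lemma cos_pi_mul_pow_eq_sum (k : ℕ) (x : ℝ) :
    ((Real.cos (Real.pi * x) ^ (2 * k) : ℝ) : ℂ) = ∑ j ∈ Finset.range (2 * k + 1),
      ((2 * k).choose j / 4 ^ k : ℂ) * Complex.exp (2 * Real.pi * Complex.I * ((j - k) * x)) := by
  push_cast
  rw [Complex.cos, div_pow, add_pow, Finset.sum_div]
  refine Finset.sum_congr rfl fun j hj => ?_
  have hj : j ≤ 2 * k := Finset.mem_range_succ_iff.mp hj
  rw [← Complex.exp_nat_mul, ← Complex.exp_nat_mul, ← Complex.exp_add, pow_mul, Nat.cast_sub hj,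
    mul_comm, ← mul_div_right_comm]
  norm_num
  exact Or.inl (by ring_nf)

variable {ι : Type*} [Fintype ι]

lemma prod_cos_pi_mul_pow_eq_sum [DecidableEq ι] (k : ℕ) (x : ι → ℝ) :
    ((∏ i, Real.cos (Real.pi * x i) ^ (2 * k) : ℝ) : ℂ) =
      ∑ p ∈ Fintype.piFinset fun _ : ι => Finset.range (2 * k + 1),
        ((∏ i, ((2 * k).choose (p i) / 4 ^ k : ℝ) : ℝ) : ℂ) *
          Complex.exp (2 * Real.pi * Complex.I * ∑ i, ((p i : ℂ) - k) * x i) := by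
  simp only [Complex.ofReal_prod, cos_pi_mul_pow_eq_sum, Finset.prod_univ_sum,
    Finset.prod_mul_distrib, Finset.mul_sum, Complex.exp_sum]
  push_cast
  rfl

lemma integral_exp_two_pi_mul (m : ℤ) (θ : ℝ) :
    ∫ t in (0 : ℝ)..1, Complex.exp (2 * Real.pi * Complex.I * (m * t - θ)) =
      if m = 0 then Complex.exp (-(2 * Real.pi * Complex.I * θ)) else 0 := by
  split_ifs with hm
  · simp [hm]
  · have hne : 2 * Real.pi * Complex.I * m ≠ 0 :=
      mul_ne_zero Complex.two_pi_I_ne_zero (Int.cast_ne_zero.mpr hm)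
    have hone : Complex.exp (2 * Real.pi * Complex.I * m) = 1 := by
      rw [mul_comm]
      exact Complex.exp_int_mul_two_pi_mul_I m
    simp_rw [mul_sub, Complex.exp_sub, ← mul_assoc]
    rw [intervalIntegral.integral_div, integral_exp_mul_complex hne]
    simp [hone]

lemma integral_prod_cos_pow [DecidableEq ι] {k : ℕ} {v : ι → ℤ} {w : ι → ℝ}
    (hw : ∀ a : ι → ℤ, (∀ i, |a i| ≤ k) → ∑ i, a i * v i = 0 → ∃ m : ℤ, ∑ i, a i * w i = m) :
    ∫ t in (0 : ℝ)..1, ∏ i, Real.cos (Real.pi * (t * v i - w i)) ^ (2 * k) =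
      ∑ p ∈ Fintype.piFinset fun _ : ι => Finset.range (2 * k + 1),
        if ∑ i, ((p i : ℤ) - k) * v i = 0 then ∏ i, ((2 * k).choose (p i) / 4 ^ k : ℝ) else 0 := by
  have hphase (p : ι → ℕ) (t : ℝ) :
      ∑ i, ((p i : ℂ) - k) * ((t * v i - w i : ℝ) : ℂ) =
        (∑ i, ((p i : ℤ) - k) * v i : ℤ) * t - (∑ i, ((p i : ℝ) - k) * w i : ℝ) := by
    push_cast
    rw [Finset.sum_mul, ← Finset.sum_sub_distrib]
    exact Finset.sum_congr rfl fun i _ => by ring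
  rw [← Complex.ofReal_inj, ← intervalIntegral.integral_ofReal]
  simp_rw [prod_cos_pi_mul_pow_eq_sum, hphase]
  rw [intervalIntegral.integral_finsetSum
    fun p _ => (by fun_prop : Continuous _).intervalIntegrable _ _, Complex.ofReal_sum]
  refine Finset.sum_congr rfl fun p hp => ?_
  rw [intervalIntegral.integral_const_mul, integral_exp_two_pi_mul]
  split_ifs with hrel
  · have hp : ∀ i, |(p i : ℤ) - k| ≤ k := fun i => by
      have := Finset.mem_range.mp (Fintype.mem_piFinset.mp hp i)
      rw [abs_le]
      omega
    obtain ⟨m, hm⟩ := hw _ hp hrel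
    push_cast at hm
    rw [hm, Complex.exp_eq_one_iff.mpr ⟨-m, by push_cast; ring⟩, mul_one]
  · simp

lemma le_integral_prod_cos_pow {k : ℕ} (hk : 0 < k) {v : ι → ℤ} {w : ι → ℝ}
    (hw : ∀ a : ι → ℤ, (∀ i, |a i| ≤ k) → ∑ i, a i * v i = 0 → ∃ m : ℤ, ∑ i, a i * w i = m) :
    (1 / (2 * k) : ℝ) ^ Fintype.card ι ≤
      ∫ t in (0 : ℝ)..1, ∏ i, Real.cos (Real.pi * (t * v i - w i)) ^ (2 * k) := by
  classical
  have hbinom : (1 / (2 * k) : ℝ) ≤ (2 * k).choose k / 4 ^ k := by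
    rw [div_le_div_iff₀ (by positivity) (by positivity)]
    have := Nat.four_pow_le_two_mul_self_mul_centralBinom k hk
    rw [Nat.centralBinom] at this
    rw [one_mul, mul_comm]
    exact_mod_cast this
  calc (1 / (2 * k) : ℝ) ^ Fintype.card ι
      ≤ ∏ _i : ι, ((2 * k).choose k / 4 ^ k : ℝ) := by
        rw [Finset.prod_const, Finset.card_univ]
        gcongr
    _ = if ∑ i, (((fun _ => k : ι → ℕ) i : ℤ) - k) * v i = 0
          then ∏ i, ((2 * k).choose ((fun _ => k : ι → ℕ) i) / 4 ^ k : ℝ) else 0 := by simp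
    _ ≤ _ := by
        rw [integral_prod_cos_pow hw]
        refine Finset.single_le_sum
          (f := fun p : ι → ℕ => if ∑ i, ((p i : ℤ) - k) * v i = 0
            then ∏ i, ((2 * k).choose (p i) / 4 ^ k : ℝ) else 0) (fun p _ => ?_) ?_
        · split_ifs <;> positivity
        · exact Fintype.mem_piFinset.mpr fun _ => Finset.mem_range.mpr (by omega)

lemma prod_cos_pow_le {k : ℕ} {ε : ℝ} (hε : 0 ≤ ε) {x : ι → ℝ}
    (hx : ∃ i, ε ≤ ‖(x i : UnitAddCircle)‖) :
    ∏ i, Real.cos (Real.pi * x i) ^ (2 * k) ≤ (1 - 4 * ε ^ 2) ^ k := by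
  obtain ⟨i, hi⟩ := hx
  have hi : Real.cos (Real.pi * x i) ^ 2 ≤ 1 - 4 * ε ^ 2 :=
    (cos_pi_mul_sq_le (x i)).trans (by gcongr)
  classical
  rw [← Finset.mul_prod_erase _ _ (Finset.mem_univ i)]
  have hrest : ∏ j ∈ Finset.univ.erase i, Real.cos (Real.pi * x j) ^ (2 * k) ≤ 1 :=
    Finset.prod_le_one (fun j _ => by rw [pow_mul]; positivity) fun j _ => by
      rw [pow_mul]; exact pow_le_one₀ (sq_nonneg _) (Real.cos_sq_le_one _)
  calc _ ≤ Real.cos (Real.pi * x i) ^ (2 * k) * 1 := by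
        gcongr; rw [pow_mul]; positivity
    _ ≤ (1 - 4 * ε ^ 2) ^ k := by
        rw [mul_one, pow_mul]; gcongr

lemma exists_pow_lt_one_div_two_mul_pow {ρ : ℝ} (h0 : 0 ≤ ρ) (h1 : ρ < 1) (n : ℕ) :
    ∃ k : ℕ, 0 < k ∧ ρ ^ k < (1 / (2 * k) : ℝ) ^ n := by
  have hlim := tendsto_pow_const_mul_const_pow_of_abs_lt_one n (by rwa [abs_of_nonneg h0])
  obtain ⟨k, hk, hk0⟩ := ((hlim.eventually_lt_const (show (0 : ℝ) < (1 / 2) ^ n by positivity)).and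
    (Filter.eventually_gt_atTop 0)).exists
  refine ⟨k, hk0, ?_⟩
  have : (0 : ℝ) < k := Nat.cast_pos.mpr hk0
  rw [← one_div_mul_one_div, mul_pow, one_div_pow (k : ℝ), mul_one_div]
  rwa [lt_div_iff₀' (by positivity)]

variable (ι) in
theorem exists_forall_dist_le_of_forall_relation {ε : ℝ} (hε : 0 < ε) :
    ∃ K : ℕ, ∀ (v : ι → ℤ) (w : ι → ℝ),
      (∀ a : ι → ℤ, (∀ i, |a i| ≤ K) → ∑ i, a i * v i = 0 → ∃ m : ℤ, ∑ i, a i * w i = m) →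
      ∃ t : ℝ, ∀ i, dist ((t * v i : ℝ) : UnitAddCircle) (w i) ≤ ε := by
  wlog hε' : ε ≤ 1 / 2 generalizing ε
  · obtain ⟨K, hK⟩ := this one_half_pos le_rfl
    exact ⟨K, fun v w h => (hK v w h).imp fun t ht i => (ht i).trans (not_le.mp hε').le⟩
  obtain ⟨k, hk0, hk⟩ := exists_pow_lt_one_div_two_mul_pow (ρ := 1 - 4 * ε ^ 2) (by nlinarith)
    (by nlinarith) (Fintype.card ι)
  refine ⟨k, fun v w hw => ?_⟩
  by_contra! hfar
  refine hk.not_ge ((le_integral_prod_cos_pow hk0 hw).trans ?_)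
  calc _ ≤ ∫ _ in (0 : ℝ)..1, (1 - 4 * ε ^ 2) ^ k := by
        refine intervalIntegral.integral_mono zero_le_one
          ((by fun_prop : Continuous _).intervalIntegrable _ _) (by simp) fun t => ?_
        refine prod_cos_pow_le hε.le ((hfar t).imp fun i hi => ?_)
        rw [AddCircle.coe_sub, ← dist_eq_norm]
        exact hi.le
    _ = (1 - 4 * ε ^ 2) ^ k := by simp

end Kronecker

section Lines

open scoped Matrix
open Filter Topology

/-- The point `(1/2, …, 1/2)`, distances to which are measured by `DVal`. -/
def halfPoint (n : ℕ) : Torus n := fun _ => ((1 / 2 : ℝ) : AddCircle (1 : ℝ))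

/-- The point at time `t` of the one-parameter subgroup of the torus with velocity `v`. -/
def linePoint {n : ℕ} (v : Fin n → ℤ) (t : ℝ) : Torus n := torusProj fun i => t * v i

/-- The one-parameter subgroup with velocity `v`: a one-dimensional subtorus when `v ≠ 0`. -/
def lineTorus {n : ℕ} (v : Fin n → ℤ) : Set (Torus n) := Set.range (linePoint v)

/-- A primitive integer vector, in Bézout form: the gcd of its entries is `1`. -/
def IsPrimitive {ι : Type*} [Fintype ι] (v : ι → ℤ) : Prop := ∃ c : ι → ℤ, c ⬝ᵥ v = 1

lemma exists_smul_isPrimitive {ι : Type*} [Fintype ι] {v : ι → ℤ} (hv : v ≠ 0) :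
    ∃ g : ℤ, g ≠ 0 ∧ ∃ w, IsPrimitive w ∧ v = g • w := by
  obtain ⟨g, hg⟩ := (IsPrincipalIdealRing.principal (Ideal.span (Set.range v))).principal
  replace hg : Ideal.span (Set.range v) = Ideal.span {g} := hg
  have hdvd (i : ι) : g ∣ v i :=
    Ideal.mem_span_singleton.mp (hg.le (Ideal.subset_span (Set.mem_range_self i)))
  choose w hw using hdvd
  obtain ⟨c, hc⟩ :=
    Ideal.mem_span_range_iff_exists_fun.mp (hg.ge (Ideal.mem_span_singleton_self g))
  have hg0 : g ≠ 0 := fun h => hv (funext fun i => by simp [hw, h])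
  refine ⟨g, hg0, w, ⟨c, mul_left_cancel₀ hg0 ?_⟩, funext hw⟩
  calc g * c ⬝ᵥ w = c ⬝ᵥ (g • w) := by rw [dotProduct_smul, smul_eq_mul]
    _ = c ⬝ᵥ v := by rw [funext hw]; rfl
    _ = g * 1 := by rw [mul_one]; exact hc

lemma dist_coe_le_iff {x y d : ℝ} :
    dist (x : AddCircle (1 : ℝ)) y ≤ d ↔ ∃ m : ℤ, |x - y - m| ≤ d := by
  rw [dist_eq_norm, ← AddCircle.coe_sub, UnitAddCircle.norm_eq]
  exact ⟨fun h => ⟨_, h⟩, fun ⟨m, hm⟩ => (round_le _ m).trans hm⟩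

variable {n : ℕ} {v : Fin n → ℤ} {t d : ℝ}

lemma DVal_eq_infDist (S : Set (Torus n)) : DVal S = Metric.infDist (halfPoint n) S := by
  have hsup (x : Torus n) :
      ⨆ i, dist (x i) ((1 / 2 : ℝ) : AddCircle (1 : ℝ)) = dist (halfPoint n) x := by
    rw [dist_comm]
    refine le_antisymm (Real.iSup_le (fun i => dist_le_pi_dist x (halfPoint n) i) dist_nonneg) ?_
    exact (dist_pi_le_iff (Real.iSup_nonneg fun _ => dist_nonneg)).mpr fun i =>
      le_ciSup (f := fun i => dist (x i) (halfPoint n i)) (Set.finite_range _).bddAbove i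
  simp_rw [DVal, hsup, Metric.infDist_eq_iInf, sInf_image']

lemma DVal_lineTorus_le (v : Fin n → ℤ) (t : ℝ) :
    DVal (lineTorus v) ≤ dist (linePoint v t) (halfPoint n) := by
  rw [DVal_eq_infDist, dist_comm]
  exact Metric.infDist_le_dist_of_mem ⟨t, rfl⟩

lemma isCompact_lineTorus (v : Fin n → ℤ) : IsCompact (lineTorus v) := by
  refine Function.Periodic.compact_of_continuous (c := 1) (fun t => funext fun i => ?_) one_ne_zero
    (continuous_pi fun i => continuous_quotient_mk'.comp (by fun_prop))
  simp [linePoint, torusProj, add_mul]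

lemma exists_dist_eq_DVal (v : Fin n → ℤ) :
    ∃ t, dist (linePoint v t) (halfPoint n) = DVal (lineTorus v) := by
  obtain ⟨_, ⟨t, rfl⟩, ht⟩ :=
    (isCompact_lineTorus v).exists_infDist_eq_dist (Set.range_nonempty _) (halfPoint n)
  exact ⟨t, by rw [DVal_eq_infDist, ht, dist_comm]⟩

lemma lineTorus_smul {g : ℤ} (hg : g ≠ 0) (v : Fin n → ℤ) : lineTorus (g • v) = lineTorus v := by
  have hg : (g : ℝ) ≠ 0 := Int.cast_ne_zero.mpr hg
  have hscale (t : ℝ) : linePoint (g • v) t = linePoint v (t * g) := by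
    simp [linePoint, mul_assoc]
  ext x
  constructor
  · rintro ⟨t, rfl⟩
    exact ⟨t * g, (hscale t).symm⟩
  · rintro ⟨t, rfl⟩
    exact ⟨t / g, by rw [hscale, div_mul_cancel₀ t hg]⟩

lemma spanTorus_eq_lineTorus (v : Fin 1 → Fin n → ℤ) : spanTorus v = lineTorus (v 0) := by
  ext x
  constructor
  · rintro ⟨t, rfl⟩
    exact ⟨t 0, by simp [linePoint]⟩
  · rintro ⟨t, rfl⟩
    exact ⟨fun _ => t, by simp [linePoint]⟩

lemma isProperSub_lineTorus_iff : IsProperSub (lineTorus v) ↔ ∀ i, v i ≠ 0 := by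
  refine ⟨fun h i hi => h ?_, fun hv h => ?_⟩
  · rintro _ ⟨t, rfl⟩
    exact Set.mem_iUnion.mpr ⟨i, by simp [linePoint, torusProj, hi]⟩
  · obtain ⟨i, hi⟩ := Set.mem_iUnion.mp (h ⟨√2, rfl⟩)
    obtain ⟨m, hm⟩ := AddCircle.coe_eq_zero_iff (1:ℝ) |>.mp hi
    exact (irrational_sqrt_two.mul_intCast (hv i)).ne_int m (by simpa using hm.symm)

lemma DVal_lineTorus_mem_Spec [NeZero n] (hv : ∀ i, v i ≠ 0) : DVal (lineTorus v) ∈ Spec 1 n := by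
  refine ⟨lineTorus v, ⟨fun _ => v, ?_, (spanTorus_eq_lineTorus fun _ => v).symm⟩,
    isProperSub_lineTorus_iff.mpr hv, rfl⟩
  refine linearIndependent_unique_iff.mpr fun h => hv 0 ?_
  simpa using congrFun h 0

lemma exists_isPrimitive_of_mem_Spec [NeZero n] (hd : d ∈ Spec 1 n) :
    ∃ v : Fin n → ℤ, IsPrimitive v ∧ (∀ i, v i ≠ 0) ∧ DVal (lineTorus v) = d := by
  obtain ⟨_, ⟨u, -, rfl⟩, hproper, rfl⟩ := hd
  rw [spanTorus_eq_lineTorus, isProperSub_lineTorus_iff] at hproper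
  obtain ⟨g, hg, v, hv, huv⟩ :=
    exists_smul_isPrimitive (v := u 0) fun h => hproper 0 (congrFun h 0)
  refine ⟨v, hv, fun i hi => hproper i (by simp [huv, hi]), ?_⟩
  rw [spanTorus_eq_lineTorus, huv, lineTorus_smul hg]

lemma dist_linePoint_le_abs {i : Fin n} {m : ℤ} {y : ℝ} (h : t * v i = m + 1 / 2 + y) :
    dist (linePoint v t i) (halfPoint n i) ≤ |y| :=
  dist_coe_le_iff.mpr ⟨m, (congrArg abs (by linear_combination h)).le⟩

/-- Otherwise, moving slightly along the line brings the `k`-th coordinate closer to `1/2` while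
the other ones stay at distance less than the minimum. -/
lemma DVal_lt_abs_offset {k : Fin n} (hvk : v k ≠ 0) (hpos : 0 < DVal (lineTorus v))
    {m : Fin n → ℤ} {y : Fin n → ℝ} (hy : ∀ i, t * v i = m i + 1 / 2 + y i)
    (hlt : ∀ i ≠ k, |y i| < DVal (lineTorus v)) : DVal (lineTorus v) < |y k| := by
  by_contra! hk
  let z : ℝ → Fin n → ℝ := fun s i => y i - s * (y k / v k) * v i
  have hz (s : ℝ) (i : Fin n) : (t - s * (y k / v k)) * v i = m i + 1 / 2 + z s i := by
    linear_combination hy i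
  have hother : ∀ᶠ s in 𝓝[>] (0 : ℝ), ∀ i, i ≠ k → |z s i| < DVal (lineTorus v) := by
    refine eventually_all.mpr fun i => eventually_imp_distrib_left.mpr fun hi => ?_
    have hcont : Continuous fun s => |z s i| := by fun_prop
    exact nhdsWithin_le_nhds <| hcont.continuousAt.eventually_lt_const <| by
      simpa [z] using hlt i hi
  obtain ⟨s, hs, hs0, hs1⟩ := (hother.and (Ioo_mem_nhdsGT zero_lt_one)).exists
  refine (DVal_lineTorus_le v (t - s * (y k / v k))).not_gt ((dist_pi_lt_iff hpos).mpr fun i => ?_)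
  refine (dist_linePoint_le_abs (hz s i)).trans_lt ?_
  rcases eq_or_ne i k with rfl | hi
  · have hzi : z s i = (1 - s) * y i := by
      have : (v i : ℝ) ≠ 0 := Int.cast_ne_zero.mpr hvk
      simp only [z]
      field_simp
    rw [hzi, abs_mul, abs_of_pos (sub_pos.mpr hs1)]
    nlinarith
  · exact hs i hi

end Lines

section Relations

open scoped Matrix

lemma even_sum_mul_sub_sum {ι : Type*} [Fintype ι] {σ : ι → ℤ} (hσ : ∀ i, |σ i| = 1)
    (a : ι → ℤ) : Even (∑ i, σ i * a i - ∑ i, a i) := by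
  rw [← Finset.sum_sub_distrib]
  exact Finset.even_sum _ fun i _ => by
    rcases eq_or_eq_neg_of_abs_eq (hσ i) with h | h
    · exact ⟨0, by rw [h]; ring⟩
    · exact ⟨-a i, by rw [h]; ring⟩

lemma even_sum_abs_sub_sum {ι : Type*} [Fintype ι] (a : ι → ℤ) : Even (∑ i, |a i| - ∑ i, a i) := by
  rw [← Finset.sum_sub_distrib]
  exact Finset.even_sum _ fun i _ => by
    rcases abs_choice (a i) with h | h <;> rw [h]
    · simp
    · exact ⟨-a i, by ring⟩

lemma exists_sum_eq_intCast_of_abs_sub_half_le {ι : Type*} [Fintype ι] {a : ι → ℤ} {N : ℤ}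
    (hN : 0 < N) (ha : Even (∑ i, |a i|) ∨ N ≤ ∑ i, |a i|) :
    ∃ w : ι → ℝ, (∀ i, |w i - 1 / 2| ≤ 1 / (2 * N)) ∧ ∃ q : ℤ, ∑ i, a i * w i = q := by
  obtain ⟨r, hr⟩ := even_sum_abs_sub_sum a
  obtain ⟨δ, hδ0, hδN, q, hq⟩ : ∃ δ : ℝ, 0 ≤ δ ∧ δ ≤ 1 / (2 * N) ∧
      ∃ q : ℤ, (∑ i, |a i| : ℤ) * (1 / 2 + δ) = q := by
    rcases Int.even_or_odd' (∑ i, |a i|) with ⟨s, hs | hs⟩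
    · exact ⟨0, le_rfl, by positivity, s, by rw [hs]; push_cast; ring⟩
    · have hNs : N ≤ 2 * s + 1 := hs ▸ ha.resolve_left (Int.not_even_iff_odd.mpr ⟨s, hs⟩)
      have hs0 : (0 : ℝ) < 2 * s + 1 := by exact_mod_cast hN.trans_le hNs
      refine ⟨1 / (2 * (2 * s + 1)), by positivity, ?_, s + 1, ?_⟩
      · gcongr
        exact_mod_cast hNs
      · rw [hs]
        push_cast
        field_simp
        ring
  refine ⟨fun i => 1 / 2 + (a i).sign * δ, fun i => ?_, q - r, ?_⟩
  · rw [add_sub_cancel_left, abs_mul, abs_of_nonneg hδ0]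
    refine (mul_le_of_le_one_left hδ0 ?_).trans hδN
    rcases Int.sign_trichotomy (a i) with h | h | h <;> simp [h]
  · calc ∑ i, (a i : ℝ) * (1 / 2 + (a i).sign * δ)
        = (∑ i, |a i| : ℤ) * (1 / 2 + δ) - (∑ i, |a i| - ∑ i, a i : ℤ) / 2 := by
          simp_rw [← Int.sign_mul_self_eq_abs]
          push_cast
          rw [Finset.sum_mul, ← Finset.sum_sub_distrib, Finset.sum_div, ← Finset.sum_sub_distrib]
          exact Finset.sum_congr rfl fun i _ => by ring
      _ = (q - r : ℤ) := by
          rw [hq, hr]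
          push_cast
          ring

variable {n : ℕ} {a v : Fin n → ℤ} {t d : ℝ}

lemma exists_offset_of_dist_le (h : dist (linePoint v t) (halfPoint n) ≤ d) :
    ∃ (m : Fin n → ℤ) (y : Fin n → ℝ), (∀ i, t * v i = m i + 1 / 2 + y i) ∧ ∀ i, |y i| ≤ d := by
  have hcoord (i : Fin n) := dist_coe_le_iff.mp ((dist_le_pi_dist _ _ i).trans h)
  choose m hm using hcoord
  exact ⟨m, fun i => t * v i - 1 / 2 - m i, fun i => by ring, hm⟩

lemma exists_sum_offset_eq_add_half (hav : a ⬝ᵥ v = 0) (hodd : Odd (∑ i, |a i|))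
    {m : Fin n → ℤ} {y : Fin n → ℝ} (hy : ∀ i, t * v i = m i + 1 / 2 + y i) :
    ∃ q : ℤ, ∑ i, a i * y i = q + 1 / 2 := by
  obtain ⟨r, hr⟩ := even_sum_abs_sub_sum a
  obtain ⟨s, hs⟩ := hodd
  refine ⟨-(a ⬝ᵥ m) - (s - r) - 1, ?_⟩
  have hsum : (∑ i, a i : ℝ) = 2 * (s - r) + 1 := by
    exact_mod_cast (by linarith : ∑ i, a i = 2 * (s - r) + 1)
  calc ∑ i, a i * y i = t * ∑ i, (a i : ℝ) * v i - ∑ i, (a i : ℝ) * m i - (∑ i, (a i : ℝ)) / 2 := by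
        rw [Finset.mul_sum, Finset.sum_div, ← Finset.sum_sub_distrib, ← Finset.sum_sub_distrib]
        exact Finset.sum_congr rfl fun i _ => by linear_combination -(a i : ℝ) * hy i
    _ = _ := by
        have hav : ∑ i, (a i : ℝ) * v i = 0 := by exact_mod_cast hav
        rw [hsum, hav, dotProduct]
        push_cast
        ring

lemma abs_sum_mul_le {ι : Type*} [Fintype ι] {a : ι → ℤ} {y : ι → ℝ} (hy : ∀ i, |y i| ≤ d) :
    |∑ i, a i * y i| ≤ (∑ i, |a i| : ℤ) * d := by
  push_cast
  rw [Finset.sum_mul]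
  refine (Finset.abs_sum_le_sum_abs _ _).trans (Finset.sum_le_sum fun i _ => ?_)
  rw [abs_mul]
  gcongr
  exact hy i

lemma half_le_sum_abs_mul_DVal (hav : a ⬝ᵥ v = 0) (hodd : Odd (∑ i, |a i|)) :
    1 / 2 ≤ (∑ i, |a i| : ℤ) * DVal (lineTorus v) := by
  obtain ⟨t, ht⟩ := exists_dist_eq_DVal v
  obtain ⟨m, y, hy, hyd⟩ := exists_offset_of_dist_le ht.le
  obtain ⟨q, hq⟩ := exists_sum_offset_eq_add_half hav hodd hy
  refine le_trans ?_ (abs_sum_mul_le hyd)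
  rw [hq]
  rcases le_or_gt 0 q with h | h
  · have : (0 : ℝ) ≤ q := Int.cast_nonneg h
    exact (by linarith : (1 / 2 : ℝ) ≤ q + 1 / 2).trans (le_abs_self _)
  · have : (q : ℝ) ≤ -1 := by exact_mod_cast (by omega : q ≤ -1)
    exact (by linarith : (1 / 2 : ℝ) ≤ -(q + 1 / 2)).trans (neg_le_abs _)

/-- The sum of offsets is `1/2` modulo `1`, and too small to be anything but `±1/2`; negating the
point flips its sign. -/
lemma exists_offset_sum_eq_half (hav : a ⬝ᵥ v = 0) (hodd : Odd (∑ i, |a i|))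
    (hd : (∑ i, |a i| : ℤ) * d < 3 / 2) (ht : dist (linePoint v t) (halfPoint n) ≤ d) :
    ∃ (t : ℝ) (m : Fin n → ℤ) (y : Fin n → ℝ), (∀ i, t * v i = m i + 1 / 2 + y i) ∧
      (∀ i, |y i| ≤ d) ∧ ∑ i, a i * y i = 1 / 2 := by
  obtain ⟨m, y, hy, hyd⟩ := exists_offset_of_dist_le ht
  obtain ⟨q, hq⟩ := exists_sum_offset_eq_add_half hav hodd hy
  have hlt := abs_lt.mp ((abs_sum_mul_le hyd).trans_lt hd)
  rw [hq] at hlt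
  have hq0 : q < 1 := by exact_mod_cast (by linarith : (q : ℝ) < 1)
  have hq1 : -2 < q := by exact_mod_cast (by linarith : (-2 : ℝ) < q)
  obtain rfl | rfl : q = 0 ∨ q = -1 := by omega
  · exact ⟨t, m, y, hy, hyd, by simpa using hq⟩
  · refine ⟨-t, -1 - m, -y, fun i => ?_, fun i => ?_, ?_⟩
    · simp only [Pi.sub_apply, Pi.neg_apply, Pi.one_apply]
      push_cast
      linear_combination -hy i
    · simpa using hyd i
    · simp only [Pi.neg_apply, mul_neg, Finset.sum_neg_distrib, hq]
      norm_num

end Relations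

section CrossProduct

open scoped Matrix

lemma eq_smul_of_cross_eq_zero {R : Type*} [CommRing R] {e v w : Fin 3 → R} (he : e ⬝ᵥ v = 1)
    (h : v ⨯₃ w = 0) : w = (e ⬝ᵥ w) • v := by
  have := cross_cross_eq_smul_sub_smul' e v w
  rw [h, map_zero, dotProduct_comm v e, he, one_smul] at this
  exact (sub_eq_zero.mp this.symm).symm

lemma eq_smul_cross_of_dotProduct_eq_zero {R : Type*} [CommRing R] {e a b w : Fin 3 → R}
    (he : e ⬝ᵥ a ⨯₃ b = 1) (ha : a ⬝ᵥ w = 0) (hb : b ⬝ᵥ w = 0) : w = (e ⬝ᵥ w) • a ⨯₃ b :=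
  eq_smul_of_cross_eq_zero he <| by
    rw [cross_cross_eq_smul_sub_smul, ha, hb, zero_smul, zero_smul, sub_zero]

lemma exists_dotProduct_eq {R : Type*} [CommRing R] {a b c e : Fin 3 → R} (hac : a ⬝ᵥ c = 1)
    (hbc : b ⬝ᵥ c = 0) (he : e ⬝ᵥ a ⨯₃ b = 1) (p q : R) : ∃ m, a ⬝ᵥ m = p ∧ b ⬝ᵥ m = q := by
  refine ⟨p • c + q • e ⨯₃ a, ?_, ?_⟩
  · rw [dotProduct_add, dotProduct_smul, dotProduct_smul, hac, dot_cross_self, smul_zero, add_zero,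
      smul_eq_mul, mul_one]
  · rw [dotProduct_add, dotProduct_smul, dotProduct_smul, hbc, triple_product_permutation, he,
      smul_zero, zero_add, smul_eq_mul, mul_one]

variable {a b v : Fin 3 → ℤ}

lemma IsPrimitive.exists_cross_eq_smul (hv : IsPrimitive v) (ha : a ⬝ᵥ v = 0) (hb : b ⬝ᵥ v = 0) :
    ∃ g : ℤ, a ⨯₃ b = g • v := by
  obtain ⟨e, he⟩ := hv
  refine ⟨_, eq_smul_of_cross_eq_zero he ?_⟩
  rw [cross_cross_eq_smul_sub_smul', dotProduct_comm v b, hb, ha, zero_smul, zero_smul, sub_zero]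

lemma abs_cross_apply_le {K : ℤ} (ha : ∀ i, |a i| ≤ K) (hb : ∀ i, |b i| ≤ K) (i : Fin 3) :
    |(a ⨯₃ b) i| ≤ 2 * K ^ 2 := by
  have hprod (j k : Fin 3) : |a j * b k| ≤ K ^ 2 := by
    rw [abs_mul, sq]
    exact mul_le_mul (ha j) (hb k) (abs_nonneg _) ((abs_nonneg _).trans (ha j))
  have hsub (j k l m : Fin 3) : |a j * b k - a l * b m| ≤ 2 * K ^ 2 :=
    (abs_sub _ _).trans (by linarith [hprod j k, hprod l m])
  fin_cases i <;> simp [cross_apply, hsub]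

/-- Two independent small relations determine `v` up to sign as a divisor of their cross product;
otherwise all small relations are multiples of a single primitive one. -/
lemma IsPrimitive.abs_le_or_exists_relation (hv : IsPrimitive v) (hv0 : v 0 ≠ 0) (K : ℤ) :
    (∀ i, |v i| ≤ 2 * K ^ 2) ∨ ∃ a, IsPrimitive a ∧ a ⬝ᵥ v = 0 ∧
      ∀ b, b ⬝ᵥ v = 0 → (∀ i, |b i| ≤ K) → ∃ q : ℤ, b = q • a := by
  have hreduce {u : Fin 3 → ℤ} (hu : u ≠ 0) (huv : u ⬝ᵥ v = 0) :
      ∃ g : ℤ, g ≠ 0 ∧ ∃ a, IsPrimitive a ∧ a ⬝ᵥ v = 0 ∧ u = g • a := by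
    obtain ⟨g, hg, a, ha, rfl⟩ := exists_smul_isPrimitive hu
    rw [smul_dotProduct, smul_eq_mul] at huv
    exact ⟨g, hg, a, ha, (mul_eq_zero.mp huv).resolve_left hg, rfl⟩
  by_cases hsmall : ∃ u, u ≠ 0 ∧ u ⬝ᵥ v = 0 ∧ ∀ i, |u i| ≤ K
  · obtain ⟨u, hu, huv, huK⟩ := hsmall
    obtain ⟨g, hg, a, ⟨c, hc⟩, hav, rfl⟩ := hreduce hu huv
    refine or_iff_not_imp_right.mpr fun hne i => ?_
    push Not at hne
    obtain ⟨b, hbv, hbK, hb⟩ := hne a ⟨c, hc⟩ hav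
    obtain ⟨h, hh⟩ := hv.exists_cross_eq_smul huv hbv
    have hh0 : h ≠ 0 := by
      rintro rfl
      rw [map_smul, LinearMap.smul_apply, zero_smul] at hh
      exact hb _ (eq_smul_of_cross_eq_zero hc ((smul_eq_zero.mp hh).resolve_left hg))
    calc |v i| ≤ |h| * |v i| := le_mul_of_one_le_left (abs_nonneg _) (Int.one_le_abs hh0)
      _ = |((g • a) ⨯₃ b) i| := by rw [hh, Pi.smul_apply, smul_eq_mul, abs_mul]
      _ ≤ 2 * K ^ 2 := abs_cross_apply_le huK hbK i
  · obtain ⟨-, -, a, ha, hav, -⟩ := hreduce (u := ![-v 1, v 0, 0])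
      (fun h => hv0 (congrFun h 1)) (by simp [dotProduct, Fin.sum_univ_three]; ring)
    push Not at hsmall
    refine Or.inr ⟨a, ha, hav, fun b hbv hbK => ⟨0, ?_⟩⟩
    by_contra hb
    obtain ⟨i, hi⟩ := hsmall b (by simpa using hb) hbv
    exact (hbK i).not_gt hi

/-- In a Bézout basis `a, b` of the relations of `v`, the two relations cut out the line modulo
integer points. -/
lemma IsPrimitive.exists_relation_forall_exists_eq_add_intCast (hv : IsPrimitive v)
    (ha : IsPrimitive a) (hav : a ⬝ᵥ v = 0) :
    ∃ b, b ⬝ᵥ v = 0 ∧ ∀ x : Fin 3 → ℝ, (∃ p : ℤ, ∑ i, a i * x i = p) →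
      (∃ q : ℤ, ∑ i, b i * x i = q) → ∃ (t : ℝ) (m : Fin 3 → ℤ), ∀ i, t * v i = x i + m i := by
  obtain ⟨e, he⟩ := hv
  obtain ⟨c, hc⟩ := ha
  have hcross : a ⨯₃ (v ⨯₃ c) = v := by
    rw [cross_cross_eq_smul_sub_smul', dotProduct_comm a c, hc, dotProduct_comm v a, hav, one_smul,
      zero_smul, sub_zero]
  refine ⟨v ⨯₃ c, by rw [dotProduct_comm, dot_self_cross], ?_⟩
  set b := v ⨯₃ c
  rintro x ⟨p, hp⟩ ⟨q, hq⟩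
  obtain ⟨m, ham, hbm⟩ := exists_dotProduct_eq (dotProduct_comm a c ▸ hc)
    (by rw [dotProduct_comm, dot_cross_self]) (hcross.symm ▸ he : e ⬝ᵥ a ⨯₃ b = 1) (-p) (-q)
  let cast (u : Fin 3 → ℤ) (i : Fin 3) : ℝ := u i
  have hdot (u w : Fin 3 → ℤ) : cast u ⬝ᵥ cast w = (u ⬝ᵥ w : ℤ) := by simp [cast, dotProduct]
  have hcast : cast a ⨯₃ cast b = cast v := by
    rw [← hcross]
    ext i
    fin_cases i <;> simp [cast, cross_apply]
  have hzero {u : Fin 3 → ℤ} {r : ℤ} (hx : ∑ i, u i * x i = r) (hm : u ⬝ᵥ m = -r) :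
      cast u ⬝ᵥ (x + cast m) = 0 := by
    rw [dotProduct_add, hdot, hm, Int.cast_neg]
    exact add_neg_eq_zero.mpr hx
  have hmem := eq_smul_cross_of_dotProduct_eq_zero (e := cast e)
    (by rw [hcast, hdot, he, Int.cast_one]) (hzero hp ham) (hzero hq hbm)
  rw [hcast] at hmem
  exact ⟨_, m, fun i => (congrFun hmem i).symm⟩

end CrossProduct

section Classification

open scoped Matrix

variable {a v : Fin 3 → ℤ} {l : ℝ}

lemma exists_bound_or_sum_abs_eq_five :
    ∃ N : ℤ, ∀ v : Fin 3 → ℤ, IsPrimitive v → v 0 ≠ 0 →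
      DVal (lineTorus v) ∈ Set.Ioo (1 / 10) (1 / 6) →
      (∀ i, |v i| ≤ N) ∨ ∃ a, IsPrimitive a ∧ a ⬝ᵥ v = 0 ∧ ∑ i, |a i| = 5 := by
  obtain ⟨K, hK⟩ := exists_forall_dist_le_of_forall_relation (Fin 3) (ε := 1 / 35) (by norm_num)
  refine ⟨2 * K ^ 2, fun v hv hv0 ⟨hD1, hD2⟩ => ?_⟩
  refine (hv.abs_le_or_exists_relation hv0 K).imp_right fun ⟨a, ha, hav, hsmall⟩ => ⟨a, ha, hav, ?_⟩
  have hfar : ¬ (Even (∑ i, |a i|) ∨ 7 ≤ ∑ i, |a i|) := fun hparity => by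
    obtain ⟨w, hw, q, hq⟩ := exists_sum_eq_intCast_of_abs_sub_half_le (by norm_num) hparity
    obtain ⟨t, ht⟩ := hK v w fun b hb hbv => by
      obtain ⟨r, rfl⟩ := hsmall b hbv hb
      exact ⟨r * q, by push_cast [Pi.smul_apply, smul_eq_mul, ← hq, Finset.mul_sum, mul_assoc]; rfl⟩
    refine hD1.not_ge ((DVal_lineTorus_le v t).trans ?_)
    refine (dist_pi_le_iff (by norm_num)).mpr fun i => ?_
    calc dist (linePoint v t i) (halfPoint 3 i)
        ≤ dist (linePoint v t i) (w i) + dist (w i : AddCircle (1 : ℝ)) (halfPoint 3 i) :=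
          dist_triangle _ _ _
      _ ≤ 1 / 35 + 1 / 14 := by
          refine add_le_add (ht i) (dist_coe_le_iff.mpr ⟨0, ?_⟩)
          have := hw i
          norm_num at this ⊢
          exact this
      _ = 1 / 10 := by norm_num
  push Not at hfar
  obtain ⟨hodd, hlt⟩ := hfar
  have hhalf := half_le_sum_abs_mul_DVal hav (Int.not_even_iff_odd.mp hodd)
  have hnonneg : 0 ≤ ∑ i, |a i| := Finset.sum_nonneg fun i _ => abs_nonneg _
  generalize ∑ i, |a i| = s at *
  interval_cases s <;> first | rfl | exact absurd (by decide) hodd | (norm_num at hhalf; linarith)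

lemma one_sub_mul_le_of_sum_mul_eq_zero {ι : Type*} [Fintype ι] {c u : ι → ℝ} {s : ℝ}
    (hc : ∀ i, 0 ≤ c i) (hs : ∑ i, c i = s) (hcu : ∑ i, c i * u i = 0) (hu : ∀ i, u i ≤ l) {i : ι}
    (hi : 1 ≤ c i) : (1 - s) * l ≤ u i := by
  have hterm : c i * (l - u i) ≤ ∑ j, c j * (l - u j) :=
    Finset.single_le_sum (f := fun j => c j * (l - u j))
      (fun j _ => mul_nonneg (hc j) (sub_nonneg.mpr (hu j))) (Finset.mem_univ i)
  simp_rw [mul_sub, Finset.sum_sub_distrib, hcu, ← Finset.sum_mul, hs, ← mul_sub] at hterm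
  nlinarith [hu i]

lemma exists_signed_offset {ι : Type*} [Fintype ι] {a : ι → ℤ} (h5 : ∑ i, |a i| = 5)
    (hl0 : 0 < l) (hl : l < 1 / 15)
    {y : ι → ℝ} (hy : ∀ i, |y i| ≤ 1 / 10 + l) (hsum : ∑ i, a i * y i = 1 / 2) :
    ∃ (σ : ι → ℤ) (u : ι → ℝ), (∀ i, |σ i| = 1) ∧ (∀ i, a i = σ i * |a i|) ∧
      (∀ i, y i = σ i * (1 / 10 + u i)) ∧ ∑ i, |a i| * u i = 0 ∧ (∀ i, u i ≤ l) ∧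
      ∀ i, -(1 / 5 + l) < u i := by
  have hsign (i : ι) : ∃ s : ℤ, |s| = 1 ∧ a i = s * |a i| ∧ (a i = 0 → 0 ≤ s * y i) := by
    rcases lt_trichotomy (a i) 0 with h | h | h
    · exact ⟨-1, rfl, by rw [abs_of_neg h]; ring, fun h0 => absurd h0 h.ne⟩
    · rcases le_total 0 (y i) with hyi | hyi
      · exact ⟨1, rfl, by simp [h], fun _ => by simpa⟩
      · exact ⟨-1, rfl, by simp [h], fun _ => by simpa⟩
    · exact ⟨1, rfl, by rw [abs_of_pos h]; ring, fun h0 => absurd h0 h.ne'⟩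
  choose σ hσ haσ hσy using hsign
  have hσR (i : ι) : |(σ i : ℝ)| = 1 := by exact_mod_cast hσ i
  have hσ2 (i : ι) : (σ i : ℝ) * σ i = 1 := by rw [← abs_mul_abs_self, hσR, mul_one]
  have haσR (i : ι) : (a i : ℝ) = σ i * |(a i : ℝ)| := by exact_mod_cast haσ i
  have h5R : ∑ i, |(a i : ℝ)| = 5 := by exact_mod_cast h5
  let u i := σ i * y i - 1 / 10
  have hu (i : ι) : u i ≤ l := by
    have : σ i * y i ≤ |y i| := (le_abs_self _).trans_eq (by rw [abs_mul, hσR, one_mul])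
    linarith [hy i, show u i = σ i * y i - 1 / 10 from rfl]
  have husum : ∑ i, |(a i : ℝ)| * u i = 0 := by
    calc ∑ i, |(a i : ℝ)| * u i = ∑ i, a i * y i - (∑ i, |(a i : ℝ)|) / 10 := by
          rw [Finset.sum_div, ← Finset.sum_sub_distrib]
          refine Finset.sum_congr rfl fun i _ => ?_
          rw [haσR i, abs_mul, hσR, abs_abs]
          ring
      _ = 0 := by rw [hsum, h5R]; norm_num
  refine ⟨σ, u, hσ, haσ, fun i => by linear_combination -(y i) * hσ2 i, by exact_mod_cast husum,
    hu, fun i => ?_⟩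
  rcases eq_or_ne (a i) 0 with h | h
  · linarith [hσy i h, show u i = σ i * y i - 1 / 10 from rfl]
  · have := one_sub_mul_le_of_sum_mul_eq_zero (fun i => abs_nonneg (a i : ℝ)) h5R husum hu
      (i := i) (by exact_mod_cast Int.one_le_abs h)
    linarith

lemma exists_forall_ne_of_forall_exists_ne {P : Fin 3 → Prop} (h : ∀ k, ∃ i ≠ k, P i) :
    ∃ k, ∀ i ≠ k, P i := by
  have hthird : ∀ i j : Fin 3, j ≠ i → ∃ k, ∀ x ≠ k, x = i ∨ x = j := by decide
  obtain ⟨i, -, hi⟩ := h 0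
  obtain ⟨j, hji, hj⟩ := h i
  obtain ⟨k, hk⟩ := hthird i j hji
  exact ⟨k, fun x hx => by rcases hk x hx with rfl | rfl <;> assumption⟩

lemma exists_extremal_offset (hv : ∀ i, v i ≠ 0) (hav : a ⬝ᵥ v = 0) (h5 : ∑ i, |a i| = 5)
    (hl0 : 0 < l) (hl : l < 1 / 15) (hD : DVal (lineTorus v) = 1 / 10 + l) :
    ∃ (t : ℝ) (m σ : Fin 3 → ℤ) (u : Fin 3 → ℝ) (k : Fin 3), (∀ i, |σ i| = 1) ∧
      (∀ i, a i = σ i * |a i|) ∧ (∀ i, t * v i = m i + 1 / 2 + σ i * (1 / 10 + u i)) ∧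
      ∑ i, |a i| * u i = 0 ∧ |1 / 10 + u k| ≤ 1 / 10 + l ∧ ∀ i ≠ k, u i = l := by
  obtain ⟨t₀, ht₀⟩ := exists_dist_eq_DVal v
  obtain ⟨t, m, y, hty, hy, hsum⟩ := exists_offset_sum_eq_half hav (by rw [h5]; decide)
    (by rw [h5, hD]; push_cast; linarith) ht₀.le
  rw [hD] at hy
  obtain ⟨σ, u, hσ, haσ, hyu, hau, hul, hlu⟩ := exists_signed_offset h5 hl0 hl hy hsum
  have hyabs (i : Fin 3) : |y i| = |1 / 10 + u i| := by
    have : |(σ i : ℝ)| = 1 := by exact_mod_cast hσ i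
    rw [hyu, abs_mul, this, one_mul]
  have hattained (k : Fin 3) : ∃ i ≠ k, u i = l := by
    by_contra! hne
    refine (hy k).not_gt (hD ▸ DVal_lt_abs_offset (hv k) (by linarith) hty fun i hi => ?_)
    rw [hD, hyabs, abs_lt]
    exact ⟨by linarith [hlu i], by linarith [(hul i).lt_of_ne (hne i hi)]⟩
  obtain ⟨k, hk⟩ := exists_forall_ne_of_forall_exists_ne hattained
  exact ⟨t, m, σ, u, k, hσ, haσ, fun i => by rw [hty, hyu], hau, hyabs k ▸ hy k, hk⟩

lemma sum_mul_scaled_offset {n : ℕ} {e v m σ : Fin n → ℤ} {u : Fin n → ℝ} {t : ℝ}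
    (hev : e ⬝ᵥ v = 0) (ht : ∀ i, t * v i = m i + 1 / 2 + σ i * (1 / 10 + u i)) (r : ℝ) :
    ∑ i, e i * (1 / 2 + σ i * (1 / 10 + r * u i)) =
      (-(e ⬝ᵥ m) : ℤ) + (r - 1) * ∑ i, (σ i * e i : ℤ) * u i := by
  have hev : ∑ i, (e i : ℝ) * v i = 0 := by exact_mod_cast hev
  calc ∑ i, e i * (1 / 2 + σ i * (1 / 10 + r * u i))
      = t * ∑ i, (e i : ℝ) * v i - ∑ i, (e i : ℝ) * m i +
          (r - 1) * ∑ i, (σ i * e i : ℤ) * u i := by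
        simp_rw [Finset.mul_sum, ← Finset.sum_sub_distrib, ← Finset.sum_add_distrib]
        refine Finset.sum_congr rfl fun i _ => ?_
        push_cast
        linear_combination -(e i : ℝ) * ht i
    _ = _ := by
        rw [hev, dotProduct]
        push_cast
        ring

lemma exists_int_eq_five_mul_sum {n : ℕ} {e v m σ : Fin n → ℤ} {u : Fin n → ℝ} {t : ℝ}
    (hev : e ⬝ᵥ v = 0) (hσ : ∀ i, |σ i| = 1)
    (ht : ∀ i, t * v i = m i + 1 / 2 + σ i * (1 / 10 + u i)) :
    ∃ κ : ℤ, κ = 5 * ∑ i, (σ i * e i : ℤ) * u i ∧ 5 ∣ κ - 2 * ∑ i, σ i * e i := by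
  obtain ⟨j, hj⟩ := even_sum_mul_sub_sum hσ e
  have hj : ∑ i, σ i * e i = ∑ i, e i + 2 * j := by linarith
  refine ⟨-5 * e ⬝ᵥ m - 3 * ∑ i, e i - j, ?_, -(e ⬝ᵥ m) - ∑ i, e i - j, by rw [hj]; ring⟩
  have hsum : ∑ i, (e i : ℝ) * (1 / 2 + σ i * (1 / 10 + 0 * u i)) =
      (∑ i, e i : ℤ) / 2 + (∑ i, σ i * e i : ℤ) / 10 := by
    push_cast
    rw [Finset.sum_div, Finset.sum_div, ← Finset.sum_add_distrib]
    exact Finset.sum_congr rfl fun i _ => by ring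
  rw [sum_mul_scaled_offset hev ht, hj] at hsum
  push_cast at hsum ⊢
  linarith

/-- Scaling `u` by `r` preserves the relation `a`, and changes the value of the second relation by
`(r - 1) κ / 5`. -/
lemma exists_forall_scaled_offset (hv : IsPrimitive v) (ha : IsPrimitive a) (hav : a ⬝ᵥ v = 0)
    {t : ℝ} {m σ : Fin 3 → ℤ} {u : Fin 3 → ℝ} (hσ : ∀ i, |σ i| = 1)
    (haσ : ∀ i, a i = σ i * |a i|) (ht : ∀ i, t * v i = m i + 1 / 2 + σ i * (1 / 10 + u i))
    (hau : ∑ i, |a i| * u i = 0) :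
    ∃ (c : Fin 3 → ℤ) (κ : ℤ), κ = 5 * ∑ i, c i * u i ∧ 5 ∣ κ - 2 * ∑ i, c i ∧
      ∀ r : ℝ, (∃ q : ℤ, (r - 1) * κ = 5 * q) →
        ∃ (t : ℝ) (m : Fin 3 → ℤ), ∀ i, t * v i = m i + 1 / 2 + σ i * (1 / 10 + r * u i) := by
  obtain ⟨b, hbv, hline⟩ := hv.exists_relation_forall_exists_eq_add_intCast ha hav
  obtain ⟨κ, hκ, hdvd⟩ := exists_int_eq_five_mul_sum hbv hσ ht
  refine ⟨fun i => σ i * b i, κ, hκ, hdvd, fun r ⟨q, hq⟩ => ?_⟩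
  have hσa (i : Fin 3) : σ i * a i = |a i| := by
    rw [haσ i, ← mul_assoc, ← abs_mul_abs_self, hσ, abs_mul, hσ, abs_abs, one_mul, one_mul]
  have hb : (r - 1) * ∑ i, (σ i * b i : ℤ) * u i = q := by
    rw [hκ] at hq
    linarith
  obtain ⟨t', m', h⟩ := hline (fun i => 1 / 2 + σ i * (1 / 10 + r * u i))
    ⟨-(a ⬝ᵥ m), by simp_rw [sum_mul_scaled_offset hav ht, hσa, hau, mul_zero, add_zero]⟩
    ⟨-(b ⬝ᵥ m) + q, by rw [sum_mul_scaled_offset hbv ht, hb, Int.cast_add]⟩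
  exact ⟨t', m', fun i => by rw [h]; ring⟩

lemma sum_mul_eq_of_forall_ne {ι : Type*} [Fintype ι] (c : ι → ℝ) {u : ι → ℝ} {k : ι}
    (hu : ∀ i ≠ k, u i = l) : ∑ i, c i * u i = (∑ i, c i) * l + c k * (u k - l) := by
  have hsingle : ∑ i, c i * (u i - l) = c k * (u k - l) :=
    Finset.sum_eq_single k (fun i _ hi => by rw [hu i hi, sub_self, mul_zero])
      fun hk => absurd (Finset.mem_univ k) hk
  rw [← hsingle, Finset.sum_mul, ← Finset.sum_add_distrib]
  exact Finset.sum_congr rfl fun i _ => by ring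

lemma lt_abs_of_scaled_offset (hv : ∀ i, v i ≠ 0) (hl0 : 0 < l) (hl : l < 1 / 15)
    (hD : DVal (lineTorus v) = 1 / 10 + l) {t r : ℝ} {m σ : Fin 3 → ℤ} (hσ : ∀ i, |σ i| = 1)
    {u : Fin 3 → ℝ} {k : Fin 3} (hu : ∀ i ≠ k, u i = l) (hr : r ∈ Set.Ico (-4) 1)
    (ht : ∀ i, t * v i = m i + 1 / 2 + σ i * (1 / 10 + r * u i)) :
    1 / 10 + l < |1 / 10 + r * u k| := by
  have habs (i : Fin 3) : |(σ i : ℝ) * (1 / 10 + r * u i)| = |1 / 10 + r * u i| := by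
    have : |(σ i : ℝ)| = 1 := by exact_mod_cast hσ i
    rw [abs_mul, this, one_mul]
  have := DVal_lt_abs_offset (hv k) (by linarith) ht fun i hi => by
    rw [habs, hu i hi, hD, abs_lt]
    constructor <;> nlinarith [hr.1, hr.2]
  rwa [habs, hD] at this

lemma exists_abs_mul_eq_abs_sub_five {κ : ℤ} (hκ : κ ≠ 0) :
    ∃ r : ℝ, (|κ| : ℤ) * r = (|κ| : ℤ) - 5 ∧ ∃ q : ℤ, (r - 1) * κ = 5 * q := by
  have hκR : (κ : ℝ) ≠ 0 := by exact_mod_cast hκ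
  have hsign : (κ.sign : ℝ) * (|κ| : ℤ) = κ := by exact_mod_cast Int.sign_mul_abs κ
  refine ⟨1 - 5 * κ.sign / κ, ?_, -κ.sign, by push_cast; field_simp; ring⟩
  have habs : ((|κ| : ℤ) : ℝ) * κ.sign = κ := by rw [mul_comm, hsign]
  field_simp
  linear_combination -5 * habs

/-- The scaling `r = 1 - 5 / |κ|` is admissible, and keeps the offset `w` within the bound unless
`|κ| + α < 5`. -/
lemma abs_add_lt_five_of_forall_lt_abs {w : ℝ} {α κ : ℤ} (hl0 : 0 < l) (hα0 : 0 ≤ α) (hα5 : α ≤ 5)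
    (hαw : α * w = -((5 - α) * l)) (hw : |1 / 10 + w| ≤ 1 / 10 + l)
    (h : ∀ r ∈ Set.Ico (-4 : ℝ) 1, (∃ q : ℤ, (r - 1) * κ = 5 * q) →
      1 / 10 + l < |1 / 10 + r * w|) :
    κ ≠ 0 ∧ |κ| + α < 5 := by
  have hconvex {r : ℝ} (hr : r ∈ Set.Ico 0 1) : |1 / 10 + r * w| ≤ 1 / 10 + l := by
    have := abs_le.mp hw
    rw [abs_le]
    constructor <;> nlinarith [hr.1, hr.2]
  have hκ : κ ≠ 0 := by
    rintro rfl
    exact (hconvex (r := 0) (by simp)).not_gt (h 0 (by norm_num) ⟨0, by simp⟩)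
  refine ⟨hκ, ?_⟩
  by_contra! hge
  obtain ⟨r, hr, hint⟩ := exists_abs_mul_eq_abs_sub_five hκ
  have hK1 : (1 : ℝ) ≤ (|κ| : ℤ) := by exact_mod_cast Int.one_le_abs hκ
  have hKα : (5 : ℝ) ≤ (|κ| : ℤ) + α := by exact_mod_cast hge
  have hα0 : (0 : ℝ) ≤ α := by exact_mod_cast hα0
  have hα5 : (α : ℝ) ≤ 5 := by exact_mod_cast hα5
  generalize ((|κ| : ℤ) : ℝ) = K at *
  have hr1 : r < 1 := by nlinarith
  refine (h r ⟨by nlinarith, hr1⟩ hint).not_ge ?_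
  rcases le_or_gt 0 r with hr0 | hr0
  · exact hconvex ⟨hr0, hr1⟩
  have hα : 0 < (α : ℝ) := hα0.lt_of_ne fun h0 => by rw [← h0] at hαw; linarith
  have hrw0 : 0 ≤ r * w := mul_nonneg_of_nonpos_of_nonpos hr0.le (by nlinarith)
  have hrwl : r * w ≤ l := by
    refine le_of_mul_le_mul_left ?_ (by positivity : 0 < K * α)
    calc K * α * (r * w) = (5 - K) * (5 - α) * l := by
          linear_combination K * r * hαw - (5 - α) * l * hr
      _ ≤ K * α * l := by nlinarith
  rw [abs_of_nonneg (by positivity)]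
  linarith

lemma exists_mul_eq_of_DVal_eq (hv : IsPrimitive v) (hv0 : ∀ i, v i ≠ 0) (ha : IsPrimitive a)
    (hav : a ⬝ᵥ v = 0) (h5 : ∑ i, |a i| = 5) (hl0 : 0 < l) (hl : l < 1 / 15)
    (hD : DVal (lineTorus v) = 1 / 10 + l) :
    ∃ α κ s b : ℤ, 0 < α ∧ κ ≠ 0 ∧ |κ| + α < 5 ∧ 5 ∣ κ - 2 * s ∧
      α * κ = 5 * l * (α * s - 5 * b) := by
  obtain ⟨t, m, σ, u, k, hσ, haσ, ht, hau, huk, hu⟩ := exists_extremal_offset hv0 hav h5 hl0 hl hD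
  obtain ⟨c, κ, hκ, hdvd, hscale⟩ := exists_forall_scaled_offset hv ha hav hσ haσ ht hau
  have h5R : ∑ i, ((|a i| : ℤ) : ℝ) = 5 := by exact_mod_cast h5
  have hαu : (|a k| : ℤ) * u k = -((5 - (|a k| : ℤ)) * l) := by
    rw [sum_mul_eq_of_forall_ne _ hu, h5R] at hau
    linarith
  have hα0 : 0 ≤ |a k| := abs_nonneg _
  have hα5 : |a k| ≤ 5 :=
    h5 ▸ Finset.single_le_sum (fun i _ => abs_nonneg (a i)) (Finset.mem_univ k)
  obtain ⟨hκ0, hlt⟩ := abs_add_lt_five_of_forall_lt_abs hl0 hα0 hα5 hαu huk fun r hr hint => by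
    obtain ⟨t', m', ht'⟩ := hscale r hint
    exact lt_abs_of_scaled_offset hv0 hl0 hl hD hσ hu hr ht'
  have hα : 0 < |a k| := hα0.lt_of_ne fun h0 => by
    rw [← h0] at hαu
    push_cast at hαu
    linarith
  refine ⟨|a k|, κ, ∑ i, c i, c k, hα, hκ0, hlt, hdvd, ?_⟩
  rw [sum_mul_eq_of_forall_ne _ hu] at hκ
  push_cast at hκ hαu ⊢
  linear_combination |(a k : ℝ)| * hκ + 5 * c k * hαu

lemma exists_five_mul_eq_of_DVal_eq (hv : IsPrimitive v) (hv0 : ∀ i, v i ≠ 0) (ha : IsPrimitive a)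
    (hav : a ⬝ᵥ v = 0) (h5 : ∑ i, |a i| = 5) (hl0 : 0 < l) (hl : l < 1 / 15)
    (hD : DVal (lineTorus v) = 1 / 10 + l) :
    ∃ P A : ℤ, 0 < P ∧ P ≤ 4 ∧ 5 ∣ P - 2 * A ∧ 5 * l * A = P := by
  obtain ⟨α, κ, s, b, hα, hκ0, hlt, ⟨q, hq⟩, hακ⟩ :=
    exists_mul_eq_of_DVal_eq hv hv0 ha hav h5 hl0 hl hD
  have hsign : κ.sign * κ = |κ| := Int.sign_mul_self_eq_abs κ
  refine ⟨|κ| * α, κ.sign * (α * s - 5 * b), mul_pos (abs_pos.mpr hκ0) hα,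
    by nlinarith [sq_nonneg (|κ| - α), abs_nonneg κ], ?_, ?_⟩
  · exact ⟨κ.sign * (α * q + 2 * b), by linear_combination κ.sign * α * hq - α * hsign⟩
  · rw [← hsign]
    push_cast
    linear_combination -(κ.sign : ℝ) * hακ

end Classification

section Realization

/-- The two sequences decreasing to `1/10` that make up `𝒮₁(3) ∩ (1/10, 1/6]` except for finitely
many elements. -/
def spectrumProgressions : Set ℝ :=
  {x : ℝ | ∃ s : ℕ, x = 1/10 + 4/(5 * (5 * (s : ℝ) + 7))} ∪
    {x : ℝ | ∃ s : ℕ, x = 1/10 + 3/(5 * (5 * (s : ℝ) + 9))}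

lemma add_mem_spectrumProgressions {l : ℝ} {P A : ℤ} (hl0 : 0 < l) (hl : l < 1 / 15) (hP0 : 0 < P)
    (hP4 : P ≤ 4) (hdvd : 5 ∣ P - 2 * A) (hlA : 5 * l * A = P) :
    1 / 10 + l ∈ spectrumProgressions := by
  have hP0R : (0 : ℝ) < P := by exact_mod_cast hP0
  have hA0 : (0 : ℝ) < A := by nlinarith
  have hA : 3 * P < A := by
    have : (3 * P : ℝ) < A := by nlinarith
    exact_mod_cast this
  have hl_eq : l = P / (5 * A) := by
    field_simp
    linarith
  obtain rfl | hP3 := eq_or_ne P 3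
  · obtain ⟨s, hs⟩ : ∃ s : ℕ, A = 5 * s + 9 := ⟨((A - 9) / 5).toNat, by omega⟩
    have hs : (A : ℝ) = 5 * s + 9 := by exact_mod_cast hs
    exact .inr ⟨s, by rw [hl_eq, hs]; norm_num⟩
  · obtain ⟨s, hs⟩ : ∃ s : ℕ, 4 * A = P * (5 * s + 7) :=
      ⟨((4 * A / P - 7) / 5).toNat, by interval_cases P <;> omega⟩
    have hs : (4 * A : ℝ) = P * (5 * s + 7) := by exact_mod_cast hs
    refine .inl ⟨s, ?_⟩
    rw [hl_eq, add_right_inj, div_eq_div_iff (by positivity) (by positivity)]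
    linear_combination -5 * hs

variable {α κ r j : ℤ} {l : ℝ}

lemma DVal_lineTorus_le_add (hα0 : 0 < α) (hl0 : 0 ≤ l) (hl : l ≤ 1 / 15)
    (hαj : 5 ∣ α * j - 2) (hrj : 5 ∣ r * j - 3 - κ) (hlκ : 5 * l * (r + α) = κ * α) :
    DVal (lineTorus ![5 - α, -α, r]) ≤ 1 / 10 + l := by
  obtain ⟨p, hp⟩ := hαj
  obtain ⟨q, hq⟩ := hrj
  have hα1 : (1 : ℝ) ≤ α := by exact_mod_cast hα0
  have hp : (α * j - 2 : ℝ) = 5 * p := by exact_mod_cast hp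
  have hq : (r * j - 3 - κ : ℝ) = 5 * q := by exact_mod_cast hq
  obtain ⟨x, hx⟩ : ∃ x : ℝ, α * x = l := ⟨l / α, mul_div_cancel₀ _ (by positivity)⟩
  have hκ : 5 * (r + α) * x = κ :=
    mul_right_cancel₀ (by positivity : (α : ℝ) ≠ 0) (by rw [← hlκ, ← hx]; ring)
  have hx0 : 0 ≤ x := nonneg_of_mul_nonneg_right (hx ▸ hl0) (by positivity)
  have hxl : x ≤ l := by nlinarith
  let t : ℝ := j / 5 - x
  have h₀ : t * (5 - α) = (j - p - 1 : ℤ) + 1 / 2 + (1 / 10 + l - 5 * x) := by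
    push_cast
    linear_combination -hp / 5 + hx
  have h₁ : t * -α = (-p - 1 : ℤ) + 1 / 2 + (1 / 10 + l) := by
    push_cast
    linear_combination -hp / 5 + hx
  have h₂ : t * r = q + 1 / 2 + (1 / 10 + l) := by
    linear_combination hq / 5 - hκ / 5 + hx
  have habs₀ : |1 / 10 + l - 5 * x| ≤ 1 / 10 + l := abs_le.mpr ⟨by linarith, by linarith⟩
  have habs : |1 / 10 + l| ≤ 1 / 10 + l := (abs_of_nonneg (by positivity)).le
  refine (DVal_lineTorus_le _ t).trans ((dist_pi_le_iff (by positivity)).mpr fun i => ?_)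
  fin_cases i
  · exact (dist_linePoint_le_abs (m := j - p - 1) (by simpa using h₀)).trans habs₀
  · exact (dist_linePoint_le_abs (m := -p - 1) (by simpa using h₁)).trans habs
  · exact (dist_linePoint_le_abs (by simpa using h₂)).trans habs

lemma exists_eq_of_sum_offset_eq_half {t : ℝ} {m₀ m₁ : ℤ} {y₀ y₁ : ℝ} (hαj : 5 ∣ α * j - 2)
    (h₀ : t * (5 - α) = m₀ + 1 / 2 + y₀) (h₁ : t * -α = m₁ + 1 / 2 + y₁)
    (hy : α * y₀ + (5 - α) * y₁ = 1 / 2) :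
    ∃ (M : ℤ) (τ : ℝ), t = j / 5 + M + τ ∧ y₀ = 1 / 10 + (5 - α) * τ ∧ y₁ = 1 / 10 - α * τ := by
  have ht : t = (m₀ - m₁) / 5 + (y₀ - y₁) / 5 := by linarith
  have hmod : α * (m₀ - m₁) = -5 * m₁ - 3 := by
    have : (α * (m₀ - m₁) : ℝ) = -5 * m₁ - 3 := by linear_combination -5 * α * ht - 5 * h₁ - hy
    exact_mod_cast this
  obtain ⟨p, hp⟩ := hαj
  obtain ⟨M, hM⟩ : 5 ∣ m₀ - m₁ - j := by
    have hdvd : 5 ∣ 2 * (m₀ - m₁ - j) :=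
      ⟨j * (-m₁ - 1 - p) - p * (m₀ - m₁ - j), by
        linear_combination j * hmod - (m₀ - m₁) * hp⟩
    omega
  have hM : (m₀ - m₁ - j : ℝ) = 5 * M := by exact_mod_cast hM
  exact ⟨M, (y₀ - y₁) / 5, by linarith, by linear_combination hy / 5, by linear_combination hy / 5⟩

lemma exists_abs_le_DVal_lineTorus (hα0 : 0 < α) (hα5 : α < 5) (hαj : 5 ∣ α * j - 2)
    (hrj : 5 ∣ r * j - 3 - κ) (hD : DVal (lineTorus ![5 - α, -α, r]) < 3 / 10) :
    ∃ (τ : ℝ) (q : ℤ), |1 / 10 + (5 - α) * τ| ≤ DVal (lineTorus ![5 - α, -α, r]) ∧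
      |1 / 10 - α * τ| ≤ DVal (lineTorus ![5 - α, -α, r]) ∧
      |κ / 5 + 1 / 10 + r * τ - q| ≤ DVal (lineTorus ![5 - α, -α, r]) := by
  have hrel : ![α, 5 - α, 0] ⬝ᵥ ![5 - α, -α, r] = 0 := by
    simp only [dotProduct, Fin.sum_univ_three, Matrix.cons_val]
    ring
  have h5 : ∑ i, |![α, 5 - α, 0] i| = 5 := by
    simp [Fin.sum_univ_three, abs_of_pos hα0, abs_of_pos (sub_pos.mpr hα5)]
  obtain ⟨t₀, ht₀⟩ := exists_dist_eq_DVal ![5 - α, -α, r]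
  obtain ⟨t, m, y, hty, hy, hsum⟩ := exists_offset_sum_eq_half hrel (by rw [h5]; decide)
    (by rw [h5]; push_cast; linarith) ht₀.le
  have h₀ : t * (5 - α) = m 0 + 1 / 2 + y 0 := by simpa using hty 0
  have h₁ : t * -α = m 1 + 1 / 2 + y 1 := by simpa using hty 1
  have h₂ : t * r = m 2 + 1 / 2 + y 2 := by simpa using hty 2
  have hsum : α * y 0 + (5 - α) * y 1 = 1 / 2 := by simpa [Fin.sum_univ_three] using hsum
  obtain ⟨M, τ, rfl, hy0, hy1⟩ := exists_eq_of_sum_offset_eq_half hαj h₀ h₁ hsum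
  obtain ⟨q, hq⟩ := hrj
  have hq : (r * j - 3 - κ : ℝ) = 5 * q := by exact_mod_cast hq
  have hy2 : κ / 5 + 1 / 10 + r * τ - (m 2 - q - r * M : ℤ) = y 2 := by
    push_cast
    linear_combination h₂ - hq / 5
  exact ⟨τ, m 2 - q - r * M, hy0 ▸ hy 0, hy1 ▸ hy 1, hy2 ▸ hy 2⟩

lemma add_le_DVal_lineTorus (hα0 : 0 < α) (hα5 : α < 5) (hr : 0 < r) (hl : l ≤ 1 / 15)
    (hαj : 5 ∣ α * j - 2) (hrj : 5 ∣ r * j - 3 - κ) (hlκ : 5 * l * (r + α) = κ * α)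
    (hfar : 5 * l * (r + 5 - α) ≤ (4 - κ) * (5 - α)) :
    1 / 10 + l ≤ DVal (lineTorus ![5 - α, -α, r]) := by
  by_contra! hlt
  obtain ⟨τ, q, h₀, h₁, h₂⟩ := exists_abs_le_DVal_lineTorus hα0 hα5 hαj hrj (by linarith)
  have hα0 : (0 : ℝ) < α := by exact_mod_cast hα0
  have hα5 : (α : ℝ) < 5 := by exact_mod_cast hα5
  have hr : (0 : ℝ) < r := by exact_mod_cast hr
  have hτ0 : (5 - α) * τ < l := by linarith [(abs_le.mp h₀).2]
  have hτ1 : -l < α * τ := by linarith [(abs_le.mp h₁).2]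
  have hlow : 1 / 10 + l < κ / 5 + 1 / 10 + r * τ := by nlinarith
  have hupp : κ / 5 + 1 / 10 + r * τ < 9 / 10 - l := by nlinarith
  have hq0 : 0 < q := by exact_mod_cast (by linarith [(abs_le.mp h₂).2] : (0 : ℝ) < q)
  have hq1 : q < 1 := by exact_mod_cast (by linarith [(abs_le.mp h₂).1] : (q : ℝ) < 1)
  omega

lemma add_mem_Spec_inter_Ioc (hα0 : 0 < α) (hα5 : α < 5) (hr : 0 < r) (hl0 : 0 < l)
    (hl : l ≤ 1 / 15) (hαj : 5 ∣ α * j - 2) (hrj : 5 ∣ r * j - 3 - κ)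
    (hlκ : 5 * l * (r + α) = κ * α) (hfar : 5 * l * (r + 5 - α) ≤ (4 - κ) * (5 - α)) :
    1 / 10 + l ∈ Spec 1 3 ∩ Set.Ioc (1 / 10) (1 / 6) := by
  have hD : DVal (lineTorus ![5 - α, -α, r]) = 1 / 10 + l :=
    (DVal_lineTorus_le_add hα0 hl0.le hl hαj hrj hlκ).antisymm
      (add_le_DVal_lineTorus hα0 hα5 hr hl hαj hrj hlκ hfar)
  refine ⟨hD ▸ DVal_lineTorus_mem_Spec fun i => ?_, by linarith, by linarith⟩
  fin_cases i
  exacts [(sub_pos.mpr hα5).ne', (neg_neg_of_pos hα0).ne, hr.ne']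

lemma four_div_mem_Spec_inter_Ioc {s : ℕ} (hs : 1 ≤ s) :
    (1 / 10 + 4 / (5 * (5 * s + 7)) : ℝ) ∈ Spec 1 3 ∩ Set.Ioc (1 / 10) (1 / 6) := by
  have hs : (1 : ℝ) ≤ s := by exact_mod_cast hs
  refine add_mem_Spec_inter_Ioc (α := 2) (κ := 2) (r := 5 * s + 5) (j := 1) (by norm_num)
    (by norm_num) (by omega) (by positivity) ?_ (by norm_num) ⟨s, by ring⟩ ?_ ?_
  · rw [div_le_div_iff₀ (by positivity) (by positivity)]
    linarith
  · push_cast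
    field_simp
    ring
  · push_cast
    field_simp
    linarith

lemma three_div_mem_Spec_inter_Ioc (s : ℕ) :
    (1 / 10 + 3 / (5 * (5 * s + 9)) : ℝ) ∈ Spec 1 3 ∩ Set.Ioc (1 / 10) (1 / 6) := by
  have : (0 : ℝ) ≤ s := Nat.cast_nonneg s
  refine add_mem_Spec_inter_Ioc (α := 1) (κ := 3) (r := 5 * s + 8) (j := 2) (by norm_num)
    (by norm_num) (by omega) (by positivity) ?_ (by norm_num) ⟨2 * s + 2, by ring⟩ ?_ ?_
  · rw [div_le_div_iff₀ (by positivity) (by positivity)]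
    linarith
  · push_cast
    field_simp
    ring
  · push_cast
    field_simp
    linarith

end Realization

lemma finite_Spec_diff_spectrumProgressions :
    ((Spec 1 3 ∩ Set.Ioc (1 / 10) (1 / 6)) \ spectrumProgressions).Finite := by
  obtain ⟨N, hN⟩ := exists_bound_or_sum_abs_eq_five
  have hbox : {v : Fin 3 → ℤ | ∀ i, |v i| ≤ N}.Finite :=
    (Set.finite_Icc (fun _ => -N) (fun _ => N)).subset fun v hv =>
      ⟨fun i => (abs_le.mp (hv i)).1, fun i => (abs_le.mp (hv i)).2⟩
  refine ((hbox.image fun v => DVal (lineTorus v)).insert (1 / 6)).subset ?_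
  rintro d ⟨⟨hd, hd1, hd2⟩, hnot⟩
  obtain ⟨v, hv, hv0, rfl⟩ := exists_isPrimitive_of_mem_Spec hd
  refine hd2.eq_or_lt.imp id fun hd2 => ?_
  refine (hN v hv (hv0 0) ⟨hd1, hd2⟩).elim (fun hbound => ⟨v, hbound, rfl⟩) ?_
  rintro ⟨a, ha, hav, h5⟩
  obtain ⟨l, hl⟩ : ∃ l, DVal (lineTorus v) = 1 / 10 + l := ⟨_, (add_sub_cancel _ _).symm⟩
  have hl0 : 0 < l := by linarith
  have hl15 : l < 1 / 15 := by linarith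
  obtain ⟨P, A, hP0, hP4, hdvd, hlA⟩ := exists_five_mul_eq_of_DVal_eq hv hv0 ha hav h5 hl0 hl15 hl
  exact absurd (hl ▸ add_mem_spectrumProgressions hl0 hl15 hP0 hP4 hdvd hlA) hnot

lemma finite_spectrumProgressions_diff_Spec :
    (spectrumProgressions \ (Spec 1 3 ∩ Set.Ioc (1 / 10) (1 / 6))).Finite := by
  refine (Set.finite_singleton (1 / 10 + 4 / (5 * (5 * (0 : ℕ) + 7)) : ℝ)).subset ?_
  rintro _ ⟨⟨s, rfl⟩ | ⟨s, rfl⟩, hnot⟩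
  · by_contra hs
    exact hnot (four_div_mem_Spec_inter_Ioc (Nat.one_le_iff_ne_zero.mpr fun h => hs (h ▸ rfl)))
  · exact absurd (three_div_mem_Spec_inter_Ioc s) hnot

/-- `𝒮₁(3) ∩ (1/10, 1/6]` has finite symmetric difference with
`(1/10 + 4/5Prog(5,7)) ∪ (1/10 + 3/5Prog(5,9))`. -/
theorem stmt4 :
    (symmDiff (Spec 1 3 ∩ Set.Ioc (1/10 : ℝ) (1/6))
      ({x : ℝ | ∃ s : ℕ, x = 1/10 + 4/(5 * (5 * (s : ℝ) + 7))} ∪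
       {x : ℝ | ∃ s : ℕ, x = 1/10 + 3/(5 * (5 * (s : ℝ) + 9))})).Finite := by
  rw [Set.symmDiff_def]
  exact finite_Spec_diff_spectrumProgressions.union finite_spectrumProgressions_diff_Spec
end
end

section
/- The set 𝒮₁(6) ∩ (1/3, 1/2] contains the set { 1/3 + 1/(6(6s + 11)) : s ∈ ℤ, s ≥ 0 }. -/
noncomputable section

/-!
The six speeds `6, 6s - 1, 6s + 5, 6s + 11, 6s + 17, 12s + 16` are the positive roots `α, β,
α + β, 2α + β, 3α + β, 3α + 2β` of the root system `G₂`, evaluated at `(α, β) = (6, 6s - 1)`. A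
coordinate of the torus is far from `1/2` exactly when it is close to `0`, so a margin of
`1/6 - d` amounts to the distance `1/3 + d`, and we ask how far a point of the line
`t ↦ (6t, (6s - 1)t)` can stay from all the walls `root ∈ ℤ`. These walls cut the plane into
alcoves `α, β ≥ 0`, `3α + 2β ≤ 1`, where `(α, β)` runs over the simple systems of `G₂` modulo
integer translations. Inside one alcove, the points at distance at least `1/6 - d` from the walls
form a triangle shrinking to `(1/6, 1/6)` as `d → 0`. If the simple roots have speeds `(p, q)`
along the line, then `qα - pβ` is an integer on it. For `d = 1/(6(6s + 11))` and each of the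
twelve alcoves, `qα - pβ` maps this triangle into an interval `[j, j + 1]` between consecutive
integers and its interior into the open interval, so the line misses the interior; on the other
hand it passes through one vertex, in the alcove of `(α, -(3α + β))`.
-/

section Circle

lemma unitAddCircle_coe_sub_intCast (y : ℝ) (n : ℤ) :
    ((y - n : ℝ) : UnitAddCircle) = (y : UnitAddCircle) := by
  rw [AddCircle.coe_sub, (AddCircle.coe_eq_zero_iff 1 (x := (n : ℝ))).2 ⟨n, by simp⟩, sub_zero]

lemma dist_half_eq_half_sub_norm (x : UnitAddCircle) :
    dist x ((1 / 2 : ℝ) : UnitAddCircle) = 1 / 2 - ‖x‖ := by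
  induction x using QuotientAddGroup.induction_on with | H y => ?_
  change dist (y : UnitAddCircle) ((1 / 2 : ℝ) : UnitAddCircle) = 1 / 2 - ‖(y : UnitAddCircle)‖
  have norm_of_abs_le : ∀ {r : ℝ}, |r| ≤ 1 / 2 → ‖(r : UnitAddCircle)‖ = |r| := fun hr =>
    (AddCircle.norm_coe_eq_abs_iff 1 one_ne_zero).2 (by simpa using hr)
  have hr := abs_sub_round y
  have hy : (y : UnitAddCircle) = ((y - round y : ℝ) : UnitAddCircle) :=
    (unitAddCircle_coe_sub_intCast y _).symm
  rw [hy, dist_eq_norm, ← AddCircle.coe_sub, norm_of_abs_le hr]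
  generalize y - round y = r at hr
  obtain ⟨hlo, hhi⟩ := abs_le.1 hr
  rcases le_total 0 r with h | h
  · rw [norm_of_abs_le (abs_le.2 ⟨by linarith, by linarith⟩), abs_of_nonneg h,
      abs_of_nonpos (by linarith)]
    ring
  · have hshift : ((r - 1 / 2 : ℝ) : UnitAddCircle) = ((r + 1 / 2 : ℝ) : UnitAddCircle) := by
      rw [← AddCircle.coe_add_period (1 : ℝ) (r - 1 / 2)]
      ring_nf
    rw [hshift, norm_of_abs_le (abs_le.2 ⟨by linarith, by linarith⟩), abs_of_nonpos h,
      abs_of_nonneg (by linarith)]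
    ring

lemma norm_unitAddCircle_le_abs_sub (y : ℝ) (n : ℤ) : ‖(y : UnitAddCircle)‖ ≤ |y - n| := by
  rw [UnitAddCircle.norm_eq]
  exact round_le y n

lemma le_norm_unitAddCircle {y δ : ℝ} (hlo : δ ≤ y) (hhi : y ≤ 1 - δ) :
    δ ≤ ‖(y : UnitAddCircle)‖ := by
  rw [UnitAddCircle.norm_eq]
  rcases le_or_gt (round y) 0 with h | h
  · have : (round y : ℝ) ≤ 0 := by exact_mod_cast h
    exact le_abs.2 (Or.inl (by linarith))
  · have : (1 : ℝ) ≤ round y := by exact_mod_cast h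
    exact le_abs.2 (Or.inr (by linarith))

end Circle

section Torus

variable {n : ℕ}

lemma isProperSub_iff {S : Set (Torus n)} : IsProperSub S ↔ ∃ x ∈ S, ∀ i, x i ≠ 0 := by
  simp [IsProperSub, Set.not_subset]

lemma isSubtorus_one_spanTorus {v : Fin n → ℤ} (hv : v ≠ 0) :
    IsSubtorus 1 (spanTorus fun _ : Fin 1 => v) := by
  refine ⟨_, ?_, rfl⟩
  rw [linearIndependent_unique_iff]
  contrapose! hv
  ext i
  exact Int.cast_eq_zero.1 (congrFun hv i)

lemma mem_spanTorus_one {v : Fin n → ℤ} {x : Torus n} :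
    x ∈ spanTorus (fun _ : Fin 1 => v) ↔ ∃ t : ℝ, x = torusProj fun i => t * v i := by
  constructor
  · rintro ⟨t, rfl⟩
    exact ⟨t 0, by simp only [Fin.sum_univ_one]⟩
  · rintro ⟨t, rfl⟩
    exact ⟨fun _ => t, by simp only [Fin.sum_univ_one]⟩

lemma iSup_dist_half_le_iff [NeZero n] {x : Torus n} {δ : ℝ} :
    ⨆ i, dist (x i) ((1 / 2 : ℝ) : UnitAddCircle) ≤ 1 / 2 - δ ↔ ∀ i, δ ≤ ‖x i‖ := by
  rw [ciSup_le_iff (Set.finite_range _).bddAbove]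
  simp only [dist_half_eq_half_sub_norm, sub_le_sub_iff_left]

lemma DVal_eq_half_sub_of_isGreatest [NeZero n] {S : Set (Torus n)} {δ : ℝ}
    (h : IsGreatest {ε : ℝ | ∃ x ∈ S, ∀ i, ε ≤ ‖x i‖} δ) : DVal S = 1 / 2 - δ := by
  have hlower : ∀ x ∈ S, 1 / 2 - δ ≤ ⨆ i, dist (x i) ((1 / 2 : ℝ) : UnitAddCircle) := by
    intro x hx
    obtain ⟨D, hD⟩ : ∃ D, D = ⨆ i, dist (x i) ((1 / 2 : ℝ) : UnitAddCircle) := ⟨_, rfl⟩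
    have : 1 / 2 - D ≤ δ := h.2 ⟨x, hx, iSup_dist_half_le_iff.1 (by linarith)⟩
    linarith
  obtain ⟨x, hx, hδ⟩ := h.1
  refine IsLeast.csInf_eq ⟨⟨x, hx, ?_⟩, Set.forall_mem_image.2 hlower⟩
  exact le_antisymm (iSup_dist_half_le_iff.2 hδ) (hlower x hx)

lemma half_sub_mem_Spec_one [NeZero n] {v : Fin n → ℤ} {δ : ℝ} (hδ : 0 < δ)
    (h : IsGreatest {ε : ℝ | ∃ t : ℝ, ∀ i, ε ≤ ‖((t * v i : ℝ) : UnitAddCircle)‖} δ) :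
    1 / 2 - δ ∈ Spec 1 n := by
  have hne : ∀ {x : UnitAddCircle}, δ ≤ ‖x‖ → x ≠ 0 := fun hx => norm_pos_iff.1 (hδ.trans_le hx)
  obtain ⟨t, ht⟩ := h.1
  have hv : v ≠ 0 := by
    rintro rfl
    exact hne (ht 0) (by simp)
  refine ⟨spanTorus fun _ : Fin 1 => v, isSubtorus_one_spanTorus hv, ?_, ?_⟩
  · exact isProperSub_iff.2 ⟨_, mem_spanTorus_one.2 ⟨t, rfl⟩, fun i => hne (ht i)⟩
  · refine (DVal_eq_half_sub_of_isGreatest ⟨⟨_, mem_spanTorus_one.2 ⟨t, rfl⟩, ht⟩, ?_⟩).symm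
    rintro ε ⟨x, hx, hε⟩
    obtain ⟨u, rfl⟩ := mem_spanTorus_one.1 hx
    exact h.2 ⟨u, hε⟩

end Torus

section RootSystem

variable {R : Type*} [CommRing R]

/-- The positive roots of the root system `G₂`, evaluated at a point given by the values
`z = (α, β)` of the short and the long simple root. -/
def g2Roots (z : R × R) : Fin 6 → R :=
  ![z.1, z.2, z.1 + z.2, 2 * z.1 + z.2, 3 * z.1 + z.2, 3 * z.1 + 2 * z.2]

/-- The reflection of `G₂` in its long simple root `β`, in the coordinates `(α, β)`. -/
def g2ReflLong (z : R × R) : R × R := (z.1 + z.2, -z.2)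

/-- The reflection of `G₂` in its highest root `3α + 2β`, in the coordinates `(α, β)`. -/
def g2ReflHighest (z : R × R) : R × R := (z.1, -(3 * z.1 + z.2))

/-- The simple systems of `G₂` up to sign. The two reflections generate the Weyl group of the long
roots, a symmetric group on three letters, which together with `-1` is the Weyl group of `G₂`. -/
def g2Bases (z : R × R) : Fin 6 → R × R :=
  ![z, g2ReflHighest z, g2ReflLong (g2ReflHighest z),
    g2ReflHighest (g2ReflLong (g2ReflHighest z)), g2ReflHighest (g2ReflLong z), g2ReflLong z]

lemma forall_g2Roots_iff {P : R → Prop} {z : R × R} :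
    (∀ i, P (g2Roots z i)) ↔ P z.1 ∧ P z.2 ∧ P (z.1 + z.2) ∧ P (2 * z.1 + z.2) ∧
      P (3 * z.1 + z.2) ∧ P (3 * z.1 + 2 * z.2) := by
  simp [Fin.forall_fin_succ, g2Roots]

lemma g2Roots_neg (z : R × R) (i : Fin 6) : g2Roots (-z) i = -g2Roots z i := by
  fin_cases i <;> dsimp [g2Roots] <;> ring

lemma g2Roots_sub_intCast (z : R × R) (m n : ℤ) (i : Fin 6) :
    g2Roots (z - ((m : R), (n : R))) i = g2Roots z i - (g2Roots (m, n) i : ℤ) := by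
  fin_cases i <;> dsimp [g2Roots] <;> push_cast <;> ring

lemma mul_intCast_g2Roots (t : R) (a b : ℤ) (i : Fin 6) :
    t * (g2Roots (a, b) i : ℤ) = g2Roots (t * a, t * b) i := by
  fin_cases i <;> dsimp [g2Roots] <;> push_cast <;> ring

lemma g2Bases_mul_intCast (t : R) (a b : ℤ) (k : Fin 6) :
    g2Bases (t * a, t * b) k = (t * (g2Bases (a, b) k).1, t * (g2Bases (a, b) k).2) := by
  fin_cases k <;> ext <;> dsimp [g2Bases, g2ReflLong, g2ReflHighest] <;> push_cast <;> ring

variable {P : R → Prop} (hP : ∀ x, P (-x) ↔ P x)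

include hP

lemma forall_g2Roots_g2ReflLong_iff (z : R × R) :
    (∀ i, P (g2Roots (g2ReflLong z) i)) ↔ ∀ i, P (g2Roots z i) := by
  have h₂ : z.1 + z.2 + -z.2 = z.1 := by ring
  have h₃ : 2 * (z.1 + z.2) + -z.2 = 2 * z.1 + z.2 := by ring
  have h₄ : 3 * (z.1 + z.2) + -z.2 = 3 * z.1 + 2 * z.2 := by ring
  have h₅ : 3 * (z.1 + z.2) + 2 * -z.2 = 3 * z.1 + z.2 := by ring
  simp only [forall_g2Roots_iff, g2ReflLong, h₂, h₃, h₄, h₅, hP]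
  tauto

lemma forall_g2Roots_g2ReflHighest_iff (z : R × R) :
    (∀ i, P (g2Roots (g2ReflHighest z) i)) ↔ ∀ i, P (g2Roots z i) := by
  have h₂ : z.1 + -(3 * z.1 + z.2) = -(2 * z.1 + z.2) := by ring
  have h₃ : 2 * z.1 + -(3 * z.1 + z.2) = -(z.1 + z.2) := by ring
  have h₄ : 3 * z.1 + -(3 * z.1 + z.2) = -z.2 := by ring
  have h₅ : 3 * z.1 + 2 * -(3 * z.1 + z.2) = -(3 * z.1 + 2 * z.2) := by ring
  simp only [forall_g2Roots_iff, g2ReflHighest, h₂, h₃, h₄, h₅, hP]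
  tauto

lemma forall_g2Roots_g2Bases_iff (z : R × R) (k : Fin 6) :
    (∀ i, P (g2Roots (g2Bases z k) i)) ↔ ∀ i, P (g2Roots z i) := by
  fin_cases k <;>
    simp [g2Bases, forall_g2Roots_g2ReflLong_iff hP, forall_g2Roots_g2ReflHighest_iff hP]

end RootSystem

section Alcove

/-- The points `(α, β)` of the fundamental alcove `α, β ≥ 0`, `3α + 2β ≤ 1` of `G₂` at which, for
`δ ≥ 0`, all roots have distance at least `δ` from `ℤ`; `g2Alcove 0` is the whole alcove. -/
def g2Alcove (δ : ℝ) : Set (ℝ × ℝ) :=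
  {p | δ ≤ p.1 ∧ δ ≤ p.2 ∧ 3 * p.1 + 2 * p.2 ≤ 1 - δ}

lemma le_norm_g2Roots_of_mem_g2Alcove {δ : ℝ} (hδ : 0 ≤ δ) {p : ℝ × ℝ} (hp : p ∈ g2Alcove δ) :
    ∀ i, δ ≤ ‖((g2Roots p i : ℝ) : UnitAddCircle)‖ := by
  obtain ⟨hα, hβ, hθ⟩ := hp
  rw [forall_g2Roots_iff (P := fun r : ℝ => δ ≤ ‖(r : UnitAddCircle)‖)]
  refine ⟨?_, ?_, ?_, ?_, ?_, ?_⟩ <;> apply le_norm_unitAddCircle <;> linarith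

lemma mem_g2Alcove_of_le_norm_g2Roots {δ : ℝ} {p : ℝ × ℝ} (hp : p ∈ g2Alcove 0)
    (h : ∀ i, δ ≤ ‖((g2Roots p i : ℝ) : UnitAddCircle)‖) : p ∈ g2Alcove δ := by
  obtain ⟨hα, hβ, hθ⟩ := hp
  obtain ⟨h₀, h₁, -, -, -, h₅⟩ :=
    (forall_g2Roots_iff (P := fun r : ℝ => δ ≤ ‖(r : UnitAddCircle)‖)).1 h
  have hα' := h₀.trans (norm_unitAddCircle_le_abs_sub _ 0)
  have hβ' := h₁.trans (norm_unitAddCircle_le_abs_sub _ 0)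
  have hθ' := h₅.trans (norm_unitAddCircle_le_abs_sub _ 1)
  rw [abs_of_nonneg (by simpa using hα)] at hα'
  rw [abs_of_nonneg (by simpa using hβ)] at hβ'
  rw [abs_of_nonpos (by push_cast; linarith)] at hθ'
  push_cast at hα' hβ' hθ'
  exact ⟨by linarith, by linarith, by linarith⟩

lemma forall_le_norm_g2Roots_g2Bases_sub_iff (δ : ℝ) (z : ℝ × ℝ) (k : Fin 6) (m n : ℤ) :
    (∀ i, δ ≤ ‖((g2Roots (g2Bases z k - ((m : ℝ), (n : ℝ))) i : ℝ) : UnitAddCircle)‖) ↔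
      ∀ i, δ ≤ ‖((g2Roots z i : ℝ) : UnitAddCircle)‖ := by
  simp only [g2Roots_sub_intCast, unitAddCircle_coe_sub_intCast]
  exact forall_g2Roots_g2Bases_iff (P := fun r : ℝ => δ ≤ ‖(r : UnitAddCircle)‖)
    (fun r => by rw [AddCircle.coe_neg, norm_neg]) z k

-- The triangle `x ≥ 0`, `x + y ≥ 0`, `2x + y ≤ 1` is the union of six alcoves.
lemma exists_g2Bases_sub_mem_g2Alcove_of_le {z : ℝ × ℝ} {m n : ℤ} (hm : ↑m ≤ z.1)
    (hn : ↑n ≤ z.1 + z.2) (hmn : 2 * z.1 + z.2 ≤ m + n + 1) :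
    ∃ k, ∃ p q : ℤ, g2Bases z k - ((p : ℝ), (q : ℝ)) ∈ g2Alcove 0 := by
  obtain ⟨x, y⟩ := z
  dsimp only at hm hn hmn
  rcases le_total (x - m) (x + y - n) with hxy | hxy
  · rcases le_total (3 * x + 2 * y) (m + 2 * n + 1) with h | h
    · refine ⟨0, m, n - m, ?_, ?_, ?_⟩ <;>
        dsimp [g2Bases] <;> push_cast <;> linarith
    rcases le_total (3 * x + y) (2 * m + n + 1) with h' | h'
    · refine ⟨1, m, -(2 * m + n + 1), ?_, ?_, ?_⟩ <;>
        dsimp [g2Bases, g2ReflHighest] <;> push_cast <;> linarith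
    · refine ⟨2, -(m + n + 1), 2 * m + n + 1, ?_, ?_, ?_⟩ <;>
        dsimp [g2Bases, g2ReflHighest, g2ReflLong] <;> push_cast <;> linarith
  · rcases le_total (3 * x + y) (2 * m + n + 1) with h | h
    · refine ⟨5, n, m - n, ?_, ?_, ?_⟩ <;>
        dsimp [g2Bases, g2ReflLong] <;> push_cast <;> linarith
    rcases le_total (3 * x + 2 * y) (m + 2 * n + 1) with h' | h'
    · refine ⟨4, n, -(m + 2 * n + 1), ?_, ?_, ?_⟩ <;>
        dsimp [g2Bases, g2ReflHighest, g2ReflLong] <;> push_cast <;> linarith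
    · refine ⟨3, -(m + n + 1), m + 2 * n + 1, ?_, ?_, ?_⟩ <;>
        dsimp [g2Bases, g2ReflHighest, g2ReflLong] <;> push_cast <;> linarith

lemma exists_g2Bases_sub_mem_g2Alcove (z : ℝ × ℝ) :
    ∃ w, (w = z ∨ w = -z) ∧ ∃ k, ∃ p q : ℤ, g2Bases w k - ((p : ℝ), (q : ℝ)) ∈ g2Alcove 0 := by
  have hm := Int.floor_le z.1
  have hm' := Int.lt_floor_add_one z.1
  have hn := Int.floor_le (z.1 + z.2)
  have hn' := Int.lt_floor_add_one (z.1 + z.2)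
  rcases le_total (2 * z.1 + z.2) (⌊z.1⌋ + ⌊z.1 + z.2⌋ + 1) with h | h
  · exact ⟨z, Or.inl rfl, exists_g2Bases_sub_mem_g2Alcove_of_le hm hn h⟩
  · refine ⟨-z, Or.inr rfl, exists_g2Bases_sub_mem_g2Alcove_of_le
      (m := -⌊z.1⌋ - 1) (n := -⌊z.1 + z.2⌋ - 1) ?_ ?_ ?_⟩ <;>
    · push_cast [Prod.fst_neg, Prod.snd_neg]
      linarith

lemma exists_g2Bases_sub_mem_g2Alcove_of_le_norm {δ : ℝ} {z : ℝ × ℝ}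
    (h : ∀ i, δ ≤ ‖((g2Roots z i : ℝ) : UnitAddCircle)‖) :
    ∃ w, (w = z ∨ w = -z) ∧ ∃ k, ∃ p q : ℤ, g2Bases w k - ((p : ℝ), (q : ℝ)) ∈ g2Alcove δ := by
  obtain ⟨w, hw, k, p, q, hmem⟩ := exists_g2Bases_sub_mem_g2Alcove z
  have hroots : ∀ i, δ ≤ ‖((g2Roots w i : ℝ) : UnitAddCircle)‖ := by
    rcases hw with rfl | rfl
    · exact h
    · simpa only [g2Roots_neg, AddCircle.coe_neg, norm_neg] using h
  exact ⟨w, hw, k, p, q, mem_g2Alcove_of_le_norm_g2Roots hmem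
    ((forall_le_norm_g2Roots_g2Bases_sub_iff δ w k p q).2 hroots)⟩

lemma exists_mem_g2Alcove_sub_eq_intCast {δ t : ℝ} {a b : ℤ}
    (h : ∀ i, δ ≤ ‖((t * (g2Roots (a, b) i : ℤ) : ℝ) : UnitAddCircle)‖) :
    ∃ k, ∃ p ∈ g2Alcove δ, ∃ N : ℤ,
      (g2Bases (a, b) k).2 * p.1 - (g2Bases (a, b) k).1 * p.2 = (N : ℝ) := by
  simp only [mul_intCast_g2Roots] at h
  obtain ⟨w, hw, k, m, n, hmem⟩ := exists_g2Bases_sub_mem_g2Alcove_of_le_norm h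
  obtain ⟨u, rfl⟩ : ∃ u : ℝ, w = (u * a, u * b) := by
    rcases hw with rfl | rfl
    · exact ⟨t, rfl⟩
    · exact ⟨-t, by simp⟩
  refine ⟨k, _, hmem, (g2Bases (a, b) k).1 * n - (g2Bases (a, b) k).2 * m, ?_⟩
  rw [g2Bases_mul_intCast]
  push_cast [Prod.fst_sub, Prod.snd_sub]
  ring

-- `(ε, ε)`, `((1 - 3ε)/3, ε)` and `(ε, (1 - 4ε)/2)` are the vertices of `g2Alcove ε`.
lemma lt_linear_of_mem_g2Alcove {c u v δ ε : ℝ} {p : ℝ × ℝ} (hp : p ∈ g2Alcove δ) (hε : ε < δ)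
    (h₀ : c < u * ε + v * ε) (h₁ : c ≤ u * ((1 - 3 * ε) / 3) + v * ε)
    (h₂ : c ≤ u * ε + v * ((1 - 4 * ε) / 2)) : c < u * p.1 + v * p.2 := by
  obtain ⟨hα, hβ, hθ⟩ := hp
  have hx : 0 < p.1 - ε := by linarith
  have hy : 0 < p.2 - ε := by linarith
  have hw : 0 < 1 - ε - 3 * p.1 - 2 * p.2 := by linarith
  have hbarycentric : (1 - 6 * ε) * (u * p.1 + v * p.2 - c) =
      (1 - ε - 3 * p.1 - 2 * p.2) * (u * ε + v * ε - c) +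
        3 * (p.1 - ε) * (u * ((1 - 3 * ε) / 3) + v * ε - c) +
        2 * (p.2 - ε) * (u * ε + v * ((1 - 4 * ε) / 2) - c) := by ring
  have hpos : 0 < (1 - 6 * ε) * (u * p.1 + v * p.2 - c) := by
    rw [hbarycentric]
    have := mul_pos hw (sub_pos.2 h₀)
    have := mul_nonneg (mul_pos three_pos hx).le (sub_nonneg.2 h₁)
    have := mul_nonneg (mul_pos two_pos hy).le (sub_nonneg.2 h₂)
    linarith
  exact sub_pos.1 (pos_of_mul_pos_right hpos (by linarith))

end Alcove

section Progression

variable {s : ℕ} {d : ℝ} (hd : (6 * (s : ℝ) + 11) * d = 1 / 6)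

include hd

lemma pos_of_mul_eq_sixth : 0 < d :=
  pos_of_mul_pos_right (hd.symm ▸ (by norm_num : (0 : ℝ) < 1 / 6)) (by positivity)

lemma le_of_mul_eq_sixth : d ≤ 1 / 66 := by
  nlinarith [mul_nonneg (Nat.cast_nonneg (α := ℝ) s) (pos_of_mul_eq_sixth hd).le]

lemma g2Bases_mul_sub_mul_ne_intCast (k : Fin 6) {δ : ℝ} (hδ : 1 / 6 - d < δ) {p : ℝ × ℝ}
    (hp : p ∈ g2Alcove δ) (N : ℤ) :
    (g2Bases ((6 : ℤ), 6 * (s : ℤ) - 1) k).2 * p.1 -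
      (g2Bases ((6 : ℤ), 6 * (s : ℤ) - 1) k).1 * p.2 ≠ (N : ℝ) := by
  intro hN
  have hd₀ := pos_of_mul_eq_sixth hd
  have hd₁ := le_of_mul_eq_sixth hd
  -- The integer part of `qα - pβ` near `α = β = 1/6`, for each simple system of speeds `(p, q)`.
  obtain ⟨j, hj⟩ : ∃ j : ℤ,
      j = ![(s : ℤ) - 2, -s - 4, 2 * s + 4, 3 * s + 4, -3 * s - 4, -2 * s - 1] k := ⟨_, rfl⟩
  have hlower : (j : ℝ) < (g2Bases ((6 : ℤ), 6 * (s : ℤ) - 1) k).2 * p.1 +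
      -(g2Bases ((6 : ℤ), 6 * (s : ℤ) - 1) k).1 * p.2 := by
    rw [hj]
    apply lt_linear_of_mem_g2Alcove hp hδ <;> fin_cases k <;>
      dsimp [g2Bases, g2ReflLong, g2ReflHighest] <;> push_cast <;> linarith
  have hupper : -(j + 1 : ℝ) < -(g2Bases ((6 : ℤ), 6 * (s : ℤ) - 1) k).2 * p.1 +
      (g2Bases ((6 : ℤ), 6 * (s : ℤ) - 1) k).1 * p.2 := by
    rw [hj]
    apply lt_linear_of_mem_g2Alcove hp hδ <;> fin_cases k <;>
      dsimp [g2Bases, g2ReflLong, g2ReflHighest] <;> push_cast <;> linarith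
  have hjN : (j : ℝ) < N := by linarith
  have hNj : (N : ℝ) < j + 1 := by linarith
  norm_cast at hjN hNj
  lia

lemma le_of_forall_le_norm_mul_g2Roots {ε t : ℝ}
    (h : ∀ i, ε ≤ ‖((t * (g2Roots (6, 6 * (s : ℤ) - 1) i : ℤ) : ℝ) : UnitAddCircle)‖) :
    ε ≤ 1 / 6 - d := by
  by_contra! hε
  obtain ⟨k, p, hp, N, hN⟩ := exists_mem_g2Alcove_sub_eq_intCast h
  exact g2Bases_mul_sub_mul_ne_intCast hd k hε hp N hN

lemma exists_forall_le_norm_mul_g2Roots :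
    ∃ t : ℝ, ∀ i,
      1 / 6 - d ≤ ‖((t * (g2Roots (6, 6 * (s : ℤ) - 1) i : ℤ) : ℝ) : UnitAddCircle)‖ := by
  have hd₀ := pos_of_mul_eq_sixth hd
  have hd₁ := le_of_mul_eq_sixth hd
  obtain ⟨t, ht⟩ : ∃ t : ℝ, t = (s - 11 / 6 + d) / 6 := ⟨_, rfl⟩
  have hvertex : g2Bases (t * (6 : ℤ), t * (6 * (s : ℤ) - 1 : ℤ)) 1 -
      (((s - 2 : ℤ) : ℝ), ((5 - s - s ^ 2 : ℤ) : ℝ)) = (1 / 6 + d, 1 / 6 - d) := by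
    simp only [g2Bases, g2ReflHighest, Matrix.cons_val_one, Matrix.cons_val_zero]
    ext
    · push_cast [Prod.fst_sub]
      rw [ht]
      ring
    · push_cast [Prod.snd_sub]
      rw [ht]
      linear_combination (-1 / 6) * hd
  have hmem : ((1 / 6 + d, 1 / 6 - d) : ℝ × ℝ) ∈ g2Alcove (1 / 6 - d) :=
    ⟨by linarith, le_rfl, by linarith⟩
  refine ⟨t, ?_⟩
  simp only [mul_intCast_g2Roots]
  rw [← forall_le_norm_g2Roots_g2Bases_sub_iff _ _ 1 (s - 2) (5 - s - s ^ 2), hvertex]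
  exact le_norm_g2Roots_of_mem_g2Alcove (by linarith) hmem

end Progression

/-- `𝒮₁(6) ∩ (1/3, 1/2]` contains `1/3 + 1/6Prog(6,11)`. -/
theorem stmt5 :
    {x : ℝ | ∃ s : ℕ, x = 1/3 + 1/(6 * (6 * (s : ℝ) + 11))} ⊆
      Spec 1 6 ∩ Set.Ioc (1/3 : ℝ) (1/2) := by
  rintro _ ⟨s, rfl⟩
  obtain ⟨d, hd_def⟩ : ∃ d : ℝ, d = 1 / (6 * (6 * (s : ℝ) + 11)) := ⟨_, rfl⟩
  have hd : (6 * (s : ℝ) + 11) * d = 1 / 6 := by rw [hd_def]; field_simp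
  have hd₀ := pos_of_mul_eq_sixth hd
  have hd₁ := le_of_mul_eq_sixth hd
  rw [← hd_def]
  refine ⟨?_, by linarith, by linarith⟩
  have hspec : 1 / 2 - (1 / 6 - d) ∈ Spec 1 6 :=
    half_sub_mem_Spec_one (by linarith) ⟨exists_forall_le_norm_mul_g2Roots hd,
      fun _ ⟨_, h⟩ => le_of_forall_le_norm_mul_g2Roots hd h⟩
  convert hspec using 1
  ring
end
end

section
/- Let K ≥ 1 be a natural number, and let A', B' be coprime integers with B' ≠ 0. Set q := |B'|, and let 0 ≤ a < K be the integer satisfying a ≡ A' (mod K) if B' > 0 and a ≡ −A' (mod K) if B' < 0. Then, in (ℝ/ℤ)², one has ((ℝ/ℤ) × ⟨1/K⟩) ∩ ⟨(A',B')⟩_ℝ = ⋃_{ℓ=0}^{K−1} ( (aℓ/(Kq) + ⟨1/q⟩) × {ℓ/K} ). -/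
noncomputable section

/-- The 2-dimensional torus `(ℝ/ℤ)²`. -/
abbrev T2 : Type := AddCircle (1 : ℝ) × AddCircle (1 : ℝ)

/-- The image mod `ℤ²` of the real line `ℝ·(A,B)`. -/
def lineT2 (A B : ℤ) : Set T2 :=
  {p | ∃ t : ℝ, p = (((t * A : ℝ) : AddCircle (1 : ℝ)), ((t * B : ℝ) : AddCircle (1 : ℝ)))}

/-
For coprime `A, B` with `u A + v B = 1`, the line `⟨(A, B)⟩_ℝ` is the kernel of the character
`(x, y) ↦ B x - A y` of the torus: a point of the kernel has parameter `u x + v y`. At height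
`y = ℓ/K` the equation `B x = A y` becomes, after multiplication by the sign of `B`,
`q x = aℓ/K` with `q = |B|`, because `A`, up to that sign, only matters modulo `K`. The solutions
of this equation form a coset of the `q`-torsion `⟨1/q⟩`.
-/

theorem exists_zsmul_iff_zsmul_eq_zsmul {G : Type*} [AddCommGroup G] {A B : ℤ}
    (hAB : IsCoprime A B) {x y : G} :
    (∃ θ : G, x = A • θ ∧ y = B • θ) ↔ B • x = A • y := by
  constructor
  · rintro ⟨θ, rfl, rfl⟩
    exact smul_comm B A θ
  · intro hxy
    obtain ⟨u, v, huv⟩ := hAB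
    refine ⟨u • x + v • y, ?_, ?_⟩
    · calc x = (u * A + v * B) • x := by rw [huv, one_smul]
        _ = (u * A) • x + v • B • x := by rw [add_smul, mul_smul v]
        _ = A • (u • x + v • y) := by rw [hxy]; module
    · calc y = (u * A + v * B) • y := by rw [huv, one_smul]
        _ = u • A • y + (v * B) • y := by rw [add_smul, mul_smul u]
        _ = B • (u • x + v • y) := by rw [← hxy]; module

theorem nsmul_eq_coe_addCircle_iff {𝕜 : Type*} [DivisionRing 𝕜] [CharZero 𝕜] {p : 𝕜} {n : ℕ}
    (hn : n ≠ 0) {x : AddCircle p} {r : 𝕜} :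
    n • x = (r : AddCircle p) ↔ ∃ m : ℤ, x = ((r / n + m • (p / n) : 𝕜) : AddCircle p) := by
  have hn' : (n : 𝕜) ≠ 0 := Nat.cast_ne_zero.mpr hn
  have nsmul_div (s : 𝕜) : n • (s / n) = s := by
    rw [nsmul_eq_mul, Nat.cast_comm, div_mul_cancel₀ s hn']
  constructor
  · intro hx
    rw [← nsmul_div r, AddCircle.coe_nsmul] at hx
    obtain ⟨k, hk⟩ := (QuotientAddGroup.zmultiples_nsmul_eq_nsmul_iff hn).mp hx
    exact ⟨(k : ℕ), by rw [hk, natCast_zsmul]; rfl⟩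
  · rintro ⟨m, rfl⟩
    rw [← AddCircle.coe_nsmul, smul_add, smul_comm n m, nsmul_div, nsmul_div, AddCircle.coe_add,
      AddCircle.coe_zsmul, AddCircle.coe_period, smul_zero, add_zero]

theorem coe_div_eq_coe_div_of_modEq {K : ℕ} [NeZero K] {m n : ℤ} (h : m ≡ n [ZMOD K]) :
    ((m / K : ℝ) : AddCircle (1 : ℝ)) = (n / K : ℝ) := by
  rw [← ZMod.toAddCircle_intCast, ← ZMod.toAddCircle_intCast,
    (ZMod.intCast_eq_intCast_iff _ _ _).mpr h]

theorem exists_int_coe_div_iff_exists_lt {K : ℕ} [NeZero K] {y : AddCircle (1 : ℝ)} :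
    (∃ m : ℤ, y = (m / K : ℝ)) ↔ ∃ ℓ < K, y = (ℓ / K : ℝ) := by
  simp only [← ZMod.toAddCircle_intCast, ← ZMod.toAddCircle_natCast]
  constructor
  · rintro ⟨m, rfl⟩
    exact ⟨(m : ZMod K).val, ZMod.val_lt _, by rw [ZMod.natCast_zmod_val]⟩
  · rintro ⟨ℓ, -, rfl⟩
    exact ⟨ℓ, by rw [Int.cast_natCast]⟩

theorem mem_lineT2_iff {A B : ℤ} (hAB : IsCoprime A B) {p : T2} :
    p ∈ lineT2 A B ↔ B • p.1 = A • p.2 := by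
  have coe_mul_intCast (t : ℝ) (n : ℤ) :
      ((t * n : ℝ) : AddCircle (1 : ℝ)) = n • (t : AddCircle (1 : ℝ)) := by
    rw [← AddCircle.coe_zsmul, zsmul_eq_mul, mul_comm]
  rw [← exists_zsmul_iff_zsmul_eq_zsmul hAB, QuotientAddGroup.mk_surjective.exists]
  simp only [lineT2, Set.mem_ofPred_eq, Prod.ext_iff, coe_mul_intCast]

theorem natAbs_zsmul_eq_sign_mul_zsmul_iff {G : Type*} [AddCommGroup G] {A B : ℤ} (hB : B ≠ 0)
    {x y : G} : B • x = A • y ↔ B.natAbs • x = (B.sign * A) • y := by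
  rw [← natCast_zsmul, ← Int.sign_mul_self, mul_smul, mul_smul]
  rcases Int.sign_trichotomy B with h | h | h
  · simp only [h, one_smul]
  · exact absurd (Int.sign_eq_zero_iff_zero.mp h) hB
  · simp only [h, neg_smul, one_smul, neg_inj]

theorem modEq_sign_mul {n A B a : ℤ} (hB : B ≠ 0) (hpos : 0 < B → a ≡ A [ZMOD n])
    (hneg : B < 0 → a ≡ -A [ZMOD n]) : a ≡ B.sign * A [ZMOD n] := by
  rcases hB.lt_or_gt with h | h
  · simpa only [Int.sign_eq_neg_one_of_neg h, neg_one_mul] using hneg h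
  · simpa only [Int.sign_eq_one_of_pos h, one_mul] using hpos h

theorem mk_coe_div_mem_lineT2_iff {K : ℕ} [NeZero K] {A B a : ℤ} (hAB : IsCoprime A B)
    (hB : B ≠ 0) (ha : a ≡ B.sign * A [ZMOD K]) {x : AddCircle (1 : ℝ)} {ℓ : ℕ} :
    (x, ((ℓ / K : ℝ) : AddCircle (1 : ℝ))) ∈ lineT2 A B ↔
      ∃ m : ℤ, x = (a * ℓ / (K * B.natAbs) + m / B.natAbs : ℝ) := by
  have slope_smul : (B.sign * A) • ((ℓ / K : ℝ) : AddCircle (1 : ℝ)) = (a * ℓ / K : ℝ) := by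
    calc (B.sign * A) • ((ℓ / K : ℝ) : AddCircle (1 : ℝ))
        = ((B.sign * A * ℓ : ℤ) / K : ℝ) := by
          rw [← AddCircle.coe_zsmul, zsmul_eq_mul, ← mul_div_assoc,
            Int.cast_mul (B.sign * A), Int.cast_natCast]
      _ = ((a * ℓ : ℤ) / K : ℝ) := (coe_div_eq_coe_div_of_modEq (ha.mul_right ℓ)).symm
      _ = (a * ℓ / K : ℝ) := by rw [Int.cast_mul, Int.cast_natCast]
  rw [mem_lineT2_iff hAB, natAbs_zsmul_eq_sign_mul_zsmul_iff hB, slope_smul,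
    nsmul_eq_coe_addCircle_iff (Int.natAbs_ne_zero.mpr hB)]
  simp only [div_div, zsmul_eq_mul, mul_one_div]

theorem stmt7_general {K : ℕ} [NeZero K] {A B a : ℤ} (hAB : IsCoprime A B) (hB : B ≠ 0)
    (ha : a ≡ B.sign * A [ZMOD K]) :
    {p : T2 | ∃ m : ℤ, p.2 = (m / K : ℝ)} ∩ lineT2 A B =
      ⋃ ℓ ∈ Finset.range K, {p : T2 |
        (∃ m : ℤ, p.1 = (a * ℓ / (K * B.natAbs) + m / B.natAbs : ℝ)) ∧ p.2 = (ℓ / K : ℝ)} := by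
  ext ⟨x, y⟩
  simp only [Set.mem_inter_iff, Set.mem_ofPred_eq, Set.mem_iUnion, Finset.mem_range, exists_prop,
    exists_int_coe_div_iff_exists_lt, ← mk_coe_div_mem_lineT2_iff hAB hB ha]
  constructor
  · rintro ⟨⟨ℓ, hℓ, rfl⟩, hx⟩
    exact ⟨ℓ, hℓ, hx, rfl⟩
  · rintro ⟨ℓ, hℓ, hx, rfl⟩
    exact ⟨⟨ℓ, hℓ, rfl⟩, hx⟩

/-- **Lemma (intersection structure).** For coprime `A', B'` with `B' ≠ 0`,
`((ℝ/ℤ) × ⟨1/K⟩) ∩ ⟨(A',B')⟩_ℝ = ⋃_{ℓ=0}^{K-1} ((aℓ/(Kq) + ⟨1/q⟩) × {ℓ/K})`,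
where `q = |B'|` and `0 ≤ a < K` with `a ≡ A' (mod K)` if `B' > 0` and
`a ≡ -A' (mod K)` if `B' < 0`. -/
theorem stmt7 (K : ℕ) (hK : 1 ≤ K) (A' B' : ℤ) (hcop : Int.gcd A' B' = 1) (hB' : B' ≠ 0)
    (q : ℕ) (hq : q = B'.natAbs)
    (a : ℤ) (ha0 : 0 ≤ a) (haK : a < (K : ℤ))
    (hapos : 0 < B' → Int.ModEq (K : ℤ) a A')
    (haneg : B' < 0 → Int.ModEq (K : ℤ) a (-A')) :
    {p : T2 | ∃ m : ℤ, p.2 = (((m : ℝ) / (K : ℝ) : ℝ) : AddCircle (1 : ℝ))} ∩ lineT2 A' B' =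
      ⋃ ℓ ∈ Finset.range K, {p : T2 |
        (∃ m : ℤ, p.1 =
          (((a : ℝ) * (ℓ : ℝ) / ((K : ℝ) * (q : ℝ)) + (m : ℝ) / (q : ℝ) : ℝ) : AddCircle (1 : ℝ))) ∧
        p.2 = (((ℓ : ℝ) / (K : ℝ) : ℝ) : AddCircle (1 : ℝ))} := by
  have : NeZero K := .of_pos hK
  exact hq ▸ stmt7_general (Int.isCoprime_iff_gcd_eq_one.mpr hcop) hB'
    (modEq_sign_mul hB' hapos haneg)
end
end
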